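/- For every ω > 0 and every n ∈ ℕ there exist positive constants C_n and B_n such that for all B ≥ B_n and every Neumann eigenfunction Ψ of H(B) with eigenvalue λ ≤ Θ₀·B + ω·B^{2/3}: ∫_Ω dist(x,∂Ω)ⁿ·(|Ψ|² + B^{−1}|(−i∇+A)Ψ|²) dx ≤ C_n·B^{−n/2}·∫_Ω |Ψ|² dx, and ∫_Ω dist_{∂Ω}(x,Γ)ⁿ·(|Ψ|² + B^{−1}|(−i∇+A)Ψ|²) dx ≤ C_n·B^{−n/4}·∫_Ω |Ψ|² dx. -/

import Mathlib

noncomputable section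
open MeasureTheory Real Filter Set Topology

/-- Euclidean 3-space. -/
abbrev E3 := EuclideanSpace ℝ (Fin 3)

/-- The magnetic vector potential `A(x) = (B/2)(-x₂, x₁, 0)`. -/
def Avec (B : ℝ) (x : E3) : Fin 3 → ℝ := ![-(B / 2) * x 1, B / 2 * x 0, 0]

/-- The `j`-th component of `(-i∇ + A)Ψ`. -/
def magD (B : ℝ) (Ψ : E3 → ℂ) (j : Fin 3) (x : E3) : ℂ :=
  -Complex.I * fderiv ℝ Ψ x (EuclideanSpace.single j 1) + (Avec B x j : ℂ) * Ψ x

/-- The magnetic energy density `|(-i∇ + A)Ψ|²`. -/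
def magEnergyDensity (B : ℝ) (Ψ : E3 → ℂ) (x : E3) : ℝ :=
  ∑ j : Fin 3, ‖magD B Ψ j x‖ ^ 2

/-- The open unit ball in `ℝ³`. -/
def ball3 : Set E3 := Metric.ball 0 1

/-- The Neumann ground-state energy `λ₁(H(B))` of `(-i∇ + A)²` in the unit ball,
as the infimum of the Rayleigh quotients. -/
def lambda1H (B : ℝ) : ℝ :=
  sInf { q : ℝ | ∃ Ψ : E3 → ℂ, ContDiff ℝ 1 Ψ ∧
    0 < (∫ x in ball3, ‖Ψ x‖ ^ 2) ∧
    q = (∫ x in ball3, magEnergyDensity B Ψ x) / ∫ x in ball3, ‖Ψ x‖ ^ 2 }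

/-- The de Gennes energy `λ₁^𝒢(ξ)`. -/
def deGennes (ξ : ℝ) : ℝ :=
  sInf { q : ℝ | ∃ u : ℝ → ℂ, ContDiff ℝ 1 u ∧
    IntegrableOn (fun t => ‖u t‖ ^ 2) (Ioi 0) ∧
    IntegrableOn (fun t => ‖deriv u t‖ ^ 2 + (t + ξ) ^ 2 * ‖u t‖ ^ 2) (Ioi 0) ∧
    0 < (∫ t in Ioi (0:ℝ), ‖u t‖ ^ 2) ∧
    q = (∫ t in Ioi (0:ℝ), (‖deriv u t‖ ^ 2 + (t + ξ) ^ 2 * ‖u t‖ ^ 2)) /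
        ∫ t in Ioi (0:ℝ), ‖u t‖ ^ 2 }

/-- `Θ₀`, the infimum of the de Gennes energy. -/
def Theta0 : ℝ := ⨅ ξ : ℝ, deGennes ξ

/-- The Montgomery energy `λ₁^ℳ(ζ)`. -/
def montgomery (ζ : ℝ) : ℝ :=
  sInf { q : ℝ | ∃ u : ℝ → ℂ, ContDiff ℝ 1 u ∧
    Integrable (fun ρ => ‖u ρ‖ ^ 2) ∧
    Integrable (fun ρ => ‖deriv u ρ‖ ^ 2 + (ζ + ρ ^ 2) ^ 2 * ‖u ρ‖ ^ 2) ∧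
    0 < (∫ ρ : ℝ, ‖u ρ‖ ^ 2) ∧
    q = (∫ ρ : ℝ, (‖deriv u ρ‖ ^ 2 + (ζ + ρ ^ 2) ^ 2 * ‖u ρ‖ ^ 2)) / ∫ ρ : ℝ, ‖u ρ‖ ^ 2 }

/-- `ν̂₀`, the infimum of the Montgomery energy. -/
def nu0 : ℝ := ⨅ ζ : ℝ, montgomery ζ

/-- The magnetic operator `H(B)Ψ = (-i∇ + A)²Ψ`. -/
def magLap (B : ℝ) (Ψ : E3 → ℂ) (x : E3) : ℂ :=
  ∑ j : Fin 3, (-Complex.I * fderiv ℝ (magD B Ψ j) x (EuclideanSpace.single j 1)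
    + (Avec B x j : ℂ) * magD B Ψ j x)

/-- A Neumann eigenfunction of `H(B)` with eigenvalue `lam`: a nonzero (in `L²(Ω)`)
twice continuously differentiable function satisfying the eigenvalue equation in the ball
and the magnetic Neumann condition `N(x)·(-i∇+A)Ψ = 0` on the boundary sphere,
`N(x) = -x` being the interior normal. -/
def IsNeumannEigenfunction (B lam : ℝ) (Ψ : E3 → ℂ) : Prop :=
  ContDiff ℝ 2 Ψ ∧
  0 < (∫ x in ball3, ‖Ψ x‖ ^ 2) ∧
  (∀ x ∈ ball3, magLap B Ψ x = (lam : ℂ) * Ψ x) ∧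
  (∀ x ∈ Metric.sphere (0 : E3) 1, ∑ j : Fin 3, ((-x j : ℝ) : ℂ) * magD B Ψ j x = 0)

/-- Distance to the boundary of the unit ball. -/
def distBd (x : E3) : ℝ := 1 - ‖x‖

/-- Distance along the boundary (on the unit sphere, after radial projection)
to the equator `Γ`. -/
def distEq (x : E3) : ℝ := Real.arcsin (|x 2| / ‖x‖)

lemma deGennes_nonneg (ξ : ℝ) : 0 ≤ deGennes ξ := by
  apply Real.sInf_nonneg
  rintro q ⟨u, -, -, -, -, rfl⟩
  apply div_nonneg
  · apply integral_nonneg; intro t; positivity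
  · apply integral_nonneg; intro t; positivity

lemma Theta0_nonneg : 0 ≤ Theta0 := Real.iInf_nonneg deGennes_nonneg

lemma Theta0_le (ξ : ℝ) : Theta0 ≤ deGennes ξ :=
  ciInf_le ⟨0, by rintro _ ⟨x, rfl⟩; exact deGennes_nonneg x⟩ ξ

lemma Theta0_le_q (ξ : ℝ) (u : ℝ → ℂ) (hu : ContDiff ℝ 1 u)
    (h1 : IntegrableOn (fun t => ‖u t‖ ^ 2) (Ioi 0))
    (h2 : IntegrableOn (fun t => ‖deriv u t‖ ^ 2 + (t + ξ) ^ 2 * ‖u t‖ ^ 2) (Ioi 0)) :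
    Theta0 * (∫ t in Ioi (0:ℝ), ‖u t‖ ^ 2) ≤
      ∫ t in Ioi (0:ℝ), (‖deriv u t‖ ^ 2 + (t + ξ) ^ 2 * ‖u t‖ ^ 2) := by
  have h0 : 0 ≤ ∫ t in Ioi (0:ℝ), ‖u t‖ ^ 2 := by
    apply integral_nonneg; intro t; positivity
  rcases h0.eq_or_lt with h0 | h0
  · rw [← h0, mul_zero]; apply integral_nonneg; intro t; positivity
  · rw [← le_div_iff₀ h0]
    refine (Theta0_le ξ).trans (csInf_le ⟨0, ?_⟩ ⟨u, hu, h1, h2, h0, rfl⟩)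
    rintro q ⟨u, -, -, -, -, rfl⟩
    apply div_nonneg
    · apply integral_nonneg; intro t; positivity
    · apply integral_nonneg; intro t; positivity

lemma integrableOn_Ioi_of_zero {f : ℝ → ℝ} (hf : Continuous f) {L : ℝ} (hL : 0 ≤ L)
    (h : ∀ t, L ≤ t → f t = 0) : IntegrableOn f (Ioi 0) := by
  rw [← Ioc_union_Ioi_eq_Ioi hL]
  apply IntegrableOn.union
  · exact (hf.integrableOn_Icc (a := 0) (b := L)).mono_set Ioc_subset_Icc_self
  · apply (integrableOn_zero (ε' := ℝ)).congr_fun _ measurableSet_Ioi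
    intro t ht; exact (h t (le_of_lt ht)).symm

lemma integral_Ioi_of_zero {f : ℝ → ℝ} (hf : Continuous f) {L : ℝ} (hL : 0 ≤ L)
    (h : ∀ t, L ≤ t → f t = 0) : ∫ t in Ioi 0, f t = ∫ t in (0:ℝ)..L, f t := by
  rw [intervalIntegral.integral_of_le hL, ← Ioc_union_Ioi_eq_Ioi hL, setIntegral_union]
  · rw [setIntegral_eq_zero_of_forall_eq_zero (t := Ioi L), add_zero]
    intro t ht; exact h t (le_of_lt ht)
  · exact Ioc_disjoint_Ioi le_rfl
  · exact measurableSet_Ioi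
  · exact (hf.integrableOn_Icc (a := 0) (b := L)).mono_set Ioc_subset_Icc_self
  · apply (integrableOn_zero (ε' := ℝ)).congr_fun _ measurableSet_Ioi
    intro t ht; exact (h t (le_of_lt ht)).symm

lemma deriv_zero_of_zero {u : ℝ → ℂ} (hu : ContDiff ℝ 1 u) {L : ℝ} (h : ∀ t, L ≤ t → u t = 0) :
    ∀ t, L ≤ t → deriv u t = 0 := by
  have hc : Continuous (deriv u) := hu.continuous_deriv le_rfl
  have h1 : ∀ t ∈ Ioi L, deriv u t = 0 := by
    intro t ht
    have : u =ᶠ[𝓝 t] fun _ => 0 := by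
      filter_upwards [Ioi_mem_nhds ht] with s hs
      exact h s (le_of_lt hs)
    rw [this.deriv_eq]; simp
  intro t ht
  have h2 : closure (Ioi L) ⊆ {t | deriv u t = 0} :=
    closure_minimal h1 (isClosed_eq hc continuous_const)
  rw [closure_Ioi] at h2
  exact h2 ht

/-- quadratic form on [0,L] -/
lemma theta_q (p : ℝ) {L : ℝ} (hL : 0 ≤ L) (u : ℝ → ℂ) (hu : ContDiff ℝ 1 u)
    (h : ∀ t, L ≤ t → u t = 0) :
    Theta0 * (∫ t in (0:ℝ)..L, ‖u t‖ ^ 2) ≤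
      ∫ t in (0:ℝ)..L, (‖deriv u t‖ ^ 2 + (t - p) ^ 2 * ‖u t‖ ^ 2) := by
  have hc : Continuous (deriv u) := hu.continuous_deriv le_rfl
  have hc0 := hu.continuous
  have c1 : Continuous (fun t => ‖u t‖ ^ 2) := by fun_prop
  have c2 : Continuous (fun t => ‖deriv u t‖ ^ 2 + (t + -p) ^ 2 * ‖u t‖ ^ 2) := by fun_prop
  have z1 : ∀ t, L ≤ t → ‖u t‖ ^ 2 = 0 := by intro t ht; simp [h t ht]
  have z2 : ∀ t, L ≤ t → ‖deriv u t‖ ^ 2 + (t + -p) ^ 2 * ‖u t‖ ^ 2 = 0 := by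
    intro t ht; simp [h t ht, deriv_zero_of_zero hu h t ht]
  have := Theta0_le_q (-p) u hu (integrableOn_Ioi_of_zero c1 hL z1) (integrableOn_Ioi_of_zero c2 hL z2)
  rw [integral_Ioi_of_zero c1 hL z1, integral_Ioi_of_zero c2 hL z2] at this
  simpa [sub_eq_add_neg] using this

lemma Theta0_lt_one : Theta0 < 1 := by
  let u : ℝ → ℂ := fun t => ((Real.exp (-(t^2)/2) : ℝ) : ℂ)
  have hd : ∀ t, HasDerivAt u (((-t * Real.exp (-(t^2)/2) : ℝ)) : ℂ) t := by
    intro t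
    have h1 : HasDerivAt (fun t : ℝ => -(t^2)/2) (-t) t := by
      have := ((hasDerivAt_pow 2 t).neg).div_const 2
      exact this.congr_deriv (by norm_num; ring)
    have := (h1.exp).ofReal_comp
    convert this using 2
    ring
  have hu : ContDiff ℝ 1 u := by
    have : ContDiff ℝ 1 (fun t : ℝ => Real.exp (-(t^2)/2)) := by fun_prop
    exact Complex.ofRealCLM.contDiff.comp this
  have e0 : ∀ t : ℝ, Real.exp (-(t^2)/2) ^ 2 = Real.exp (-1 * t^2) := by
    intro t; rw [← Real.exp_nat_mul]; congr 1; push_cast; ring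
  have n1 : ∀ t, ‖u t‖ ^ 2 = Real.exp (-1 * t^2) := by
    intro t; simp only [u, Complex.norm_real, Real.norm_eq_abs, sq_abs]; exact e0 t
  have n2 : ∀ t, ‖deriv u t‖ ^ 2 = t ^ 2 * Real.exp (-1 * t^2) := by
    intro t; rw [(hd t).deriv]; simp only [Complex.norm_real, Real.norm_eq_abs, sq_abs]
    rw [mul_pow, e0]; ring
  have i0 : Integrable (fun t : ℝ => Real.exp (-1 * t^2)) := integrable_exp_neg_mul_sq one_pos
  have i1 : Integrable (fun t : ℝ => t * Real.exp (-1 * t^2)) := integrable_mul_exp_neg_mul_sq one_pos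
  have i2 : Integrable (fun t : ℝ => t ^ 2 * Real.exp (-1 * t^2)) := by
    have := integrable_rpow_mul_exp_neg_mul_sq one_pos (s := 2) (by norm_num)
    simpa using this
  have hfun : (fun t => ‖deriv u t‖ ^ 2 + (t + (-1)) ^ 2 * ‖u t‖ ^ 2) = fun t =>
      2 * (t ^ 2 * Real.exp (-1 * t^2)) - 2 * (t * Real.exp (-1 * t^2)) + Real.exp (-1 * t^2) := by
    funext t; rw [n1, n2]; ring
  have I2 : Integrable (fun t => ‖deriv u t‖ ^ 2 + (t + (-1)) ^ 2 * ‖u t‖ ^ 2) := by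
    rw [hfun]; exact ((i2.const_mul 2).sub (i1.const_mul 2)).add i0
  have I1 : Integrable (fun t => ‖u t‖ ^ 2) := by simpa [n1] using i0
  have key := Theta0_le_q (-1) u hu I1.integrableOn I2.integrableOn
  have g0 : ∫ t in Ioi (0:ℝ), Real.exp (-1 * t^2) = √π / 2 := by
    have := integral_gaussian_Ioi 1
    simpa using this
  have fd : ∀ t : ℝ, HasDerivAt (fun t : ℝ => (1 - t) * Real.exp (-1 * t^2))
      (2 * (t ^ 2 * Real.exp (-1 * t^2)) - 2 * (t * Real.exp (-1 * t^2)) - Real.exp (-1 * t^2)) t := by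
    intro t
    have h1 : HasDerivAt (fun t : ℝ => -1 * t^2) (-2*t) t := by
      have := (hasDerivAt_pow 2 t).const_mul (-1)
      exact this.congr_deriv (by norm_num)
    have h2 : HasDerivAt (fun t : ℝ => 1 - t) (-1) t := by
      simpa using (hasDerivAt_id t).const_sub 1
    have := h2.mul h1.exp
    exact this.congr_deriv (by ring)
  have lim : Tendsto (fun t : ℝ => (1 - t) * Real.exp (-1 * t^2)) atTop (𝓝 0) := by
    have h1 : Tendsto (fun t : ℝ => Real.exp (-t)) atTop (𝓝 0) := Real.tendsto_exp_neg_atTop_nhds_zero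
    have h2 : Tendsto (fun t : ℝ => t ^ 1 * Real.exp (-t)) atTop (𝓝 0) :=
      Real.tendsto_pow_mul_exp_neg_atTop_nhds_zero 1
    have h3 := h1.add h2
    rw [add_zero] at h3
    refine squeeze_zero_norm' ?_ h3
    filter_upwards [eventually_ge_atTop 1] with t ht
    rw [norm_mul, Real.norm_eq_abs, Real.norm_eq_abs, Real.abs_exp]
    have : |1 - t| ≤ 1 + t := by rw [abs_le]; constructor <;> linarith
    have h4 : Real.exp (-1 * t^2) ≤ Real.exp (-t) := Real.exp_le_exp.2 (by nlinarith)
    calc |1 - t| * Real.exp (-1 * t^2) ≤ (1+t) * Real.exp (-t) := by gcongr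
      _ = _ := by ring
  have g1 := integral_Ioi_of_hasDerivAt_of_tendsto' (a := 0) (fun t _ => fd t)
    (((i2.const_mul 2).sub (i1.const_mul 2)).sub i0).integrableOn lim
  have g2 : ∫ t in Ioi (0:ℝ), (‖deriv u t‖ ^ 2 + (t + (-1)) ^ 2 * ‖u t‖ ^ 2) = -1 + √π := by
    rw [hfun]
    have : (fun t : ℝ => 2 * (t ^ 2 * Real.exp (-1 * t^2)) - 2 * (t * Real.exp (-1 * t^2)) + Real.exp (-1 * t^2)) =
       fun t => (2 * (t ^ 2 * Real.exp (-1 * t^2)) - 2 * (t * Real.exp (-1 * t^2)) - Real.exp (-1 * t^2)) + 2 * Real.exp (-1 * t^2) := by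
      funext t; ring
    have J : Integrable (fun t : ℝ => 2 * (t ^ 2 * Real.exp (-1 * t^2)) - 2 * (t * Real.exp (-1 * t^2)) - Real.exp (-1 * t^2)) :=
      ((i2.const_mul 2).sub (i1.const_mul 2)).sub i0
    rw [this, integral_add J.integrableOn (i0.const_mul 2).integrableOn, g1,
      integral_const_mul, g0]
    norm_num
    ring
  rw [g2] at key
  simp only [n1] at key
  rw [g0] at key
  have hpi : √π < 2 := by
    rw [Real.sqrt_lt' (by norm_num)]; linarith [Real.pi_lt_four]
  have hpos : 0 < √π := Real.sqrt_pos.2 Real.pi_pos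
  by_contra hcon
  push Not at hcon
  nlinarith

lemma hasDerivAt_max_comp {u u' : ℝ → ℂ} (hu : ∀ t, HasDerivAt u (u' t) t) (h0 : u' 0 = 0) (t : ℝ) :
    HasDerivAt (fun t => u (max t 0)) (u' (max t 0)) t := by
  rcases lt_trichotomy t 0 with h | h | h
  · rw [max_eq_right h.le, h0]
    apply (hasDerivAt_const t (u 0)).congr_of_eventuallyEq
    filter_upwards [Iio_mem_nhds h] with s hs
    rw [max_eq_right (le_of_lt hs)]
  · subst h
    rw [max_self, h0]
    have := hu 0
    rw [h0] at this
    rw [hasDerivAt_iff_isLittleO] at this ⊢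
    simp only [sub_zero, smul_zero, max_self] at this ⊢
    have ht : Tendsto (fun x : ℝ => max x 0) (𝓝 0) (𝓝 0) := by
      have : Continuous (fun x : ℝ => max x 0) := by fun_prop
      simpa using this.tendsto 0
    have h2 := this.comp_tendsto ht
    refine h2.trans_isBigO ?_
    apply Asymptotics.IsBigO.of_bound 1
    filter_upwards with x
    simp only [Function.comp, one_mul, Real.norm_eq_abs]
    rcases le_total x 0 with h | h
    · simp [max_eq_right h]
    · simp [max_eq_left h]
  · rw [max_eq_left h.le]
    apply (hu t).congr_of_eventuallyEq
    filter_upwards [Ioi_mem_nhds h] with s hs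
    rw [max_eq_left (le_of_lt hs)]

lemma ext_ineq0 (p : ℝ) {L s : ℝ} (hL : 0 ≤ L) (hs : 0 ≤ s) (u : ℝ → ℂ) (hu : ContDiff ℝ 1 u)
    (h : ∀ t, L ≤ t → u t = 0) (h0 : deriv u 0 = 0) :
    Theta0 * (s * ‖u 0‖ ^ 2 + ∫ t in (0:ℝ)..L, ‖u t‖ ^ 2) ≤
      ‖u 0‖ ^ 2 * (((s + p) ^ 3 - p ^ 3) / 3) +
      ∫ t in (0:ℝ)..L, (‖deriv u t‖ ^ 2 + (t - p) ^ 2 * ‖u t‖ ^ 2) := by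
  have hc : Continuous (deriv u) := hu.continuous_deriv le_rfl
  have hc0 := hu.continuous
  let v : ℝ → ℂ := fun t => u (max (t - s) 0)
  have hv : ∀ t, HasDerivAt v (deriv u (max (t - s) 0)) t := by
    intro t
    have := hasDerivAt_max_comp (u := u) (u' := deriv u)
      (fun t => (hu.differentiable one_ne_zero t).hasDerivAt) h0 (t - s)
    simpa using HasDerivAt.comp_sub_const t s this
  have hdv : deriv v = fun t => deriv u (max (t - s) 0) := by
    funext t; exact (hv t).deriv
  have hvC : ContDiff ℝ 1 v := by
    rw [contDiff_one_iff_deriv]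
    refine ⟨fun t => (hv t).differentiableAt, ?_⟩
    rw [hdv]; fun_prop
  have hvz : ∀ t, L + s ≤ t → v t = 0 := by
    intro t ht
    apply h
    exact le_max_of_le_left (by linarith)
  have key := theta_q (p + s) (add_nonneg hL hs) v hvC hvz
  have c1 : Continuous (fun t => ‖v t‖ ^ 2) := by have := hvC.continuous; fun_prop
  have c2 : Continuous (fun t => ‖deriv v t‖ ^ 2 + (t - (p + s)) ^ 2 * ‖v t‖ ^ 2) := by
    have := hvC.continuous; have := hvC.continuous_deriv le_rfl; fun_prop
  rw [← intervalIntegral.integral_add_adjacent_intervals (b := s) (c1.intervalIntegrable _ _)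
    (c1.intervalIntegrable _ _), ← intervalIntegral.integral_add_adjacent_intervals (b := s) (c2.intervalIntegrable _ _)
    (c2.intervalIntegrable _ _)] at key
  have a1 : ∫ t in (0:ℝ)..s, ‖v t‖ ^ 2 = s * ‖u 0‖ ^ 2 := by
    rw [intervalIntegral.integral_congr (g := fun _ => ‖u 0‖ ^ 2)]
    · simp
    · intro t ht
      rw [uIcc_of_le hs] at ht
      simp only [v]
      rw [max_eq_right (by linarith [ht.2])]
  have a2 : ∫ t in (0:ℝ)..s, (‖deriv v t‖ ^ 2 + (t - (p + s)) ^ 2 * ‖v t‖ ^ 2)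
      = ‖u 0‖ ^ 2 * (((s + p) ^ 3 - p ^ 3) / 3) := by
    rw [intervalIntegral.integral_congr (g := fun t => (t - (p+s)) ^ 2 * ‖u 0‖ ^ 2)]
    · rw [intervalIntegral.integral_mul_const, intervalIntegral.integral_comp_sub_right (fun x => x ^ 2), integral_pow]
      norm_num; ring
    · intro t ht
      rw [uIcc_of_le hs] at ht
      simp only [v, hdv]
      rw [max_eq_right (by linarith [ht.2]), h0]
      simp
  have a3 : ∫ t in s..(L+s), ‖v t‖ ^ 2 = ∫ t in (0:ℝ)..L, ‖u t‖ ^ 2 := by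
    rw [intervalIntegral.integral_congr (g := fun t => (fun x => ‖u x‖ ^ 2) (t - s))]
    · rw [intervalIntegral.integral_comp_sub_right (fun x => ‖u x‖ ^ 2)]; simp
    · intro t ht
      rw [uIcc_of_le (by linarith)] at ht
      simp only [v]
      rw [max_eq_left (by linarith [ht.1])]
  have a4 : ∫ t in s..(L+s), (‖deriv v t‖ ^ 2 + (t - (p + s)) ^ 2 * ‖v t‖ ^ 2) =
      ∫ t in (0:ℝ)..L, (‖deriv u t‖ ^ 2 + (t - p) ^ 2 * ‖u t‖ ^ 2) := by
    rw [intervalIntegral.integral_congr (g := fun t => (fun x => (‖deriv u x‖ ^ 2 + (x - p) ^ 2 * ‖u x‖ ^ 2)) (t - s))]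
    · rw [intervalIntegral.integral_comp_sub_right (fun x => (‖deriv u x‖ ^ 2 + (x - p) ^ 2 * ‖u x‖ ^ 2))]; simp
    · intro t ht
      rw [uIcc_of_le (by linarith)] at ht
      simp only [v, hdv]
      rw [max_eq_left (by linarith [ht.1])]
      ring
  rw [a1, a2, a3, a4] at key
  exact key

lemma hasDerivAt_maxsq (x : ℝ) : HasDerivAt (fun x : ℝ => max x 0 ^ 2) (2 * max x 0) x := by
  have := hasDerivAt_max_comp (u := fun x : ℝ => ((x:ℂ)) ^ 2) (u' := fun x => 2 * (x:ℂ)) (by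
    intro t
    have h1 : HasDerivAt (fun x : ℝ => (x:ℂ)) 1 t := Complex.ofRealCLM.hasDerivAt
    have h3 := h1.mul h1
    refine (h3.congr_deriv (by ring)).congr_of_eventuallyEq ?_
    filter_upwards with y
    simp [sq]) (by simp) x
  have h2 := Complex.reCLM.hasFDerivAt.comp_hasDerivAt x this
  refine (h2.congr_deriv ?_).congr_of_eventuallyEq ?_
  · simp
  · filter_upwards with y
    simp only [Function.comp, Complex.reCLM_apply]
    norm_cast

lemma ext_ineq (p : ℝ) {L s : ℝ} (hL : 0 < L) (hs : 0 ≤ s) (u : ℝ → ℂ) (hu : ContDiff ℝ 1 u)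
    (h : ∀ t, L ≤ t → u t = 0) :
    Theta0 * (s * ‖u 0‖ ^ 2 + ∫ t in (0:ℝ)..L, ‖u t‖ ^ 2) ≤
      ‖u 0‖ ^ 2 * (((s + p) ^ 3 - p ^ 3) / 3) +
      ∫ t in (0:ℝ)..L, (‖deriv u t‖ ^ 2 + (t - p) ^ 2 * ‖u t‖ ^ 2) := by
  have hc : Continuous (deriv u) := hu.continuous_deriv le_rfl
  have hc0 := hu.continuous
  set a := deriv u 0 with ha
  let N : ℕ → ℝ := fun n => n + 1 + 1 / L
  have hN1 : ∀ n, 0 < N n := fun n => by positivity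
  have hNL : ∀ n, 1 ≤ N n * L := fun n => by
    simp only [N]; rw [add_mul, one_div, inv_mul_cancel₀ hL.ne']; nlinarith [(by positivity : (0:ℝ) ≤ n)]
  have hNt : Tendsto N atTop atTop := by
    apply tendsto_atTop_add_const_right
    apply tendsto_atTop_add_const_right
    exact tendsto_natCast_atTop_atTop
  let φ : ℕ → ℝ → ℝ := fun n t => t * max (1 - N n * t) 0 ^ 2
  let φ' : ℕ → ℝ → ℝ := fun n t => max (1 - N n * t) 0 ^ 2 - 2 * (N n * t) * max (1 - N n * t) 0
  have hφ : ∀ n t, HasDerivAt (φ n) (φ' n t) t := by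
    intro n t
    have h1 : HasDerivAt (fun t => 1 - N n * t) (-N n) t := by
      simpa using ((hasDerivAt_id t).const_mul (N n)).const_sub 1
    have h2 := (hasDerivAt_maxsq (1 - N n * t)).comp t h1
    refine ((hasDerivAt_id t).mul h2).congr_deriv ?_
    simp only [φ', id, Function.comp]; ring
  let w : ℕ → ℝ → ℂ := fun n t => u t - (φ n t : ℂ) * a
  have hw : ∀ n t, HasDerivAt (w n) (deriv u t - (φ' n t : ℂ) * a) t := by
    intro n t
    exact ((hu.differentiable one_ne_zero t).hasDerivAt).sub (((hφ n t).ofReal_comp).mul_const a)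
  have hdw : ∀ n, deriv (w n) = fun t => deriv u t - (φ' n t : ℂ) * a :=
    fun n => funext fun t => (hw n t).deriv
  have hwC : ∀ n, ContDiff ℝ 1 (w n) := by
    intro n
    rw [contDiff_one_iff_deriv]
    refine ⟨fun t => (hw n t).differentiableAt, ?_⟩
    rw [hdw]; simp only [φ']; fun_prop
  have hwz : ∀ n t, L ≤ t → w n t = 0 := by
    intro n t ht
    have : max (1 - N n * t) 0 = 0 := by
      apply max_eq_right
      nlinarith [hNL n, hN1 n]
    simp [w, φ, this, h t ht]
  have hw0 : ∀ n, deriv (w n) 0 = 0 := by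
    intro n; rw [hdw]; simp [φ', ← ha]
  have hwu0 : ∀ n, w n 0 = u 0 := by intro n; simp [w, φ]
  have key := fun n => ext_ineq0 p hL.le hs (w n) (hwC n) (hwz n) (hw0 n)
  simp only [hwu0] at key
  -- bounds
  have b1 : ∀ n t, 0 ≤ t → 0 ≤ φ n t ∧ φ n t ≤ L := by
    intro n t ht
    refine ⟨by positivity, ?_⟩
    rcases le_total (1 - N n * t) 0 with h1 | h1
    · simp [φ, max_eq_right h1, hL.le]
    · simp only [φ, max_eq_left h1]
      have h2 : 1 - N n * t ≤ 1 := by nlinarith [hN1 n]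
      have h3 : t ≤ L := by
        by_contra hh; push Not at hh; nlinarith [hNL n, hN1 n]
      nlinarith [mul_nonneg ht h1, pow_le_one₀ h1 h2 (n := 2)]
  have b2 : ∀ n t, 0 ≤ t → |φ' n t| ≤ 3 := by
    intro n t ht
    rcases le_total (1 - N n * t) 0 with h1 | h1
    · simp [φ', max_eq_right h1]
    · simp only [φ', max_eq_left h1]
      have h2 : 0 ≤ N n * t := mul_nonneg (hN1 n).le ht
      rw [abs_le]
      constructor <;> nlinarith [mul_nonneg h1 h2]
  have t1 : ∀ t, 0 < t → ∀ᶠ n in atTop, φ n t = 0 ∧ φ' n t = 0 := by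
    intro t ht
    have := (hNt.atTop_mul_const ht).eventually_ge_atTop 1
    filter_upwards [this] with n hn
    have : max (1 - N n * t) 0 = 0 := max_eq_right (by linarith)
    simp [φ, φ', this]
  obtain ⟨M, hM⟩ := (isCompact_Icc (a := (0:ℝ)) (b := L)).exists_bound_of_continuousOn hc0.continuousOn
  obtain ⟨M', hM'⟩ := (isCompact_Icc (a := (0:ℝ)) (b := L)).exists_bound_of_continuousOn hc.continuousOn
  have nb : ∀ n t, t ∈ Ioc 0 L → ‖w n t‖ ≤ M + L * ‖a‖ := by
    intro n t ht
    refine (norm_sub_le _ _).trans (add_le_add (hM t ⟨ht.1.le, ht.2⟩) ?_)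
    rw [norm_mul, Complex.norm_real, Real.norm_eq_abs, abs_of_nonneg (b1 n t ht.1.le).1]
    gcongr; exact (b1 n t ht.1.le).2
  have nb' : ∀ n t, t ∈ Ioc 0 L → ‖deriv (w n) t‖ ≤ M' + 3 * ‖a‖ := by
    intro n t ht
    rw [hdw]
    refine (norm_sub_le _ _).trans (add_le_add (hM' t ⟨ht.1.le, ht.2⟩) ?_)
    rw [norm_mul, Complex.norm_real, Real.norm_eq_abs]
    gcongr; exact (b2 n t ht.1.le)
  have lim1 : Tendsto (fun n => ∫ t in (0:ℝ)..L, ‖w n t‖ ^ 2) atTop (𝓝 (∫ t in (0:ℝ)..L, ‖u t‖ ^ 2)) := by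
    apply intervalIntegral.tendsto_integral_filter_of_dominated_convergence (fun _ => (M + L * ‖a‖) ^ 2)
    · filter_upwards with n
      have := (hwC n).continuous
      exact (by fun_prop : Continuous fun t => ‖w n t‖ ^ 2).aestronglyMeasurable
    · filter_upwards with n
      filter_upwards with t ht
      rw [uIoc_of_le hL.le] at ht
      rw [norm_pow, norm_norm]
      gcongr; exact nb n t ht
    · simp
    · filter_upwards with t ht
      rw [uIoc_of_le hL.le] at ht
      apply tendsto_const_nhds.congr'
      filter_upwards [t1 t ht.1] with n hn
      simp [w, hn.1]
  have lim2 : Tendsto (fun n => ∫ t in (0:ℝ)..L, (‖deriv (w n) t‖ ^ 2 + (t - p) ^ 2 * ‖w n t‖ ^ 2)) atTop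
      (𝓝 (∫ t in (0:ℝ)..L, (‖deriv u t‖ ^ 2 + (t - p) ^ 2 * ‖u t‖ ^ 2))) := by
    apply intervalIntegral.tendsto_integral_filter_of_dominated_convergence
      (fun t => (M' + 3 * ‖a‖) ^ 2 + (t - p) ^ 2 * (M + L * ‖a‖) ^ 2)
    · filter_upwards with n
      have := (hwC n).continuous
      have := (hwC n).continuous_deriv le_rfl
      exact (by fun_prop : Continuous fun t => (‖deriv (w n) t‖ ^ 2 + (t - p) ^ 2 * ‖w n t‖ ^ 2)).aestronglyMeasurable
    · filter_upwards with n
      filter_upwards with t ht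
      rw [uIoc_of_le hL.le] at ht
      rw [Real.norm_eq_abs, abs_of_nonneg (by positivity)]
      gcongr
      · exact nb' n t ht
      · exact nb n t ht
    · exact (by fun_prop : Continuous fun t => (M' + 3 * ‖a‖) ^ 2 + (t - p) ^ 2 * (M + L * ‖a‖) ^ 2).intervalIntegrable _ _
    · filter_upwards with t ht
      rw [uIoc_of_le hL.le] at ht
      apply tendsto_const_nhds.congr'
      filter_upwards [t1 t ht.1] with n hn
      simp [w, hn.1, hdw, hn.2]
  exact le_of_tendsto_of_tendsto' ((lim1.const_add _).const_mul _) (lim2.const_add _) key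

lemma hasDerivAt_sub_mul_normsq (c : ℝ) (u : ℝ → ℂ) (hu : ContDiff ℝ 1 u) (t : ℝ) :
    HasDerivAt (fun t => (t - c) * ‖u t‖ ^ 2)
      (‖u t‖ ^ 2 + 2 * (t - c) * inner ℝ (u t) (deriv u t)) t := by
  have h1 := ((hu.differentiable one_ne_zero t).hasDerivAt).norm_sq
  refine (((hasDerivAt_id t).sub_const c).mul h1).congr_deriv ?_
  simp only [id]; ring

lemma inner_abs_le' (a b : ℂ) (c : ℝ) : -(‖b‖ ^ 2 + c ^ 2 * ‖a‖ ^ 2) ≤ 2 * c * inner ℝ a b := by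
  have h := sq_nonneg ‖b + (c:ℝ) • a‖
  rw [@norm_add_sq_real, norm_smul, inner_smul_right, real_inner_comm, mul_pow, Real.norm_eq_abs, sq_abs] at h
  linarith

lemma inner_abs_le'' (a b : ℂ) (c : ℝ) : 2 * c * inner ℝ a b ≤ (‖b‖ ^ 2 + c ^ 2 * ‖a‖ ^ 2) := by
  have := inner_abs_le' a b (-c)
  linarith [this, neg_sq c, show (-c)^2 = c^2 by ring]

lemma F2_ineq (p : ℝ) {L : ℝ} (hL : 0 ≤ L) (u : ℝ → ℂ) (hu : ContDiff ℝ 1 u)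
    (h : ∀ t, L ≤ t → u t = 0) :
    (∫ t in (0:ℝ)..L, ‖u t‖ ^ 2) - p * ‖u 0‖ ^ 2 ≤
      ∫ t in (0:ℝ)..L, (‖deriv u t‖ ^ 2 + (t - p) ^ 2 * ‖u t‖ ^ 2) := by
  have hc : Continuous (deriv u) := hu.continuous_deriv le_rfl
  have hc0 := hu.continuous
  have e := intervalIntegral.integral_eq_sub_of_hasDerivAt (a := 0) (b := L)
    (fun t _ => hasDerivAt_sub_mul_normsq p u hu t)
    ((by fun_prop : Continuous _).intervalIntegrable _ _)
  rw [h L le_rfl] at e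
  have : (∫ t in (0:ℝ)..L, ‖u t‖ ^ 2) ≤ (∫ t in (0:ℝ)..L, (‖u t‖ ^ 2 + 2 * (t - p) * inner ℝ (u t) (deriv u t))) +
     ∫ t in (0:ℝ)..L, (‖deriv u t‖ ^ 2 + (t - p) ^ 2 * ‖u t‖ ^ 2) := by
    rw [← intervalIntegral.integral_add ((by fun_prop : Continuous _).intervalIntegrable _ _)
      ((by fun_prop : Continuous _).intervalIntegrable _ _)]
    apply intervalIntegral.integral_mono_on hL ((by fun_prop : Continuous _).intervalIntegrable _ _)
      ((by fun_prop : Continuous _).intervalIntegrable _ _)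
    intro t _
    linarith [inner_abs_le' (u t) (deriv u t) (t - p)]
  rw [e] at this
  simp at this
  linarith

lemma trace_ineq {s : ℝ} (hs : 0 ≤ s) (u : ℝ → ℂ) (hu : ContDiff ℝ 1 u) :
    s * ‖u 0‖ ^ 2 ≤ 2 * (∫ t in (0:ℝ)..s, ‖u t‖ ^ 2) + s ^ 2 * ∫ t in (0:ℝ)..s, ‖deriv u t‖ ^ 2 := by
  have hc : Continuous (deriv u) := hu.continuous_deriv le_rfl
  have hc0 := hu.continuous
  have e := intervalIntegral.integral_eq_sub_of_hasDerivAt (a := 0) (b := s)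
    (fun t _ => hasDerivAt_sub_mul_normsq s u hu t)
    ((by fun_prop : Continuous _).intervalIntegrable _ _)
  simp only [sub_self, zero_mul, zero_sub, neg_mul, neg_neg] at e
  rw [← e, ← intervalIntegral.integral_const_mul, ← intervalIntegral.integral_const_mul,
   ← intervalIntegral.integral_add ((by fun_prop : Continuous _).intervalIntegrable _ _)
      ((by fun_prop : Continuous _).intervalIntegrable _ _)]
  apply intervalIntegral.integral_mono_on hs ((by fun_prop : Continuous _).intervalIntegrable _ _)
      ((by fun_prop : Continuous _).intervalIntegrable _ _)
  intro t ht
  have h1 : inner ℝ (u t) (deriv u t) ≤ ‖u t‖ * ‖deriv u t‖ := real_inner_le_norm _ _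
  have h2 : -(‖u t‖ * ‖deriv u t‖) ≤ inner ℝ (u t) (deriv u t) := by
    have := abs_real_inner_le_norm (u t) (deriv u t)
    exact (abs_le.mp this).1
  have h3 : 2 * (t - s) * inner ℝ (u t) (deriv u t) ≤ 2 * s * (‖u t‖ * ‖deriv u t‖) := by
    have : (s - t) * (-inner ℝ (u t) (deriv u t)) ≤ s * (‖u t‖ * ‖deriv u t‖) :=
      (mul_le_mul_of_nonneg_left (by linarith) (by linarith [ht.2])).trans
        (mul_le_mul_of_nonneg_right (by linarith [ht.1]) (by positivity))
    linarith
  nlinarith [sq_nonneg (‖u t‖ - s * ‖deriv u t‖)]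

lemma trunc_ineq (p : ℝ) {L s : ℝ} (hL : 0 ≤ s) (hsL : s ≤ L) (u : ℝ → ℂ) (hu : ContDiff ℝ 1 u)
    (h : ∀ t, L ≤ t → u t = 0) :
    (∫ t in (0:ℝ)..s, (‖deriv u t‖ ^ 2 + (t - p) ^ 2 * ‖u t‖ ^ 2)) - Theta0 * ∫ t in (0:ℝ)..s, ‖u t‖ ^ 2 ≤
    (∫ t in (0:ℝ)..L, (‖deriv u t‖ ^ 2 + (t - p) ^ 2 * ‖u t‖ ^ 2)) - Theta0 * ∫ t in (0:ℝ)..L, ‖u t‖ ^ 2 := by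
  have hc : Continuous (deriv u) := hu.continuous_deriv le_rfl
  have hc0 := hu.continuous
  have key := theta_q (p - s) (L := L - s) (by linarith) (fun t => u (t + s)) (hu.comp (by fun_prop))
    (fun t ht => h _ (by linarith))
  have hd : ∀ t, deriv (fun t => u (t + s)) t = deriv u (t + s) := fun t => deriv_comp_add_const _ _ _
  simp only [hd] at key
  have e1 : ∫ t in (0:ℝ)..(L - s), ‖u (t + s)‖ ^ 2 = ∫ t in s..L, ‖u t‖ ^ 2 := by
    rw [intervalIntegral.integral_comp_add_right (fun t => ‖u t‖ ^ 2)]; simp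
  have e2 : ∫ t in (0:ℝ)..(L - s), (‖deriv u (t + s)‖ ^ 2 + (t - (p - s)) ^ 2 * ‖u (t + s)‖ ^ 2)
    = ∫ t in s..L, (‖deriv u t‖ ^ 2 + (t - p) ^ 2 * ‖u t‖ ^ 2) := by
    have := intervalIntegral.integral_comp_add_right (a := 0) (b := L - s) (fun t => (‖deriv u t‖ ^ 2 + (t - p) ^ 2 * ‖u t‖ ^ 2)) s
    simp only [zero_add, sub_add_cancel] at this
    rw [← this]
    congr 1; ext t; ring
  rw [e1, e2] at key
  have c1 : Continuous fun t => (‖deriv u t‖ ^ 2 + (t - p) ^ 2 * ‖u t‖ ^ 2) := by fun_prop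
  have c2 : Continuous fun t => ‖u t‖ ^ 2 := by fun_prop
  rw [← intervalIntegral.integral_add_adjacent_intervals (c1.intervalIntegrable 0 s) (c1.intervalIntegrable s L),
    ← intervalIntegral.integral_add_adjacent_intervals (c2.intervalIntegrable 0 s) (c2.intervalIntegrable s L)]
  linarith

lemma gap_1d (p : ℝ) {L : ℝ} (hL : 1 ≤ L) (u : ℝ → ℂ) (hu : ContDiff ℝ 1 u)
    (h : ∀ t, L ≤ t → u t = 0) :
    (Theta0 + (1 - Theta0) / 17 * min ((p - √Theta0) ^ 2) 1) * (∫ t in (0:ℝ)..L, ‖u t‖ ^ 2) ≤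
      ∫ t in (0:ℝ)..L, (‖deriv u t‖ ^ 2 + (t - p) ^ 2 * ‖u t‖ ^ 2) := by
  have hc : Continuous (deriv u) := hu.continuous_deriv le_rfl
  have hc0 := hu.continuous
  have hF2 := F2_ineq p (by linarith) u hu h
  have hT1 := Theta0_lt_one
  have hT0 := Theta0_nonneg
  have hth := Real.sq_sqrt hT0
  have hth0 := Real.sqrt_nonneg Theta0
  have hD := theta_q p (by linarith) u hu h
  have hth1 : √Theta0 ≤ 1 := by nlinarith
  set θ := √Theta0 with hθ
  set U := ∫ t in (0:ℝ)..L, ‖u t‖ ^ 2 with hU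
  set Q := ∫ t in (0:ℝ)..L, (‖deriv u t‖ ^ 2 + (t - p) ^ 2 * ‖u t‖ ^ 2) with hQ
  have hU0 : 0 ≤ U := intervalIntegral.integral_nonneg (by linarith) (fun t _ => by positivity)
  have hm1 : min ((p - θ) ^ 2) 1 ≤ 1 := min_le_right _ _
  have hm2 : min ((p - θ) ^ 2) 1 ≤ (p - θ) ^ 2 := min_le_left _ _
  have hm0 : 0 ≤ min ((p - θ) ^ 2) 1 := le_min (sq_nonneg _) zero_le_one
  set m := min ((p - θ) ^ 2) 1 with hm
  have hTU : 0 ≤ (1 - Theta0) * U := mul_nonneg (by linarith) hU0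
  suffices hs : m * ((1 - Theta0) * U) ≤ 17 * (Q - Theta0 * U) by nlinarith
  rcases le_or_gt p 0 with hp | hp
  · have : p * ‖u 0‖ ^ 2 ≤ 0 := mul_nonpos_of_nonpos_of_nonneg hp (by positivity)
    nlinarith
  rcases lt_trichotomy p θ with hpt | hpt | hpt
  · have hx := ext_ineq p (s := θ - p) (by linarith) (by linarith) u hu h
    rw [← hU, ← hQ] at hx
    have h1 : (θ - p) ^ 2 * (p * ‖u 0‖ ^ 2) ≤ Q - Theta0 * U := by
      have : (θ - p) ^ 2 * (2 * θ + p) / 3 * ‖u 0‖ ^ 2 ≤ Q - Theta0 * U := by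
        rw [← hth] at hx ⊢
        nlinarith
      have h2 : (θ - p) ^ 2 * p ≤ (θ - p) ^ 2 * (2 * θ + p) / 3 := by
        nlinarith [sq_nonneg (θ - p)]
      nlinarith [mul_le_mul_of_nonneg_right h2 (sq_nonneg ‖u 0‖)]
    have h3 : m * (p * ‖u 0‖ ^ 2) ≤ Q - Theta0 * U := by
      refine le_trans (mul_le_mul_of_nonneg_right hm2 (by positivity)) ?_
      nlinarith
    nlinarith [mul_le_mul_of_nonneg_left hF2 hm0]
  · have : m = 0 := by rw [hm, hpt]; simp
    rw [this]; linarith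
  · set e := p - θ with he
    have he0 : 0 < e := by linarith
    set s := m / (2 * e) with hs
    have hs0 : 0 ≤ s := by positivity
    have hes : 2 * e * s = m := by rw [hs]; field_simp
    have hse : s ≤ e / 2 := by nlinarith
    have hs1 : s ≤ 1 := by
      rcases le_or_gt e 1 with h | h
      · linarith
      · nlinarith
    have htr := trunc_ineq p hs0 (hs1.trans hL) u hu h
    have htc := trace_ineq hs0 u hu
    have c1 : Continuous fun t => ‖deriv u t‖ ^ 2 := by fun_prop
    have c2 : Continuous fun t => (e * p / 4) * ‖u t‖ ^ 2 := by fun_prop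
    have c3 : Continuous fun t => Theta0 * ‖u t‖ ^ 2 := by fun_prop
    have c4 : Continuous fun t => (‖deriv u t‖ ^ 2 + (t - p) ^ 2 * ‖u t‖ ^ 2) := by fun_prop
    have h1 : (∫ t in (0:ℝ)..s, ‖deriv u t‖ ^ 2) + (e * p / 4) * (∫ t in (0:ℝ)..s, ‖u t‖ ^ 2) ≤ Q - Theta0 * U := by
      refine le_trans ?_ htr
      rw [← intervalIntegral.integral_const_mul, ← intervalIntegral.integral_const_mul,
        ← intervalIntegral.integral_add (c1.intervalIntegrable _ _) (c2.intervalIntegrable _ _),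
        ← intervalIntegral.integral_sub (c4.intervalIntegrable _ _) (c3.intervalIntegrable _ _)]
      apply intervalIntegral.integral_mono_on hs0 ((c1.add c2).intervalIntegrable _ _) ((c4.sub c3).intervalIntegrable _ _)
      intro t ht
      have : e * p / 4 ≤ (t - p) ^ 2 - Theta0 := by
        rw [← hth]
        have : p - t ≥ (p + θ) / 2 := by linarith [ht.2]
        nlinarith
      have h9 := mul_le_mul_of_nonneg_right this (sq_nonneg ‖u t‖)
      simp only [Pi.add_apply, Pi.sub_apply]
      linarith
    set X := ∫ t in (0:ℝ)..s, ‖u t‖ ^ 2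
    set Y := ∫ t in (0:ℝ)..s, ‖deriv u t‖ ^ 2
    have hY : 0 ≤ Y := intervalIntegral.integral_nonneg hs0 (fun t _ => by positivity)
    have h2 : 2 * e * p * s ^ 2 ≤ 16 := by
      have : 2 * e * p * s ^ 2 = m * (p * s) := by rw [← hes]; ring
      rw [this]
      have hp2 : p ≤ e + 1 := by linarith
      have h8 : p * s ≤ (e + 1) * s := mul_le_mul_of_nonneg_right hp2 hs0
      have h9 : 0 ≤ p * s := by positivity
      have h10 : m * (p * s) ≤ 1 * (p * s) := mul_le_mul_of_nonneg_right hm1 h9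
      linarith
    have h3 : m * (p * ‖u 0‖ ^ 2) ≤ 16 * (Q - Theta0 * U) := by
      have : m * (p * ‖u 0‖ ^ 2) = 2 * e * p * (s * ‖u 0‖ ^ 2) := by rw [← hes]; ring
      rw [this]
      have h4 := mul_le_mul_of_nonneg_left htc (by positivity : 0 ≤ 2 * e * p)
      have h5 := mul_le_mul_of_nonneg_right h2 hY
      linarith
    have h6 := mul_le_mul_of_nonneg_left hF2 hm0
    have h7 : m * (Q - Theta0 * U) ≤ 1 * (Q - Theta0 * U) := mul_le_mul_of_nonneg_right hm1 (by linarith)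
    linarith

/-- Scaled versions. -/
lemma scaled_aux {b L : ℝ} (hb : 0 < b) (p K : ℝ) (v : ℝ → ℂ) (hv : ContDiff ℝ 1 v)
    (hK : K * (∫ t in (0:ℝ)..√b, ‖v (t / √b)‖ ^ 2) ≤
      ∫ t in (0:ℝ)..√b, (‖deriv (fun t => v (t / √b)) t‖ ^ 2 + (t - p / √b) ^ 2 * ‖v (t / √b)‖ ^ 2)) :
    b * K * (∫ t in (0:ℝ)..1, ‖v t‖ ^ 2) ≤
      ∫ t in (0:ℝ)..1, (‖deriv v t‖ ^ 2 + (p - b * t) ^ 2 * ‖v t‖ ^ 2) := by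
  have hs : 0 < √b := Real.sqrt_pos.mpr hb
  have hsq := Real.sq_sqrt hb.le
  set q := √b
  have hd : ∀ t, deriv (fun t => v (t / q)) t = (q⁻¹ : ℝ) • deriv v (t / q) := fun t => by
    have h1 := (hv.differentiable one_ne_zero (t / q)).hasDerivAt
    have h2 : HasDerivAt (fun t : ℝ => t / q) (1 / q) t := (hasDerivAt_id t).div_const q
    have := (h1.scomp t h2).deriv
    simpa [Function.comp_def] using this
  have e1 : ∫ t in (0:ℝ)..q, ‖v (t / q)‖ ^ 2 = q * ∫ t in (0:ℝ)..1, ‖v t‖ ^ 2 := by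
    have := intervalIntegral.integral_comp_div (a := 0) (b := q) (fun t => ‖v t‖ ^ 2) hs.ne'
    simpa [div_self hs.ne'] using this
  have e2 : ∫ t in (0:ℝ)..q, (‖deriv (fun t => v (t / q)) t‖ ^ 2 + (t - p / q) ^ 2 * ‖v (t / q)‖ ^ 2)
      = q * (b⁻¹ * ∫ t in (0:ℝ)..1, (‖deriv v t‖ ^ 2 + (p - b * t) ^ 2 * ‖v t‖ ^ 2)) := by
    have := intervalIntegral.integral_comp_div (a := 0) (b := q)
      (fun t => b⁻¹ * (‖deriv v t‖ ^ 2 + (p - b * t) ^ 2 * ‖v t‖ ^ 2)) hs.ne'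
    simp only [zero_div, div_self hs.ne', intervalIntegral.integral_const_mul, smul_eq_mul] at this
    rw [← this, ← intervalIntegral.integral_const_mul]
    congr 1; ext t
    rw [hd, norm_smul, mul_pow, Real.norm_eq_abs, sq_abs, ← hsq]
    field_simp
    ring
  rw [e1, e2] at hK
  have : K * (∫ t in (0:ℝ)..1, ‖v t‖ ^ 2) ≤ b⁻¹ * ∫ t in (0:ℝ)..1, (‖deriv v t‖ ^ 2 + (p - b * t) ^ 2 * ‖v t‖ ^ 2) := by
    apply le_of_mul_le_mul_left _ hs
    linarith
  have := mul_le_mul_of_nonneg_left this hb.le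
  rw [← mul_assoc, ← mul_assoc, mul_inv_cancel₀ hb.ne', one_mul] at this
  exact this

lemma scaled_gap {b : ℝ} (hb : 1 ≤ b) (p : ℝ) (v : ℝ → ℂ) (hv : ContDiff ℝ 1 v)
    (h : ∀ t, 1 ≤ t → v t = 0) :
    b * (Theta0 + (1 - Theta0) / 17 * min ((p / √b - √Theta0) ^ 2) 1) * (∫ t in (0:ℝ)..1, ‖v t‖ ^ 2) ≤
      ∫ t in (0:ℝ)..1, (‖deriv v t‖ ^ 2 + (p - b * t) ^ 2 * ‖v t‖ ^ 2) := by
  have h1 : 1 ≤ √b := Real.one_le_sqrt.mpr hb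
  refine scaled_aux (L := 1) (by linarith) p _ v hv ?_
  refine gap_1d (p / √b) h1 (fun t => v (t / √b)) (hv.comp (by fun_prop)) ?_
  intro t ht
  exact h _ (by rw [le_div_iff₀ (by linarith)]; linarith)

lemma scaled_theta {b : ℝ} (hb : 0 ≤ b) (p : ℝ) (v : ℝ → ℂ) (hv : ContDiff ℝ 1 v)
    (h : ∀ t, 1 ≤ t → v t = 0) :
    b * Theta0 * (∫ t in (0:ℝ)..1, ‖v t‖ ^ 2) ≤
      ∫ t in (0:ℝ)..1, (‖deriv v t‖ ^ 2 + (p - b * t) ^ 2 * ‖v t‖ ^ 2) := by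
  rcases hb.eq_or_lt with rfl | hb
  · simp only [zero_mul]
    exact intervalIntegral.integral_nonneg zero_le_one (fun t _ => by positivity)
  have h1 : 0 < √b := Real.sqrt_pos.mpr hb
  refine scaled_aux (L := 1) hb p _ v hv ?_
  refine theta_q (p / √b) h1.le (fun t => v (t / √b)) (hv.comp (by fun_prop)) ?_
  intro t ht
  exact h _ (by rw [le_div_iff₀ h1]; linarith)

abbrev eb (j : Fin 3) : E3 := EuclideanSpace.single j 1

lemma fderiv_normsq (x : E3) : HasFDerivAt (fun x : E3 => 1 - ‖x‖ ^ 2) (-(2 • (innerSL ℝ x))) x := by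
  have := (hasStrictFDerivAt_norm_sq x).hasFDerivAt
  exact this.const_sub 1

lemma st_deriv_zero {t : ℝ} (h : t < 0 ∨ 1 < t) : deriv Real.smoothTransition t = 0 := by
  rcases h with h | h
  · have : Real.smoothTransition =ᶠ[𝓝 t] fun _ => 0 := by
      filter_upwards [Iio_mem_nhds h] with s hs
      exact Real.smoothTransition.zero_of_nonpos (le_of_lt hs)
    rw [this.deriv_eq]; simp
  · have : Real.smoothTransition =ᶠ[𝓝 t] fun _ => 1 := by
      filter_upwards [Ioi_mem_nhds h] with s hs
      exact Real.smoothTransition.one_of_one_le (le_of_lt hs)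
    rw [this.deriv_eq]; simp

lemma st_deriv_bdd : ∃ M, 0 ≤ M ∧ ∀ t, |deriv Real.smoothTransition t| ≤ M := by
  have hc : Continuous (deriv Real.smoothTransition) :=
    (Real.smoothTransition.contDiff (n := 1)).continuous_deriv le_rfl
  obtain ⟨M, hM⟩ := (isCompact_Icc (a := (0:ℝ)) (b := 1)).exists_bound_of_continuousOn hc.continuousOn
  refine ⟨max M 0, le_max_right _ _, fun t => ?_⟩
  by_cases h : t ∈ Icc (0:ℝ) 1
  · exact (hM t h).trans (le_max_left _ _)
  · rw [st_deriv_zero]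
    · simp
    · simp only [mem_Icc, not_and_or, not_le] at h; exact h

/-- cutoff -/
def cutf (N : ℝ) (x : E3) : ℝ := Real.smoothTransition (N * (1 - ‖x‖ ^ 2))

lemma cutf_hasFDeriv (N : ℝ) (x : E3) :
    HasFDerivAt (cutf N) ((deriv Real.smoothTransition (N * (1 - ‖x‖ ^ 2))) • (N • (-(2 • (innerSL ℝ x)) : E3 →L[ℝ] ℝ))) x := by
  have h1 := (fderiv_normsq x).const_mul N
  have h2 := ((Real.smoothTransition.contDiff (n := 1)).differentiable one_ne_zero (N * (1 - ‖x‖ ^ 2))).hasDerivAt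
  exact h2.comp_hasFDerivAt x h1

lemma cutf_contDiff (N : ℝ) : ContDiff ℝ 1 (cutf N) := by
  unfold cutf
  exact Real.smoothTransition.contDiff.comp (contDiff_const.mul (contDiff_const.sub (contDiff_norm_sq ℝ)))

lemma cutf_zero {N : ℝ} (hN : 0 ≤ N) {x : E3} (hx : 1 ≤ ‖x‖) : cutf N x = 0 := by
  apply Real.smoothTransition.zero_of_nonpos
  apply mul_nonpos_of_nonneg_of_nonpos hN
  nlinarith

lemma cutf_compact {N : ℝ} (hN : 0 ≤ N) : HasCompactSupport (cutf N) := by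
  apply HasCompactSupport.intro (isCompact_closedBall (0:E3) 1)
  intro x hx
  apply cutf_zero hN
  simp at hx; exact hx.le

lemma cont_int_ball {f : E3 → ℝ} (hf : Continuous f) : IntegrableOn f ball3 := by
  have : IntegrableOn f (Metric.closedBall (0:E3) 1) := hf.continuousOn.integrableOn_compact (isCompact_closedBall _ _)
  exact this.mono_set Metric.ball_subset_closedBall

lemma int_by_parts_cut {N : ℝ} (hN : 0 ≤ N) (f : E3 → ℝ) (hf : ContDiff ℝ 1 f) (v : E3) :
    ∫ x, cutf N x * fderiv ℝ f x v = - ∫ x, fderiv ℝ (cutf N) x v * f x := by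
  have hc := cutf_contDiff N
  have c1 := hc.continuous_fderiv one_ne_zero
  have c2 := hf.continuous_fderiv one_ne_zero
  have c3 := hc.continuous
  have c4 := hf.continuous
  have hs := cutf_compact hN
  apply integral_mul_fderiv_eq_neg_fderiv_mul_of_integrable
  · apply Continuous.integrable_of_hasCompactSupport (by fun_prop)
    have : HasCompactSupport (fun x => fderiv ℝ (cutf N) x v) := (hs.fderiv_apply ℝ v)
    exact this.mul_right
  · apply Continuous.integrable_of_hasCompactSupport (by fun_prop)
    exact hs.mul_right
  · apply Continuous.integrable_of_hasCompactSupport (by fun_prop)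
    exact hs.mul_right
  · exact fun x _ => hc.differentiable one_ne_zero x
  · exact fun x _ => hf.differentiable one_ne_zero x

lemma flux_bound (g : E3 → ℝ) (hg : ContDiff ℝ 1 g) (h0 : g 0 = 0)
    (h1 : ∀ x ∈ Metric.sphere (0:E3) 1, g x = 0) :
    ∃ K, 0 ≤ K ∧ ∀ x ∈ Metric.closedBall (0:E3) 1, |g x| ≤ K * (1 - ‖x‖) := by
  obtain ⟨K, hK⟩ := (isCompact_closedBall (0:E3) 1).exists_bound_of_continuousOn
    (hg.continuous_fderiv one_ne_zero).continuousOn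
  have hK0 : 0 ≤ K := (norm_nonneg _).trans (hK 0 (by simp))
  refine ⟨K, hK0, fun x hx => ?_⟩
  simp only [mem_closedBall_zero_iff] at hx
  by_cases hx0 : x = 0
  · rw [hx0, h0]; simp [hK0]
  have hn : 0 < ‖x‖ := norm_pos_iff.mpr hx0
  have hy : ‖(‖x‖⁻¹ • x)‖ = 1 := by rw [norm_smul, norm_inv, norm_norm, inv_mul_cancel₀ hn.ne']
  have := (convex_closedBall (0:E3) 1).norm_image_sub_le_of_norm_fderiv_le (𝕜 := ℝ) (f := g) (C := K)
    (x := ‖x‖⁻¹ • x) (y := x)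
    (fun x _ => hg.differentiable one_ne_zero x) (fun y hy => hK y hy) (by simp [hy]) (by simpa using hx)
  rw [h1 (‖x‖⁻¹ • x) (mem_sphere_zero_iff_norm.mpr hy), sub_zero] at this
  have e : x - ‖x‖⁻¹ • x = (1 - ‖x‖⁻¹) • x := by rw [sub_smul, one_smul]
  rw [e, norm_smul, Real.norm_eq_abs, Real.norm_eq_abs] at this
  have hi : 1 ≤ ‖x‖⁻¹ := (one_le_inv₀ hn).mpr hx
  rw [abs_of_nonpos (by linarith : 1 - ‖x‖⁻¹ ≤ 0), neg_sub, sub_mul, inv_mul_cancel₀ hn.ne', one_mul] at this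
  exact this

lemma inner_eb (x : E3) (j : Fin 3) : inner ℝ x (eb j) = x j := by
  simp [eb, EuclideanSpace.inner_single_right]

lemma div_ball3 (F : Fin 3 → E3 → ℝ) (hF : ∀ j, ContDiff ℝ 1 (F j))
    (hT : ∀ x ∈ Metric.sphere (0:E3) 1, ∑ j, x j * F j x = 0) :
    ∫ x in ball3, ∑ j, fderiv ℝ (F j) x (eb j) = 0 := by
  have hFc := fun j => (hF j).continuous
  have hFc' := fun j => (hF j).continuous_fderiv one_ne_zero
  have hgC : ContDiff ℝ 1 (fun x : E3 => ∑ j, x j * F j x) := by fun_prop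
  obtain ⟨K, hK0, hK⟩ := flux_bound _ hgC (by simp) hT
  obtain ⟨M, hM0, hM⟩ := st_deriv_bdd
  set g : E3 → ℝ := fun x => ∑ j, x j * F j x with hg
  let N : ℕ → ℝ := fun n => n + 1
  have hN : ∀ n, 0 < N n := fun n => by positivity
  have hNt : Tendsto N atTop atTop := tendsto_atTop_add_const_right _ _ tendsto_natCast_atTop_atTop
  have key : ∀ n, ∫ x in ball3, cutf (N n) x * ∑ j, fderiv ℝ (F j) x (eb j) =
      ∫ x in ball3, 2 * N n * deriv Real.smoothTransition (N n * (1 - ‖x‖ ^ 2)) * g x := by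
    intro n
    have e1 : ∫ x in ball3, cutf (N n) x * ∑ j, fderiv ℝ (F j) x (eb j) =
        ∫ x, cutf (N n) x * ∑ j, fderiv ℝ (F j) x (eb j) := by
      apply setIntegral_eq_integral_of_forall_compl_eq_zero
      intro x hx
      rw [cutf_zero (hN n).le, zero_mul]
      simpa [ball3] using hx
    have e2 : ∫ x in ball3, 2 * N n * deriv Real.smoothTransition (N n * (1 - ‖x‖ ^ 2)) * g x =
        ∫ x, 2 * N n * deriv Real.smoothTransition (N n * (1 - ‖x‖ ^ 2)) * g x := by
      apply setIntegral_eq_integral_of_forall_compl_eq_zero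
      intro x hx
      have hx : 1 ≤ ‖x‖ := by simpa [ball3] using hx
      rcases hx.eq_or_lt with h | h
      · rw [show g x = 0 from hT x (by simpa using h.symm)]; simp
      · rw [st_deriv_zero (Or.inl _)]; · simp
        apply mul_neg_of_pos_of_neg (hN n); nlinarith
    rw [e1, e2]
    have hc := cutf_contDiff (N n)
    have c1 := hc.continuous_fderiv one_ne_zero
    have c3 := hc.continuous
    have hs := cutf_compact (hN n).le
    simp_rw [Finset.mul_sum]
    rw [integral_finsetSum]
    · simp_rw [int_by_parts_cut (hN n).le (F _) (hF _)]
      rw [Finset.sum_neg_distrib, ← integral_finsetSum, ← integral_neg]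
      · congr 1; ext x
        simp only [(cutf_hasFDeriv (N n) x).fderiv, hg]
        rw [Finset.mul_sum, ← Finset.sum_neg_distrib]
        apply Finset.sum_congr rfl
        intro j _
        simp only [_root_.smul_apply, _root_.neg_apply, innerSL_apply_apply, inner_eb, smul_eq_mul]
        simp only [nsmul_eq_mul]
        push_cast; ring
      · intro j _
        apply Continuous.integrable_of_hasCompactSupport (by fun_prop)
        have : HasCompactSupport (fun x => fderiv ℝ (cutf (N n)) x (eb j)) := (hs.fderiv_apply ℝ _)
        exact this.mul_right
    · intro j _
      apply Continuous.integrable_of_hasCompactSupport (by fun_prop)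
      exact hs.mul_right
  have hsd : Continuous (deriv Real.smoothTransition) :=
    (Real.smoothTransition.contDiff (n := 1)).continuous_deriv le_rfl
  have cdiv : Continuous fun x => ∑ j, fderiv ℝ (F j) x (eb j) := by fun_prop
  have cg : Continuous g := hgC.continuous
  have hmb : MeasurableSet ball3 := measurableSet_ball
  have hbig : ∀ x ∈ ball3, ∀ᶠ n in atTop, 1 < N n * (1 - ‖x‖ ^ 2) := by
    intro x hx
    have hx : ‖x‖ < 1 := by simpa [ball3] using hx
    have : 0 < 1 - ‖x‖ ^ 2 := by nlinarith [norm_nonneg x]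
    exact (hNt.atTop_mul_const this).eventually_gt_atTop 1
  have L1 : Tendsto (fun n => ∫ x in ball3, cutf (N n) x * ∑ j, fderiv ℝ (F j) x (eb j)) atTop
      (𝓝 (∫ x in ball3, ∑ j, fderiv ℝ (F j) x (eb j))) := by
    apply tendsto_integral_of_dominated_convergence (fun x => |∑ j, fderiv ℝ (F j) x (eb j)|)
    · intro n
      have c3 := (cutf_contDiff (N n)).continuous
      exact (by fun_prop : Continuous _).aestronglyMeasurable
    · exact cont_int_ball cdiv.abs
    · intro n
      filter_upwards with x
      rw [norm_mul, Real.norm_eq_abs, Real.norm_eq_abs]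
      have : |cutf (N n) x| ≤ 1 := by
        rw [cutf, abs_of_nonneg (Real.smoothTransition.nonneg _)]; exact Real.smoothTransition.le_one _
      nlinarith [abs_nonneg (∑ j, fderiv ℝ (F j) x (eb j))]
    · rw [ae_restrict_iff' hmb]
      filter_upwards with x hx
      apply tendsto_const_nhds.congr'
      filter_upwards [hbig x hx] with n hn
      rw [cutf, Real.smoothTransition.one_of_one_le hn.le, one_mul]
  have L2 : Tendsto (fun n => ∫ x in ball3, 2 * N n * deriv Real.smoothTransition (N n * (1 - ‖x‖ ^ 2)) * g x) atTop
      (𝓝 (∫ x in ball3, (0:ℝ))) := by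
    apply tendsto_integral_of_dominated_convergence (fun x => 2 * M * K)
    · intro n
      exact (by fun_prop : Continuous _).aestronglyMeasurable
    · exact cont_int_ball continuous_const
    · intro n
      rw [ae_restrict_iff' hmb]
      filter_upwards with x hx
      have hx1 : ‖x‖ < 1 := by simpa [ball3] using hx
      have hg1 := hK x (Metric.ball_subset_closedBall hx)
      by_cases h : 1 < N n * (1 - ‖x‖ ^ 2)
      · rw [st_deriv_zero (Or.inr h)]; simp; positivity
      · push Not at h
        rw [norm_mul, norm_mul, norm_mul, Real.norm_eq_abs, Real.norm_eq_abs, Real.norm_eq_abs, Real.norm_eq_abs,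
          abs_of_pos (hN n), abs_of_pos (by norm_num : (0:ℝ) < 2)]
        have h2 : N n * |g x| ≤ K := by
          have : N n * (1 - ‖x‖) ≤ 1 := by
            refine le_trans (mul_le_mul_of_nonneg_left ?_ (hN n).le) h
            nlinarith [norm_nonneg x]
          nlinarith [mul_le_mul_of_nonneg_left hg1 (hN n).le, mul_le_mul_of_nonneg_left this hK0]
        have h3 := mul_le_mul (hM (N n * (1 - ‖x‖ ^ 2))) h2 (by have := hN n; positivity) hM0
        linarith
    · rw [ae_restrict_iff' hmb]
      filter_upwards with x hx
      apply tendsto_const_nhds.congr'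
      filter_upwards [hbig x hx] with n hn
      rw [st_deriv_zero (Or.inr hn)]; simp
  simp_rw [key] at L1
  have := tendsto_nhds_unique L1 L2
  simpa using this

/-- partial derivative -/
def pd (j : Fin 3) (f : E3 → ℝ) (x : E3) : ℝ := fderiv ℝ f x (eb j)

lemma pd_mul (j : Fin 3) {f g : E3 → ℝ} {x : E3} (hf : DifferentiableAt ℝ f x) (hg : DifferentiableAt ℝ g x) :
    pd j (fun x => f x * g x) x = pd j f x * g x + f x * pd j g x := by
  simp only [pd]; rw [fderiv_fun_mul hf hg]
  simp only [_root_.add_apply, _root_.smul_apply, smul_eq_mul]; ring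

lemma pd_add (j : Fin 3) {f g : E3 → ℝ} {x : E3} (hf : DifferentiableAt ℝ f x) (hg : DifferentiableAt ℝ g x) :
    pd j (fun x => f x + g x) x = pd j f x + pd j g x := by
  simp only [pd]; rw [fderiv_fun_add hf hg]; rfl

lemma pd_sub (j : Fin 3) {f g : E3 → ℝ} {x : E3} (hf : DifferentiableAt ℝ f x) (hg : DifferentiableAt ℝ g x) :
    pd j (fun x => f x - g x) x = pd j f x - pd j g x := by
  simp only [pd]; rw [fderiv_fun_sub hf hg]; rfl

lemma pd_neg (j : Fin 3) {f : E3 → ℝ} {x : E3} :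
    pd j (fun x => - f x) x = - pd j f x := by
  simp only [pd]; rw [fderiv_fun_neg]; rfl

lemma pd_const (j : Fin 3) (c : ℝ) (x : E3) : pd j (fun _ => c) x = 0 := by
  simp [pd]

lemma pd_const_mul (j : Fin 3) (c : ℝ) {f : E3 → ℝ} {x : E3} (hf : DifferentiableAt ℝ f x) :
    pd j (fun x => c * f x) x = c * pd j f x := by
  rw [pd_mul j (by fun_prop) hf, pd_const]; ring

lemma pd_coord (j i : Fin 3) (x : E3) : pd j (fun x : E3 => x i) x = if i = j then 1 else 0 := by
  have : HasFDerivAt (fun x : E3 => x i) (EuclideanSpace.proj i : E3 →L[ℝ] ℝ) x :=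
    (EuclideanSpace.proj i : E3 →L[ℝ] ℝ).hasFDerivAt
  rw [pd, this.fderiv]; simp [eb, Pi.single_apply]

lemma pd_comp (j : Fin 3) {h : ℝ → ℝ} {h' : ℝ} {f : E3 → ℝ} {x : E3} (hf : DifferentiableAt ℝ f x) (hh : HasDerivAt h h' (f x)) :
    pd j (fun x => h (f x)) x = h' * pd j f x := by
  have := hh.comp_hasFDerivAt x hf.hasFDerivAt
  simp only [pd]
  rw [show (fun x => h (f x)) = h ∘ f from rfl, this.fderiv]; simp

lemma pd_re (j : Fin 3) {u : E3 → ℂ} {x : E3} (hu : DifferentiableAt ℝ u x) :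
    pd j (fun x => (u x).re) x = (fderiv ℝ u x (eb j)).re := by
  have := Complex.reCLM.hasFDerivAt.comp x hu.hasFDerivAt
  rw [pd, show (fun x => (u x).re) = Complex.reCLM ∘ u from rfl, this.fderiv]; simp

lemma pd_im (j : Fin 3) {u : E3 → ℂ} {x : E3} (hu : DifferentiableAt ℝ u x) :
    pd j (fun x => (u x).im) x = (fderiv ℝ u x (eb j)).im := by
  have := Complex.imCLM.hasFDerivAt.comp x hu.hasFDerivAt
  rw [pd, show (fun x => (u x).im) = Complex.imCLM ∘ u from rfl, this.fderiv]; simp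

lemma pd_contDiff (j : Fin 3) {f : E3 → ℝ} (hf : ContDiff ℝ 2 f) : ContDiff ℝ 1 (pd j f) := by
  have : ContDiff ℝ 1 (fderiv ℝ f) := hf.fderiv_right (by norm_num)
  unfold pd; fun_prop

lemma pd_comm (i j : Fin 3) {f : E3 → ℝ} (hf : ContDiff ℝ 2 f) (x : E3) :
    pd i (pd j f) x = pd j (pd i f) x := by
  have hs : IsSymmSndFDerivAt ℝ f x := hf.contDiffAt.isSymmSndFDerivAt (by simp)
  have hd : DifferentiableAt ℝ (fderiv ℝ f) x :=
    ((hf.fderiv_right (m := 1) (by norm_num)).differentiable one_ne_zero) x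
  have e : ∀ k l : Fin 3, pd k (pd l f) x = fderiv ℝ (fderiv ℝ f) x (eb k) (eb l) := by
    intro k l
    have := hd.hasFDerivAt.clm_apply (hasFDerivAt_const (eb l) x)
    have h2 : pd k (pd l f) x = fderiv ℝ (fun y => fderiv ℝ f y (eb l)) x (eb k) := rfl
    rw [h2, this.fderiv]; simp
  rw [e, e]; exact hs _ _

lemma contDiff_re {n : WithTop ℕ∞} {u : E3 → ℂ} (hu : ContDiff ℝ n u) : ContDiff ℝ n (fun x => (u x).re) :=
  Complex.reCLM.contDiff.comp hu
lemma contDiff_im {n : WithTop ℕ∞} {u : E3 → ℂ} (hu : ContDiff ℝ n u) : ContDiff ℝ n (fun x => (u x).im) :=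
  Complex.imCLM.contDiff.comp hu

lemma magD_re (B : ℝ) {u : E3 → ℂ} {x : E3} (hu : DifferentiableAt ℝ u x) (j : Fin 3) :
    (magD B u j x).re = pd j (fun x => (u x).im) x + Avec B x j * (u x).re := by
  rw [pd_im j hu]; simp [magD, eb]
lemma magD_im (B : ℝ) {u : E3 → ℂ} {x : E3} (hu : DifferentiableAt ℝ u x) (j : Fin 3) :
    (magD B u j x).im = - pd j (fun x => (u x).re) x + Avec B x j * (u x).im := by
  rw [pd_re j hu]; simp [magD, eb]

lemma Avec_contDiff (B : ℝ) (j : Fin 3) : ContDiff ℝ 2 (fun x => Avec B x j) := by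
  fin_cases j <;> simp [Avec] <;> fun_prop

lemma magD_contDiff (B : ℝ) {u : E3 → ℂ} (hu : ContDiff ℝ 2 u) (j : Fin 3) : ContDiff ℝ 1 (magD B u j) := by
  have h1 : ContDiff ℝ 1 (fderiv ℝ u) := hu.fderiv_right (by norm_num)
  have h2 : ContDiff ℝ 1 (fun x => (Avec B x j : ℂ)) := Complex.ofRealCLM.contDiff.comp ((Avec_contDiff B j).of_le (by norm_num))
  have h3 : ContDiff ℝ 1 u := hu.of_le (by norm_num)
  have h4 : ContDiff ℝ 1 (fun x => fderiv ℝ u x (EuclideanSpace.single j 1)) := by fun_prop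
  unfold magD
  exact (contDiff_const.mul h4).add (h2.mul h3)

lemma magD_continuous (B : ℝ) {u : E3 → ℂ} (hu : ContDiff ℝ 1 u) (j : Fin 3) : Continuous (magD B u j) := by
  have h1 : Continuous (fderiv ℝ u) := hu.continuous_fderiv one_ne_zero
  have h2 : Continuous (fun x => (Avec B x j : ℂ)) := Complex.continuous_ofReal.comp (Avec_contDiff B j).continuous
  have h3 := hu.continuous
  have h4 : Continuous (fun x => fderiv ℝ u x (EuclideanSpace.single j 1)) := by fun_prop
  unfold magD
  exact (continuous_const.mul h4).add (h2.mul h3)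

lemma mag_continuous (B : ℝ) {u : E3 → ℂ} (hu : ContDiff ℝ 1 u) : Continuous (magEnergyDensity B u) := by
  have := fun j => magD_continuous B hu j
  unfold magEnergyDensity; fun_prop

lemma mag_eq (B : ℝ) (u : E3 → ℂ) (x : E3) : magEnergyDensity B u x =
    ∑ j, ((magD B u j x).re ^ 2 + (magD B u j x).im ^ 2) := by
  unfold magEnergyDensity
  apply Finset.sum_congr rfl; intro j _
  rw [Complex.sq_norm, Complex.normSq_apply]; ring

lemma normsq_eq (z : ℂ) : ‖z‖ ^ 2 = z.re ^ 2 + z.im ^ 2 := by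
  rw [Complex.sq_norm, Complex.normSq_apply]; ring

/-- energy of a product with a real function -/
lemma magD_smul (B : ℝ) {u : E3 → ℂ} {Φ : E3 → ℝ} (x : E3) (hu : DifferentiableAt ℝ u x) (hΦ : DifferentiableAt ℝ Φ x)
    (j : Fin 3) : magD B (fun x => (Φ x : ℂ) * u x) j x = Φ x * magD B u j x - Complex.I * (pd j Φ x : ℂ) * u x := by
  have h1 : HasFDerivAt (fun x => (Φ x : ℂ)) (Complex.ofRealCLM.comp (fderiv ℝ Φ x)) x :=
    Complex.ofRealCLM.hasFDerivAt.comp x hΦ.hasFDerivAt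
  have h2 := h1.mul hu.hasFDerivAt
  unfold magD
  rw [show (fun x => (Φ x : ℂ) * u x) = (fun x => (Φ x : ℂ)) * u from rfl, h2.fderiv]
  simp [pd, eb]
  ring

lemma Agmon {B lam : ℝ} {Ψ : E3 → ℂ} (hΨ : IsNeumannEigenfunction B lam Ψ) {Φ : E3 → ℝ} (hΦ : ContDiff ℝ 1 Φ) :
    ∫ x in ball3, magEnergyDensity B (fun x => (Φ x : ℂ) * Ψ x) x =
    ∫ x in ball3, (lam * Φ x ^ 2 + ∑ j, pd j Φ x ^ 2) * ‖Ψ x‖ ^ 2 := by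
  obtain ⟨hC, -, heq, hN⟩ := hΨ
  have hd : Differentiable ℝ Ψ := hC.differentiable two_ne_zero
  have hΦd : Differentiable ℝ Φ := hΦ.differentiable one_ne_zero
  have hmC := fun j => magD_contDiff B hC j
  have hmd : ∀ j, Differentiable ℝ (magD B Ψ j) := fun j => (hmC j).differentiable one_ne_zero
  have hC1 : ContDiff ℝ 1 Ψ := hC.of_le (by norm_num)
  have c1 := contDiff_re hC1
  have c2 := contDiff_im hC1
  have c3 := fun j => contDiff_re (hmC j)
  have c4 := fun j => contDiff_im (hmC j)
  have d1 := fun x => c1.differentiable one_ne_zero x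
  have d2 := fun x => c2.differentiable one_ne_zero x
  have d3 := fun j x => (c3 j).differentiable one_ne_zero x
  have d4 := fun j x => (c4 j).differentiable one_ne_zero x
  let F : Fin 3 → E3 → ℝ := fun j x => (Φ x * Φ x) * ((Ψ x).re * (magD B Ψ j x).im - (Ψ x).im * (magD B Ψ j x).re)
  have key := div_ball3 F (fun j => by have := c3 j; have := c4 j; fun_prop) (by
    intro x hx
    have h := hN x hx
    have h1 := congrArg Complex.re h
    have h2 := congrArg Complex.im h
    simp [Fin.sum_univ_three] at h1 h2
    simp only [F, Fin.sum_univ_three]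
    linear_combination (Φ x * Φ x) * (-(Ψ x).re * h2 + (Ψ x).im * h1))
  have hint : ∫ x in ball3, (magEnergyDensity B (fun x => (Φ x : ℂ) * Ψ x) x + ∑ j, fderiv ℝ (F j) x (eb j)) =
      ∫ x in ball3, (lam * Φ x ^ 2 + ∑ j, pd j Φ x ^ 2) * ‖Ψ x‖ ^ 2 := by
    apply setIntegral_congr_fun measurableSet_ball
    intro x hx
    have h := heq x hx
    have h1 := congrArg Complex.re h
    have h2 := congrArg Complex.im h
    have hF : ∀ j, fderiv ℝ (F j) x (eb j) = (pd j Φ x * Φ x + Φ x * pd j Φ x) * ((Ψ x).re * (magD B Ψ j x).im - (Ψ x).im * (magD B Ψ j x).re)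
      + Φ x * Φ x * ((pd j (fun x => (Ψ x).re) x * (magD B Ψ j x).im + (Ψ x).re * pd j (fun x => (magD B Ψ j x).im) x) -
        (pd j (fun x => (Ψ x).im) x * (magD B Ψ j x).re + (Ψ x).im * pd j (fun x => (magD B Ψ j x).re) x)) := by
      intro j
      have e : fderiv ℝ (F j) x (eb j) = pd j (F j) x := rfl
      have := d3 j x; have := d4 j x; have := d1 x; have := d2 x; have := hΦd x
      rw [e, pd_mul, pd_mul, pd_sub, pd_mul, pd_mul] <;> fun_prop
    simp only [magLap, Fin.sum_univ_three] at h1 h2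
    have r : ∀ j, (fderiv ℝ (magD B Ψ j) x (EuclideanSpace.single j 1)).re = pd j (fun x => (magD B Ψ j x).re) x :=
      fun j => (pd_re j (hmd j x)).symm
    have i : ∀ j, (fderiv ℝ (magD B Ψ j) x (EuclideanSpace.single j 1)).im = pd j (fun x => (magD B Ψ j x).im) x :=
      fun j => (pd_im j (hmd j x)).symm
    simp only [Complex.add_re, Complex.mul_re, Complex.neg_re, Complex.I_re, Complex.neg_im, Complex.I_im,
      Complex.ofReal_re, Complex.ofReal_im, r, i, Complex.add_im, Complex.mul_im] at h1 h2
    simp only [mag_eq, hF, magD_smul B x (hd x) (hΦd x), Fin.sum_univ_three]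
    have q1 := fun j => magD_re B (hd x) j
    have q2 := fun j => magD_im B (hd x) j
    have p1 : ∀ j, pd j (fun x => (Ψ x).im) x = (magD B Ψ j x).re - Avec B x j * (Ψ x).re := fun j => by linarith [q1 j]
    have p2 : ∀ j, pd j (fun x => (Ψ x).re) x = -(magD B Ψ j x).im + Avec B x j * (Ψ x).im := fun j => by linarith [q2 j]
    rw [normsq_eq]
    simp only [p1, p2, Complex.sub_re, Complex.mul_re, Complex.I_re, Complex.I_im,
      Complex.ofReal_re, Complex.ofReal_im, Complex.sub_im, Complex.mul_im]
    linear_combination (Φ x * Φ x) * ((Ψ x).re * h1 + (Ψ x).im * h2)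
  rw [integral_add, key, add_zero] at hint
  · exact hint
  · apply cont_int_ball
    apply mag_continuous
    exact (Complex.ofRealCLM.contDiff.comp hΦ).mul hC1
  · apply cont_int_ball
    have : ∀ j, Continuous (fderiv ℝ (F j)) := fun j => ContDiff.continuous_fderiv (n := 1) (by have := c3 j; have := c4 j; fun_prop) one_ne_zero
    fun_prop

lemma ball_nonneg_add {f k : E3 → ℝ} (hf : Continuous f) (hk : Continuous k) (key : ∫ x in ball3, k x = 0)
    (h : ∀ x ∈ ball3, 0 ≤ f x + k x) : 0 ≤ ∫ x in ball3, f x := by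
  have : ∫ x in ball3, (f x + k x) = ∫ x in ball3, f x := by
    rw [integral_add (cont_int_ball hf) (cont_int_ball hk), key, add_zero]
  rw [← this]
  exact setIntegral_nonneg measurableSet_ball h

/-- current -/
def Jc (B : ℝ) (u : E3 → ℂ) (j : Fin 3) (x : E3) : ℝ :=
  (u x).re * pd j (fun x => (u x).im) x - (u x).im * pd j (fun x => (u x).re) x +
    Avec B x j * ((u x).re * (u x).re + (u x).im * (u x).im)

lemma Jc_eq (B : ℝ) {u : E3 → ℂ} {x : E3} (hu : DifferentiableAt ℝ u x) (j : Fin 3) :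
    Jc B u j x = (u x).re * (magD B u j x).re + (u x).im * (magD B u j x).im := by
  rw [magD_re B hu, magD_im B hu, Jc]; ring

lemma Jc_contDiff (B : ℝ) {u : E3 → ℂ} (hu : ContDiff ℝ 2 u) (j : Fin 3) : ContDiff ℝ 1 (Jc B u j) := by
  have h1 := pd_contDiff j (contDiff_re hu)
  have h2 := pd_contDiff j (contDiff_im hu)
  have h3 := (contDiff_re hu).of_le (m := 1) (by norm_num)
  have h4 := (contDiff_im hu).of_le (m := 1) (by norm_num)
  have h5 := (Avec_contDiff B j).of_le (m := 1) (by norm_num)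
  unfold Jc; fun_prop

lemma pd_Jc (B : ℝ) {u : E3 → ℂ} (hu : ContDiff ℝ 2 u) (k j : Fin 3) (x : E3) :
    pd k (Jc B u j) x = (pd k (fun x => (u x).re) x * pd j (fun x => (u x).im) x + (u x).re * pd k (pd j (fun x => (u x).im)) x)
     - (pd k (fun x => (u x).im) x * pd j (fun x => (u x).re) x + (u x).im * pd k (pd j (fun x => (u x).re)) x)
     + (pd k (fun x => Avec B x j) x * ((u x).re * (u x).re + (u x).im * (u x).im) +
       Avec B x j * (2 * (u x).re * pd k (fun x => (u x).re) x + 2 * (u x).im * pd k (fun x => (u x).im) x)) := by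
  have h1 := (pd_contDiff j (contDiff_re hu)).differentiable one_ne_zero x
  have h2 := (pd_contDiff j (contDiff_im hu)).differentiable one_ne_zero x
  have h3 := (contDiff_re hu).differentiable two_ne_zero x
  have h4 := (contDiff_im hu).differentiable two_ne_zero x
  have h5 := (Avec_contDiff B j).differentiable two_ne_zero x
  have e : pd k (Jc B u j) x = pd k (fun x => ((u x).re * pd j (fun x => (u x).im) x - (u x).im * pd j (fun x => (u x).re) x) +
    Avec B x j * ((u x).re * (u x).re + (u x).im * (u x).im)) x := rfl
  rw [e, pd_add, pd_sub, pd_mul, pd_mul, pd_mul, pd_add, pd_mul, pd_mul]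
  · ring
  all_goals fun_prop

lemma pd_A0 (B : ℝ) (k : Fin 3) (x : E3) : pd k (fun x => Avec B x 0) x = if k = 1 then -(B/2) else 0 := by
  have : (fun x : E3 => Avec B x 0) = fun x => -(B/2) * x 1 := by ext x; simp [Avec]
  rw [this, pd_const_mul _ _ (by fun_prop), pd_coord]
  fin_cases k <;> simp
lemma pd_A1 (B : ℝ) (k : Fin 3) (x : E3) : pd k (fun x => Avec B x 1) x = if k = 0 then (B/2) else 0 := by
  have : (fun x : E3 => Avec B x 1) = fun x => (B/2) * x 0 := by ext x; simp [Avec]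
  rw [this, pd_const_mul _ _ (by fun_prop), pd_coord]
  fin_cases k <;> simp
lemma pd_A2 (B : ℝ) (k : Fin 3) (x : E3) : pd k (fun x => Avec B x 2) x = 0 := by
  have : (fun x : E3 => Avec B x 2) = fun x => 0 := by ext x; simp [Avec]
  rw [this, pd_const]

/-- cross product a x b of real and imaginary part -/
def crs (B : ℝ) (u : E3 → ℂ) (i j : Fin 3) (x : E3) : ℝ :=
  (magD B u i x).re * (magD B u j x).im - (magD B u j x).re * (magD B u i x).im

lemma curl01 (B : ℝ) {u : E3 → ℂ} (hu : ContDiff ℝ 2 u) (x : E3) :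
    pd 0 (Jc B u 1) x - pd 1 (Jc B u 0) x = B * ‖u x‖ ^ 2 + 2 * crs B u 0 1 x := by
  have hd : DifferentiableAt ℝ u x := hu.differentiable two_ne_zero x
  rw [pd_Jc B hu, pd_Jc B hu, pd_A0, pd_A1, pd_comm 1 0 (contDiff_re hu), pd_comm 1 0 (contDiff_im hu), crs, normsq_eq]
  simp only [magD_re B hd, magD_im B hd]
  simp; ring
lemma curl12 (B : ℝ) {u : E3 → ℂ} (hu : ContDiff ℝ 2 u) (x : E3) :
    pd 1 (Jc B u 2) x - pd 2 (Jc B u 1) x = 2 * crs B u 1 2 x := by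
  have hd : DifferentiableAt ℝ u x := hu.differentiable two_ne_zero x
  rw [pd_Jc B hu, pd_Jc B hu, pd_A1, pd_A2, pd_comm 2 1 (contDiff_re hu), pd_comm 2 1 (contDiff_im hu), crs]
  simp only [magD_re B hd, magD_im B hd]
  simp; ring
lemma curl20 (B : ℝ) {u : E3 → ℂ} (hu : ContDiff ℝ 2 u) (x : E3) :
    pd 2 (Jc B u 0) x - pd 0 (Jc B u 2) x = 2 * crs B u 2 0 x := by
  have hd : DifferentiableAt ℝ u x := hu.differentiable two_ne_zero x
  rw [pd_Jc B hu, pd_Jc B hu, pd_A0, pd_A2, pd_comm 2 0 (contDiff_re hu), pd_comm 2 0 (contDiff_im hu), crs]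
  simp only [magD_re B hd, magD_im B hd]
  simp; ring

lemma crs_cont (B : ℝ) {u : E3 → ℂ} (hu : ContDiff ℝ 2 u) (i j : Fin 3) : Continuous (crs B u i j) := by
  have := fun j => (magD_contDiff B hu j).continuous
  have h1 := fun j => Complex.continuous_re.comp (this j)
  have h2 := fun j => Complex.continuous_im.comp (this j)
  simp only [Function.comp_def] at h1 h2
  unfold crs; fun_prop

lemma bulk (B : ℝ) {u : E3 → ℂ} (hu : ContDiff ℝ 2 u) (h0 : ∀ x ∈ Metric.sphere (0:E3) 1, u x = 0) :
    B * ∫ x in ball3, ‖u x‖ ^ 2 ≤ ∫ x in ball3, magEnergyDensity B u x := by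
  let F : Fin 3 → E3 → ℝ := ![Jc B u 1, fun x => - Jc B u 0 x, fun _ => 0]
  have hJ := fun j => Jc_contDiff B hu j
  have key := div_ball3 F (fun j => by
    have h0 := hJ 0; have h1 := hJ 1
    fin_cases j <;> simp [F] <;> fun_prop) (by
    intro x hx
    have hd : DifferentiableAt ℝ u x := hu.differentiable two_ne_zero x
    simp [F, Fin.sum_univ_three, Jc, h0 x hx])
  have e : ∀ x, ∑ j, fderiv ℝ (F j) x (eb j) = B * ‖u x‖ ^ 2 + 2 * crs B u 0 1 x := by
    intro x
    rw [← curl01 B hu x, Fin.sum_univ_three]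
    have : ∀ j, fderiv ℝ (F j) x (eb j) = pd j (F j) x := fun _ => rfl
    rw [this, this, this]
    simp only [F, Matrix.cons_val_zero, Matrix.cons_val_one, Matrix.cons_val]
    rw [pd_neg, pd_const]; simp only [sub_eq_add_neg, add_zero]
  simp_rw [e] at key
  have c1 := crs_cont B hu 0 1
  have c2 := hu.continuous
  have c3 := mag_continuous B (hu.of_le (by norm_num))
  rw [← integral_const_mul, ← sub_nonneg, ← integral_sub (cont_int_ball c3) (cont_int_ball (by fun_prop))]
  refine ball_nonneg_add (by fun_prop) (by fun_prop) key ?_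
  intro x _
  simp only [mag_eq, Fin.sum_univ_three, crs]
  nlinarith [sq_nonneg ((magD B u 0 x).re + (magD B u 1 x).im), sq_nonneg ((magD B u 1 x).re - (magD B u 0 x).im),
    sq_nonneg ((magD B u 2 x).re), sq_nonneg ((magD B u 2 x).im)]

/-- x · (a × b) -/
def xab (B : ℝ) (u : E3 → ℂ) (x : E3) : ℝ := x 0 * crs B u 1 2 x + x 1 * crs B u 2 0 x + x 2 * crs B u 0 1 x

lemma curl_ineq (B : ℝ) {u : E3 → ℂ} (hu : ContDiff ℝ 2 u) {δ : ℝ} (hδ : 0 < δ) :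
    B * ∫ x in ball3, x 2 ^ 2 * ‖u x‖ ^ 2 ≤ (∫ x in ball3, 2 * |x 2| * |xab B u x|) +
      (δ * ∫ x in ball3, ‖u x‖ ^ 2) + δ⁻¹ * ∫ x in ball3, magEnergyDensity B u x := by
  let F : Fin 3 → E3 → ℝ := ![fun x => (Jc B u 1 x * x 2 - Jc B u 2 x * x 1) * x 2,
    fun x => (Jc B u 2 x * x 0 - Jc B u 0 x * x 2) * x 2, fun x => (Jc B u 0 x * x 1 - Jc B u 1 x * x 0) * x 2]
  have hJ := fun j => Jc_contDiff B hu j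
  have key := div_ball3 F (fun j => by
    have h0 := hJ 0; have h1 := hJ 1; have h2 := hJ 2
    fin_cases j <;> simp [F] <;> fun_prop) (by
    intro x hx
    simp [F, Fin.sum_univ_three]; ring)
  have e : ∀ x, ∑ j, fderiv ℝ (F j) x (eb j) = x 2 * (x 2 * (B * ‖u x‖ ^ 2) + 2 * xab B u x) - (x 0 * Jc B u 1 x - x 1 * Jc B u 0 x) := by
    intro x
    have k1 := curl01 B hu x
    have k2 := curl12 B hu x
    have k3 := curl20 B hu x
    rw [Fin.sum_univ_three]
    have : ∀ j, fderiv ℝ (F j) x (eb j) = pd j (F j) x := fun _ => rfl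
    rw [this, this, this]
    simp only [F, Matrix.cons_val_zero, Matrix.cons_val_one, Matrix.cons_val]
    have d0 := (hJ 0).differentiable one_ne_zero x
    have d1 := (hJ 1).differentiable one_ne_zero x
    have d2 := (hJ 2).differentiable one_ne_zero x
    rw [pd_mul, pd_mul, pd_mul, pd_sub, pd_sub, pd_sub, pd_mul, pd_mul, pd_mul, pd_mul, pd_mul, pd_mul]
    · simp only [pd_coord, xab]
      simp
      linear_combination (x 2 * x 2) * k1 + (x 2 * x 0) * k2 + (x 2 * x 1) * k3
    all_goals fun_prop
  simp_rw [e] at key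
  have c1 := crs_cont B hu 0 1
  have c1' := crs_cont B hu 1 2
  have c1'' := crs_cont B hu 2 0
  have c2 := hu.continuous
  have c3 := mag_continuous B (hu.of_le (by norm_num))
  have c4 : Continuous (xab B u) := by unfold xab; fun_prop
  have c5 := fun j => (hJ j).continuous
  rw [← integral_const_mul, ← integral_const_mul, ← integral_const_mul, ← integral_add, ← integral_add, ← sub_nonneg, ← integral_sub]
  · refine ball_nonneg_add (by fun_prop) (by fun_prop) key ?_
    intro x hx
    have hx1 : ‖x‖ ≤ 1 := (mem_ball_zero_iff.mp hx).le
    have hx2 : x 0 ^ 2 + x 1 ^ 2 + x 2 ^ 2 ≤ 1 := by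
      have := EuclideanSpace.norm_sq_eq x
      simp [Fin.sum_univ_three] at this
      nlinarith [norm_nonneg x]
    have hd : DifferentiableAt ℝ u x := hu.differentiable two_ne_zero x
    simp only [Jc_eq B hd, mag_eq, Fin.sum_univ_three, normsq_eq]
    have h1 : -(x 2 * xab B u x) ≤ |x 2| * |xab B u x| := by rw [← abs_mul]; exact neg_le_abs _
    have h2 : ∀ p q r s : ℝ, r^2 ≤ 1 → 2 * (r * (p * q)) ≤ δ * p ^ 2 + δ⁻¹ * q ^ 2 := by
      intro p q r s hr
      have h3 : 0 ≤ (δ * r * p - q) ^ 2 * δ⁻¹ := by positivity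
      have h4 : (δ * r * p - q) ^ 2 * δ⁻¹ = δ * (r^2 * p^2) - 2 * (r * (p*q)) + δ⁻¹ * q^2 := by field_simp; ring
      have : δ * (r ^2 * p^2) ≤ δ * p^2 := mul_le_mul_of_nonneg_left (by nlinarith [sq_nonneg p]) hδ.le
      linarith
    have x0 : x 0 ^ 2 ≤ 1 := by nlinarith [sq_nonneg (x 1), sq_nonneg (x 2)]
    have x1 : (-x 1) ^ 2 ≤ 1 := by nlinarith [sq_nonneg (x 0), sq_nonneg (x 2)]
    have g1 := h2 (u x).re (magD B u 1 x).re (x 0) 0 x0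
    have g2 := h2 (u x).im (magD B u 1 x).im (x 0) 0 x0
    have g3 := h2 (u x).re (magD B u 0 x).re (-x 1) 0 x1
    have g4 := h2 (u x).im (magD B u 0 x).im (-x 1) 0 x1
    have g5 : 0 ≤ δ⁻¹ * ((magD B u 0 x).re ^ 2 + (magD B u 0 x).im ^ 2 + ((magD B u 1 x).re ^ 2 + (magD B u 1 x).im ^ 2) + 2 * ((magD B u 2 x).re ^ 2 + (magD B u 2 x).im ^ 2)) := by positivity
    linarith
  all_goals exact cont_int_ball (by fun_prop)

def Rv (x : E3) : E3 := (-x 1) • eb 0 + x 0 • eb 1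
def Tv (x : E3) : E3 := (-(x 2 * x 0)) • eb 0 + (-(x 2 * x 1)) • eb 1 + (x 0 ^ 2 + x 1 ^ 2) • eb 2
def rho2 (x : E3) : ℝ := x 0 ^ 2 + x 1 ^ 2
def magJ (B : ℝ) (u : E3 → ℂ) (x : E3) : ℂ := -Complex.I * fderiv ℝ u x (Rv x) + ((B / 2 * rho2 x : ℝ) : ℂ) * u x

lemma x_decomp (x : E3) : x = x 0 • eb 0 + x 1 • eb 1 + x 2 • eb 2 := by
  ext i; fin_cases i <;> simp [eb]

lemma norm_sq3 (x : E3) : ‖x‖ ^ 2 = x 0 ^ 2 + x 1 ^ 2 + x 2 ^ 2 := by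
  have := EuclideanSpace.norm_sq_eq x
  simpa [Fin.sum_univ_three] using this

lemma alg_ii (p q z a0 a1 a2 : ℝ) (h : p^2+q^2+z^2 ≤ 1) :
   (p*a0+q*a1+z*a2)^2 + (p*a1-q*a0)^2 + (-(z*p)*a0-(z*q)*a1+(p^2+q^2)*a2)^2 ≤ a0^2+a1^2+a2^2 := by
  rcases eq_or_ne (p^2+q^2) 0 with h0 | h0
  · have hp : p = 0 := by nlinarith [sq_nonneg p, sq_nonneg q]
    have hq : q = 0 := by nlinarith [sq_nonneg p, sq_nonneg q]
    subst hp; subst hq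
    have h' : z^2 ≤ 1 := by linarith
    have := mul_nonneg (sub_nonneg.mpr h') (sq_nonneg a2)
    have := sq_nonneg a0
    have := sq_nonneg a1
    linarith
  have h1 : 0 < p^2+q^2 := lt_of_le_of_ne (by positivity) h0.symm
  have h2 : 0 < p^2+q^2+z^2 := by positivity
  have h3 : p^2+q^2 ≤ 1 := by nlinarith [sq_nonneg z]
  have h4 : (p^2+q^2+z^2)*(p^2+q^2) ≤ 1 := by nlinarith
  have key : 0 ≤ (p^2+q^2+z^2)*(p^2+q^2) * ((a0^2+a1^2+a2^2) - ((p*a0+q*a1+z*a2)^2 + (p*a1-q*a0)^2 + (-(z*p)*a0-(z*q)*a1+(p^2+q^2)*a2)^2)) := by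
    have e : (p^2+q^2+z^2)*(p^2+q^2) * ((a0^2+a1^2+a2^2) - ((p*a0+q*a1+z*a2)^2 + (p*a1-q*a0)^2 + (-(z*p)*a0-(z*q)*a1+(p^2+q^2)*a2)^2)) =
      (p^2+q^2) * (1 - (p^2+q^2+z^2)) * (p*a0+q*a1+z*a2)^2 + (p^2+q^2+z^2) * (1 - (p^2+q^2)) * (p*a1-q*a0)^2 + (1 - (p^2+q^2+z^2)*(p^2+q^2)) * (-(z*p)*a0-(z*q)*a1+(p^2+q^2)*a2)^2 := by ring
    rw [e]
    have := sub_nonneg.mpr h; have := sub_nonneg.mpr h3; have := sub_nonneg.mpr h4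
    positivity
  have := nonneg_of_mul_nonneg_right key (by positivity)
  linarith

lemma alg_i_aux (s p q z a0 a1 a2 b0 b1 b2 : ℝ) (hs : s ^ 2 = 1) (h : p^2+q^2+z^2 ≤ 1) :
   (p*a0+q*a1+z*a2)^2 + (p*a1-q*a0)^2 + (p*b0+q*b1+z*b2)^2 + (p*b1-q*b0)^2
    + 2 * s * z * (p * (a1*b2-a2*b1) + q * (a2*b0-a0*b2) + z * (a0*b1-a1*b0)) ≤ a0^2+a1^2+a2^2 + (b0^2+b1^2+b2^2) := by
  rcases eq_or_ne (p^2+q^2) 0 with h0 | h0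
  · have hp : p = 0 := by nlinarith [sq_nonneg p, sq_nonneg q]
    have hq : q = 0 := by nlinarith [sq_nonneg p, sq_nonneg q]
    subst hp; subst hq
    have e : a0^2+a1^2+a2^2 + (b0^2+b1^2+b2^2) - ((0*a0+0*a1+z*a2)^2 + (0*a1-0*a0)^2 + (0*b0+0*b1+z*b2)^2 + (0*b1-0*b0)^2
       + 2 * s * z * (0 * (a1*b2-a2*b1) + 0 * (a2*b0-a0*b2) + z * (a0*b1-a1*b0))) =
       (1 - z^2) * (a0^2+a1^2+a2^2+b0^2+b1^2+b2^2) + z^2 * ((a0 - s * b1)^2 + (a1 + s * b0)^2 + (1 - s^2) * (b0^2+b1^2)) := by ring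
    have h' : 0 ≤ 1 - z^2 := by nlinarith
    have h2 : 0 ≤ 1 - s^2 := by nlinarith
    have : 0 ≤ (1 - z^2) * (a0^2+a1^2+a2^2+b0^2+b1^2+b2^2) + z^2 * ((a0 - s * b1)^2 + (a1 + s * b0)^2 + (1 - s^2) * (b0^2+b1^2)) := by positivity
    linarith
  have h1 : 0 < p^2+q^2 := lt_of_le_of_ne (by positivity) h0.symm
  have h2 : 0 < p^2+q^2+z^2 := by positivity
  have h3 : 0 ≤ 1 - (p^2+q^2+z^2) := by linarith
  have h4 : 0 ≤ 1 - (p^2+q^2) - z^2 := by linarith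
  have key : (p^2+q^2+z^2)*(p^2+q^2) * (a0^2+a1^2+a2^2 + (b0^2+b1^2+b2^2) - ((p*a0+q*a1+z*a2)^2 + (p*a1-q*a0)^2 + (p*b0+q*b1+z*b2)^2 + (p*b1-q*b0)^2
    + 2 * s * z * (p * (a1*b2-a2*b1) + q * (a2*b0-a0*b2) + z * (a0*b1-a1*b0)))) =
    (p^2+q^2) * (1 - (p^2+q^2+z^2)) * ((p*a0+q*a1+z*a2)^2 + (p*b0+q*b1+z*b2)^2)
    + (p^2+q^2+z^2) * (1 - (p^2+q^2) - z^2) * ((p*a1-q*a0)^2 + (p*b1-q*b0)^2)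
    + (p^2+q^2+z^2) * (1 - (p^2+q^2+z^2)) * z^2 * ((p*a1-q*a0)^2 + (p*b1-q*b0)^2)
    + ((-(z*p)*a0-(z*q)*a1+(p^2+q^2)*a2) + s * ((p^2+q^2+z^2) * z) * (p*b1-q*b0)) ^ 2
    + ((-(z*p)*b0-(z*q)*b1+(p^2+q^2)*b2) - s * ((p^2+q^2+z^2) * z) * (p*a1-q*a0)) ^ 2 := by
    linear_combination (- ((p^2+q^2+z^2) * z)^2 * ((p*a1-q*a0)^2 + (p*b1-q*b0)^2)) * hs
  have k2 : 0 ≤ (p^2+q^2+z^2)*(p^2+q^2) * (a0^2+a1^2+a2^2 + (b0^2+b1^2+b2^2) - ((p*a0+q*a1+z*a2)^2 + (p*a1-q*a0)^2 + (p*b0+q*b1+z*b2)^2 + (p*b1-q*b0)^2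
    + 2 * s * z * (p * (a1*b2-a2*b1) + q * (a2*b0-a0*b2) + z * (a0*b1-a1*b0)))) := by
    rw [key]; positivity
  have := nonneg_of_mul_nonneg_right k2 (by positivity)
  linarith

section
variable (B : ℝ) {u : E3 → ℂ} {x : E3}

lemma dX_eq : -Complex.I * fderiv ℝ u x x = x 0 * magD B u 0 x + x 1 * magD B u 1 x + x 2 * magD B u 2 x := by
  have e : fderiv ℝ u x x = fderiv ℝ u x (x 0 • eb 0 + x 1 • eb 1 + x 2 • eb 2) := by
    congr 1; exact x_decomp x
  rw [e]
  simp only [map_add, map_smul, Complex.real_smul, magD, Avec]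
  simp [eb]; ring

lemma dT_eq : -Complex.I * fderiv ℝ u x (Tv x) = -(x 2 * x 0) * magD B u 0 x + -(x 2 * x 1) * magD B u 1 x + (x 0 ^ 2 + x 1 ^ 2) * magD B u 2 x := by
  simp only [Tv, map_add, map_smul, Complex.real_smul, magD, Avec]
  simp [eb]; ring

lemma magJ_eq : magJ B u x = x 0 * magD B u 1 x - x 1 * magD B u 0 x := by
  simp only [magJ, Rv, rho2, map_add, map_smul, Complex.real_smul, magD, Avec]
  simp [eb]; ring

lemma normsq_I (w : ℂ) : ‖w‖ ^ 2 = ‖-Complex.I * w‖ ^ 2 := by simp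

lemma alg2 (hx : ‖x‖ ≤ 1) :
    ‖fderiv ℝ u x x‖ ^ 2 + ‖magJ B u x‖ ^ 2 + ‖fderiv ℝ u x (Tv x)‖ ^ 2 ≤ magEnergyDensity B u x := by
  have hx2 : x 0 ^ 2 + x 1 ^ 2 + x 2 ^ 2 ≤ 1 := by rw [← norm_sq3]; nlinarith [norm_nonneg x]
  rw [normsq_I (fderiv ℝ u x x), normsq_I (fderiv ℝ u x (Tv x)), dX_eq B, dT_eq B, magJ_eq, mag_eq]
  have h1 := alg_ii (x 0) (x 1) (x 2) (magD B u 0 x).re (magD B u 1 x).re (magD B u 2 x).re hx2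
  have h2 := alg_ii (x 0) (x 1) (x 2) (magD B u 0 x).im (magD B u 1 x).im (magD B u 2 x).im hx2
  have c : (((x 0:ℂ)) ^ 2 + (x 1 : ℂ) ^ 2) = ((x 0 ^ 2 + x 1 ^ 2 : ℝ) : ℂ) := by push_cast; ring
  rw [c]
  have c1 : -((x 2 : ℂ) * x 0) = ((-(x 2 * x 0) : ℝ) : ℂ) := by push_cast; ring
  have c2 : -((x 2 : ℂ) * x 1) = ((-(x 2 * x 1) : ℝ) : ℂ) := by push_cast; ring
  rw [c1, c2]
  simp only [normsq_eq, Fin.sum_univ_three, Complex.add_re, Complex.add_im, Complex.sub_re, Complex.sub_im,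
    Complex.re_ofReal_mul, Complex.im_ofReal_mul]
  linarith

lemma alg1 (hx : ‖x‖ ≤ 1) :
    ‖fderiv ℝ u x x‖ ^ 2 + ‖magJ B u x‖ ^ 2 + 2 * |x 2| * |xab B u x| ≤ magEnergyDensity B u x := by
  have hx2 : x 0 ^ 2 + x 1 ^ 2 + x 2 ^ 2 ≤ 1 := by rw [← norm_sq3]; nlinarith [norm_nonneg x]
  rw [normsq_I (fderiv ℝ u x x), dX_eq B, magJ_eq, mag_eq]
  have h1 := alg_i_aux 1 (x 0) (x 1) (x 2) (magD B u 0 x).re (magD B u 1 x).re (magD B u 2 x).re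
    (magD B u 0 x).im (magD B u 1 x).im (magD B u 2 x).im (by norm_num) hx2
  have h2 := alg_i_aux (-1) (x 0) (x 1) (x 2) (magD B u 0 x).re (magD B u 1 x).re (magD B u 2 x).re
    (magD B u 0 x).im (magD B u 1 x).im (magD B u 2 x).im (by norm_num) hx2
  simp only [normsq_eq, Fin.sum_univ_three, Complex.add_re, Complex.add_im, Complex.sub_re, Complex.sub_im,
    Complex.re_ofReal_mul, Complex.im_ofReal_mul, mul_assoc, ← abs_mul]
  have e : x 2 * xab B u x = x 2 * (x 0 * ((magD B u 1 x).re * (magD B u 2 x).im - (magD B u 2 x).re * (magD B u 1 x).im) +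
    x 1 * ((magD B u 2 x).re * (magD B u 0 x).im - (magD B u 0 x).re * (magD B u 2 x).im) +
    x 2 * ((magD B u 0 x).re * (magD B u 1 x).im - (magD B u 1 x).re * (magD B u 0 x).im)) := by
    simp only [xab, crs]
  rcases abs_cases (x 2 * xab B u x) with ⟨h, _⟩ | ⟨h, _⟩ <;> rw [h, e] <;> linarith
end

def Pc : E3 →L[ℝ] E3 := (EuclideanSpace.proj 0 : E3 →L[ℝ] ℝ).smulRight (eb 0) + (EuclideanSpace.proj 1 : E3 →L[ℝ] ℝ).smulRight (eb 1)
def Qc : E3 →L[ℝ] E3 := (EuclideanSpace.proj 0 : E3 →L[ℝ] ℝ).smulRight (eb 1) - (EuclideanSpace.proj 1 : E3 →L[ℝ] ℝ).smulRight (eb 0)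
def Zc : E3 →L[ℝ] E3 := (EuclideanSpace.proj 2 : E3 →L[ℝ] ℝ).smulRight (eb 2)
def Rot (α : ℝ) : E3 →L[ℝ] E3 := (Real.cos α) • Pc + (Real.sin α) • Qc + Zc

@[simp] lemma Rot0 (α : ℝ) (x : E3) : Rot α x 0 = Real.cos α * x 0 - Real.sin α * x 1 := by
  simp [Rot, Pc, Qc, Zc, eb]; ring
@[simp] lemma Rot1 (α : ℝ) (x : E3) : Rot α x 1 = Real.sin α * x 0 + Real.cos α * x 1 := by
  simp [Rot, Pc, Qc, Zc, eb]; ring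
@[simp] lemma Rot2 (α : ℝ) (x : E3) : Rot α x 2 = x 2 := by
  simp [Rot, Pc, Qc, Zc, eb]

lemma e3_ext {x y : E3} (h0 : x 0 = y 0) (h1 : x 1 = y 1) (h2 : x 2 = y 2) : x = y := by
  ext i; fin_cases i <;> assumption

@[simp] lemma Rv0 (x : E3) : Rv x 0 = - x 1 := by simp [Rv, eb]
@[simp] lemma Rv1 (x : E3) : Rv x 1 = x 0 := by simp [Rv, eb]
@[simp] lemma Rv2 (x : E3) : Rv x 2 = 0 := by simp [Rv, eb]
@[simp] lemma Tv0 (x : E3) : Tv x 0 = - (x 2 * x 0) := by simp [Tv, eb]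
@[simp] lemma Tv1 (x : E3) : Tv x 1 = - (x 2 * x 1) := by simp [Tv, eb]
@[simp] lemma Tv2 (x : E3) : Tv x 2 = x 0 ^ 2 + x 1 ^ 2 := by simp [Tv, eb]

lemma rho2_Rot (α : ℝ) (x : E3) : rho2 (Rot α x) = rho2 x := by
  simp only [rho2, Rot0, Rot1]
  linear_combination (x 0 ^ 2 + x 1 ^ 2) * Real.cos_sq_add_sin_sq α

lemma Rot_Rv (α : ℝ) (x : E3) : Rot α (Rv x) = Rv (Rot α x) := by
  apply e3_ext <;> simp <;> ring

lemma Rot_Tv (α : ℝ) (x : E3) : Rot α (Tv x) = Tv (Rot α x) := by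
  have := rho2_Rot α x
  simp only [rho2, Rot0, Rot1] at this
  apply e3_ext <;> simp
  · ring
  · ring
  · linarith

lemma norm_Rot (α : ℝ) (x : E3) : ‖Rot α x‖ = ‖x‖ := by
  have h : ‖Rot α x‖ ^ 2 = ‖x‖ ^ 2 := by
    have := rho2_Rot α x
    simp only [rho2] at this
    rw [norm_sq3, norm_sq3, this, Rot2]
  exact (sq_eq_sq₀ (norm_nonneg _) (norm_nonneg _)).mp h

lemma Rot_period (x : E3) : Rot (2 * π) x = Rot 0 x := by
  apply e3_ext <;> simp

lemma Rot_mp (α : ℝ) : MeasurePreserving (Rot α) := by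
  let L : E3 →ₗᵢ[ℝ] E3 := ⟨(Rot α).toLinearMap, fun x => norm_Rot α x⟩
  exact (L.toLinearIsometryEquiv rfl).measurePreserving

lemma Rot_cont : Continuous (fun p : ℝ × E3 => Rot p.1 p.2) := by
  simp only [Rot, _root_.add_apply, _root_.smul_apply]
  fun_prop

lemma RotCLM_cont : Continuous Rot := by
  unfold Rot; fun_prop

lemma Rot_cont_left (x : E3) : Continuous (fun α => Rot α x) := by
  simp only [Rot, _root_.add_apply, _root_.smul_apply]
  fun_prop

lemma Rot_cont_swap : Continuous (fun p : E3 × ℝ => Rot p.2 p.1) := by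
  simp only [Rot, _root_.add_apply, _root_.smul_apply]
  fun_prop

lemma Rot_deriv (x : E3) (α : ℝ) : HasDerivAt (fun α => Rot α x) (Rv (Rot α x)) α := by
  have h1 := (Real.hasDerivAt_cos α).smul_const (Pc x)
  have h2 := (Real.hasDerivAt_sin α).smul_const (Qc x)
  have := (h1.add h2).add_const (Zc x)
  have e : Rv (Rot α x) = -sin α • Pc x + cos α • Qc x := by
    apply e3_ext <;> simp [Pc, Qc, eb] <;> ring
  rw [e]
  exact this

attribute [irreducible] Rot

/-- Fourier projection. -/
def fp (m : ℤ) (h : E3 → ℂ) (x : E3) : ℂ :=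
  ((1 / (2 * π) : ℝ) : ℂ) * ∫ α in (0:ℝ)..(2 * π), Complex.exp (-(Complex.I * m * α)) * h (Rot α x)

lemma fp_cont (m : ℤ) {h : E3 → ℂ} (hh : Continuous h) : Continuous (fp m h) := by
  unfold fp
  refine continuous_const.mul ?_
  apply intervalIntegral.continuous_parametric_intervalIntegral_of_continuous'
  have h2 : Continuous (fun p : E3 × ℝ => Rot p.2 p.1) := Rot_cont_swap
  have h3 : Continuous (fun p : E3 × ℝ => h (Rot p.2 p.1)) := hh.comp h2
  simp only [Function.uncurry_def]
  fun_prop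

lemma fp_hasFDeriv (m : ℤ) {u : E3 → ℂ} (hu : ContDiff ℝ 1 u) (x : E3) :
    HasFDerivAt (fp m u) (((1 / (2 * π) : ℝ) : ℂ) • ∫ α in (0:ℝ)..(2 * π), Complex.exp (-(Complex.I * m * α)) • ((fderiv ℝ u (Rot α x)).comp (Rot α))) x := by
  have hRx : ∀ x, Continuous (fun α => Rot α x) := Rot_cont_left
  have hc := hu.continuous
  have hc' := hu.continuous_fderiv one_ne_zero
  have hcx : ∀ x, Continuous fun α => u (Rot α x) := fun x => hc.comp (hRx x)
  have hcx' : ∀ x, Continuous fun α => fderiv ℝ u (Rot α x) := fun x => hc'.comp (hRx x)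
  obtain ⟨K, hK⟩ := (isCompact_closedBall (0:E3) (‖x‖ + 1)).exists_bound_of_continuousOn hc'.continuousOn
  have hRn : ∀ α, ‖Rot α‖ ≤ 1 := fun α => ContinuousLinearMap.opNorm_le_bound _ zero_le_one (fun y => by rw [norm_Rot, one_mul])
  have h := intervalIntegral.hasFDerivAt_integral_of_dominated_of_fderiv_le (μ := volume) (a := 0) (b := 2 * π) (𝕜 := ℝ)
    (F := fun x α => Complex.exp (-(Complex.I * m * α)) * u (Rot α x))
    (F' := fun x α => Complex.exp (-(Complex.I * m * α)) • ((fderiv ℝ u (Rot α x)).comp (Rot α)))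
    (x₀ := x) (s := Metric.ball x 1) (bound := fun _ => K) (Metric.ball_mem_nhds x one_pos)
    (by
      filter_upwards with y
      have := hcx y
      exact (by fun_prop : Continuous _).aestronglyMeasurable)
    (by
      have := hcx x
      exact (by fun_prop : Continuous _).intervalIntegrable _ _)
    (by
      have := (hcx' x).clm_comp RotCLM_cont
      exact (by fun_prop : Continuous _).aestronglyMeasurable)
    (by
      filter_upwards with α _ y hy
      rw [norm_smul]
      have e : ‖Complex.exp (-(Complex.I * m * α))‖ = 1 := by
        rw [Complex.norm_exp]; simp
      rw [e, one_mul]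
      refine (ContinuousLinearMap.opNorm_comp_le _ _).trans ?_
      have h1 : ‖fderiv ℝ u (Rot α y)‖ ≤ K := by
        apply hK
        rw [mem_closedBall_zero_iff, norm_Rot]
        have := norm_sub_norm_le y x
        have := mem_ball_iff_norm.mp hy
        linarith
      calc _ ≤ K * 1 := mul_le_mul h1 (hRn α) (norm_nonneg _) ((norm_nonneg _).trans h1)
        _ = K := mul_one K)
    (by simp)
    (by
      filter_upwards with α _ y hy
      have h1 := (hu.differentiable one_ne_zero (Rot α y)).hasFDerivAt.comp y (Rot α).hasFDerivAt
      exact h1.const_mul _)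
  exact h.const_mul _

lemma fp_fderiv (m : ℤ) {u : E3 → ℂ} (hu : ContDiff ℝ 1 u) (x v : E3) :
    fderiv ℝ (fp m u) x v = ((1 / (2 * π) : ℝ) : ℂ) * ∫ α in (0:ℝ)..(2 * π), Complex.exp (-(Complex.I * m * α)) * fderiv ℝ u (Rot α x) (Rot α v) := by
  have hRx : ∀ x, Continuous (fun α => Rot α x) := Rot_cont_left
  have hc' := hu.continuous_fderiv one_ne_zero
  have hcx' : ∀ x, Continuous fun α => fderiv ℝ u (Rot α x) := fun x => hc'.comp (hRx x)
  rw [(fp_hasFDeriv m hu x).fderiv, _root_.smul_apply, ContinuousLinearMap.intervalIntegral_apply]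
  · rfl
  · have := (hcx' x).clm_comp RotCLM_cont
    exact (by fun_prop : Continuous _).intervalIntegrable _ _

lemma fp_contDiff (m : ℤ) {u : E3 → ℂ} (hu : ContDiff ℝ 1 u) : ContDiff ℝ 1 (fp m u) := by
  rw [contDiff_one_iff_fderiv]
  refine ⟨fun x => (fp_hasFDeriv m hu x).differentiableAt, ?_⟩
  have e : fderiv ℝ (fp m u) = fun x => (((1 / (2 * π) : ℝ) : ℂ) • ∫ α in (0:ℝ)..(2 * π), Complex.exp (-(Complex.I * m * α)) • ((fderiv ℝ u (Rot α x)).comp (Rot α))) :=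
    funext fun x => (fp_hasFDeriv m hu x).fderiv
  rw [e]
  refine Continuous.const_smul (M := ℂ) ?_ _
  apply intervalIntegral.continuous_parametric_intervalIntegral_of_continuous'
  have hc' := hu.continuous_fderiv one_ne_zero
  have h2 : Continuous (fun p : E3 × ℝ => Rot p.2 p.1) := Rot_cont_swap
  have h3 : Continuous (fun p : E3 × ℝ => fderiv ℝ u (Rot p.2 p.1)) := hc'.comp h2
  have h4 := h3.clm_comp (RotCLM_cont.comp (continuous_snd : Continuous (Prod.snd : E3 × ℝ → ℝ)))
  simp only [Function.uncurry_def]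
  fun_prop

lemma fp_dX (m : ℤ) {u : E3 → ℂ} (hu : ContDiff ℝ 1 u) (x : E3) :
    fderiv ℝ (fp m u) x x = fp m (fun y => fderiv ℝ u y y) x := fp_fderiv m hu x x

lemma fp_dT (m : ℤ) {u : E3 → ℂ} (hu : ContDiff ℝ 1 u) (x : E3) :
    fderiv ℝ (fp m u) x (Tv x) = fp m (fun y => fderiv ℝ u y (Tv y)) x := by
  rw [fp_fderiv m hu]; simp only [Rot_Tv]; rfl

lemma fp_dR (m : ℤ) {u : E3 → ℂ} (hu : ContDiff ℝ 1 u) (x : E3) :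
    fp m (fun y => fderiv ℝ u y (Rv y)) x = Complex.I * m * fp m u x := by
  have hRx : ∀ x, Continuous (fun α => Rot α x) := Rot_cont_left
  have hc := hu.continuous
  have hc' := hu.continuous_fderiv one_ne_zero
  have hcx : ∀ x, Continuous fun α => u (Rot α x) := fun x => hc.comp (hRx x)
  have hcx' : ∀ x, Continuous fun α => fderiv ℝ u (Rot α x) := fun x => hc'.comp (hRx x)
  have hRR : Continuous fun α => Rv (Rot α x) := by
    have := hRx (Rv x)
    simpa only [Rot_Rv] using this
  have hd : ∀ α : ℝ, HasDerivAt (fun α : ℝ => Complex.exp (-(Complex.I * m * α)) * u (Rot α x))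
     (Complex.exp (-(Complex.I * m * α)) * fderiv ℝ u (Rot α x) (Rv (Rot α x)) - Complex.I * m * (Complex.exp (-(Complex.I * m * α)) * u (Rot α x))) α := by
    intro α
    have h1 : HasDerivAt (fun α : ℝ => -(Complex.I * m * α)) (-(Complex.I * m)) α := by
      have : HasDerivAt (fun α : ℝ => (α : ℂ)) 1 α := Complex.ofRealCLM.hasDerivAt
      exact ((this.const_mul (Complex.I * m)).neg).congr_deriv (by simp)
    have h2 := h1.cexp
    have h3 := (hu.differentiable one_ne_zero (Rot α x)).hasFDerivAt.comp_hasDerivAt α (Rot_deriv x α)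
    refine (h2.mul h3).congr_deriv ?_
    simp only [Function.comp]; ring
  have c1 := hcx x
  have c2 := hcx' x
  have c3 : Continuous (fun α : ℝ => Complex.exp (-(Complex.I * m * α)) * fderiv ℝ u (Rot α x) (Rv (Rot α x))) := by fun_prop
  have c4 : Continuous (fun α : ℝ => Complex.I * m * (Complex.exp (-(Complex.I * m * α)) * u (Rot α x))) := by fun_prop
  have := intervalIntegral.integral_eq_sub_of_hasDerivAt (a := 0) (b := 2 * π) (fun α _ => hd α)
    ((c3.sub c4).intervalIntegrable _ _)
  rw [intervalIntegral.integral_sub (c3.intervalIntegrable _ _) (c4.intervalIntegrable _ _),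
    intervalIntegral.integral_const_mul, Rot_period] at this
  have e1 : Complex.exp (-(Complex.I * m * ((2 * π : ℝ):ℂ))) = 1 := by
    rw [Complex.exp_eq_one_iff]
    exact ⟨-m, by push_cast; ring⟩
  rw [e1] at this
  simp only [Complex.ofReal_zero, mul_zero, neg_zero, Complex.exp_zero, sub_self, sub_eq_zero] at this
  unfold fp
  rw [this]; ring

lemma magJ_cont (B : ℝ) {u : E3 → ℂ} (hu : ContDiff ℝ 1 u) : Continuous (magJ B u) := by
  have hc := hu.continuous
  have hc' := hu.continuous_fderiv one_ne_zero
  have : Continuous Rv := by unfold Rv; fun_prop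
  have : Continuous rho2 := by unfold rho2; fun_prop
  unfold magJ; fun_prop

lemma fp_magJ (B : ℝ) (m : ℤ) {u : E3 → ℂ} (hu : ContDiff ℝ 1 u) (x : E3) :
    fp m (magJ B u) x = ((m + B / 2 * rho2 x : ℝ) : ℂ) * fp m u x := by
  have hRx : ∀ x, Continuous (fun α => Rot α x) := Rot_cont_left
  have hc := hu.continuous
  have hc' := hu.continuous_fderiv one_ne_zero
  have hcx : ∀ x, Continuous fun α => u (Rot α x) := fun x => hc.comp (hRx x)
  have hcx' : ∀ x, Continuous fun α => fderiv ℝ u (Rot α x) := fun x => hc'.comp (hRx x)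
  have hRR : Continuous fun α => Rv (Rot α x) := by
    have := hRx (Rv x)
    simpa only [Rot_Rv] using this
  have c1 := hcx x
  have c2 := hcx' x
  have h := fp_dR m hu x
  have c3 : Continuous (fun α : ℝ => -Complex.I * (Complex.exp (-(Complex.I * m * α)) * fderiv ℝ u (Rot α x) (Rv (Rot α x)))) := by fun_prop
  have c4 : Continuous (fun α : ℝ => ((B / 2 * rho2 x : ℝ) : ℂ) * (Complex.exp (-(Complex.I * m * α)) * u (Rot α x))) := by fun_prop
  have e : fp m (magJ B u) x = -Complex.I * fp m (fun y => fderiv ℝ u y (Rv y)) x + ((B / 2 * rho2 x : ℝ) : ℂ) * fp m u x := by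
    have i := intervalIntegral.integral_add (μ := volume) (a := 0) (b := 2 * π) (c3.intervalIntegrable _ _) (c4.intervalIntegrable _ _)
    rw [intervalIntegral.integral_const_mul, intervalIntegral.integral_const_mul] at i
    have i2 : ∀ α : ℝ, Complex.exp (-(Complex.I * m * α)) * magJ B u (Rot α x) = -Complex.I * (Complex.exp (-(Complex.I * m * α)) * fderiv ℝ u (Rot α x) (Rv (Rot α x))) + ((B / 2 * rho2 x : ℝ) : ℂ) * (Complex.exp (-(Complex.I * m * α)) * u (Rot α x)) := by
      intro α
      simp only [magJ, rho2_Rot]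
      ring
    unfold fp
    simp only [i2]
    rw [i]
    ring
  rw [e, h]
  push_cast
  linear_combination (-(m:ℂ) * fp m u x) * Complex.I_mul_I

lemma fp_parseval {h : E3 → ℂ} (hh : Continuous h) (x : E3) :
    HasSum (fun m : ℤ => ‖fp m h x‖ ^ 2) ((1 / (2 * π)) * ∫ α in (0:ℝ)..(2 * π), ‖h (Rot α x)‖ ^ 2) := by
  have hab : (0:ℝ) < 2 * π := by positivity
  have hc : Continuous (fun α => h (Rot α x)) := hh.comp (Rot_cont_left x)
  have hL : MemLp (fun α => h (Rot α x)) 2 (volume.restrict (Ioc 0 (2 * π))) := by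
    rw [memLp_two_iff_integrable_sq_norm hc.aestronglyMeasurable]
    have : Continuous (fun α => ‖h (Rot α x)‖ ^ 2) := hc.norm.pow 2
    exact (this.integrableOn_Icc (a := 0) (b := 2 * π)).mono_set Ioc_subset_Icc_self
  have := hasSum_sq_fourierCoeffOn hab hL
  rw [sub_zero, smul_eq_mul, ← one_div] at this
  refine this.congr_fun ?_
  intro m
  congr 2
  rw [fourierCoeffOn_eq_integral, fp]
  simp only [sub_zero, Complex.real_smul]
  congr 2
  ext α
  rw [smul_eq_mul, fourier_coe_apply]
  congr 2
  have : (π : ℂ) ≠ 0 := by exact_mod_cast Real.pi_ne_zero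
  push_cast
  rw [sub_zero]
  field_simp

lemma ball3_Rot_pre (α : ℝ) : (Rot α) ⁻¹' ball3 = ball3 := by
  ext x; simp [ball3, norm_Rot]

lemma ball_rot_integral {g : E3 → ℝ} (hg : Continuous g) (α : ℝ) :
    ∫ x in ball3, g (Rot α x) = ∫ x in ball3, g x := by
  have h1 := (Rot_mp α).restrict_preimage (s := ball3) Metric.isOpen_ball.measurableSet
  rw [ball3_Rot_pre] at h1
  have h2 := integral_map (μ := volume.restrict ball3) (φ := Rot α) (f := g) h1.measurable.aemeasurable
    hg.aestronglyMeasurable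
  rw [h1.map_eq] at h2
  exact h2.symm

lemma parseval_ball {h : E3 → ℂ} (hh : Continuous h) {W : E3 → ℝ} (hW : Continuous W)
    (hR : ∀ α x, W (Rot α x) = W x) :
    HasSum (fun m : ℤ => ∫ x in ball3, W x * ‖fp m h x‖ ^ 2) (∫ x in ball3, W x * ‖h x‖ ^ 2) := by
  have hsw : Continuous (fun p : E3 × ℝ => ‖h (Rot p.2 p.1)‖ ^ 2) := (hh.comp Rot_cont_swap).norm.pow 2
  have hA : Continuous (fun x => (1 / (2 * π)) * ∫ α in (0:ℝ)..(2 * π), ‖h (Rot α x)‖ ^ 2) := by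
    refine continuous_const.mul ?_
    apply intervalIntegral.continuous_parametric_intervalIntegral_of_continuous'
    exact hsw
  have key := hasSum_integral_of_dominated_convergence (μ := volume.restrict ball3)
    (F := fun (m : ℤ) x => W x * ‖fp m h x‖ ^ 2)
    (f := fun x => W x * ((1 / (2 * π)) * ∫ α in (0:ℝ)..(2 * π), ‖h (Rot α x)‖ ^ 2))
    (fun m x => |W x| * ‖fp m h x‖ ^ 2)
    (fun m => by
      have := fp_cont m hh
      exact (by fun_prop : Continuous _).aestronglyMeasurable)
    (fun m => by
      filter_upwards with x
      rw [norm_mul, Real.norm_eq_abs, Real.norm_of_nonneg (by positivity)])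
    (by
      filter_upwards with x
      exact (fp_parseval hh x).summable.mul_left _)
    (by
      have e : (fun x => ∑' m : ℤ, |W x| * ‖fp m h x‖ ^ 2) = fun x => |W x| * ((1 / (2 * π)) * ∫ α in (0:ℝ)..(2 * π), ‖h (Rot α x)‖ ^ 2) := by
        ext x
        exact ((fp_parseval hh x).mul_left _).tsum_eq
      rw [e]
      exact cont_int_ball (hW.abs.mul hA))
    (by
      filter_upwards with x
      exact (fp_parseval hh x).mul_left _)
  suffices e : ∫ x in ball3, W x * ‖h x‖ ^ 2 = ∫ x in ball3, W x * ((1 / (2 * π)) * ∫ α in (0:ℝ)..(2 * π), ‖h (Rot α x)‖ ^ 2) by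
    rw [e]; exact key
  have hF : Continuous (Function.uncurry fun (x : E3) (α : ℝ) => W x * ‖h (Rot α x)‖ ^ 2) :=
    (hW.comp continuous_fst).mul hsw
  have hint : Integrable (Function.uncurry fun (x : E3) (α : ℝ) => W x * ‖h (Rot α x)‖ ^ 2)
      ((volume.restrict ball3).prod (volume.restrict (Ioc 0 (2 * π)))) := by
    rw [Measure.prod_restrict]
    have : IntegrableOn (Function.uncurry fun (x : E3) (α : ℝ) => W x * ‖h (Rot α x)‖ ^ 2) (Metric.closedBall (0:E3) 1 ×ˢ Icc 0 (2 * π)) (volume.prod volume) :=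
      hF.continuousOn.integrableOn_compact ((isCompact_closedBall _ _).prod isCompact_Icc)
    exact this.mono_set (Set.prod_mono Metric.ball_subset_closedBall Ioc_subset_Icc_self)
  have hs := integral_integral_swap hint
  have e1 : ∀ α : ℝ, ∫ x in ball3, W x * ‖h (Rot α x)‖ ^ 2 = ∫ x in ball3, W x * ‖h x‖ ^ 2 := by
    intro α
    rw [← ball_rot_integral (g := fun x => W x * ‖h x‖ ^ 2) (by fun_prop) α]
    simp only [hR]
  simp only [e1] at hs
  rw [setIntegral_const] at hs
  have hpi : (0:ℝ) < 2 * π := by positivity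
  simp only [intervalIntegral.integral_of_le hpi.le, mul_left_comm _ (1 / (2 * π))]
  rw [integral_const_mul]
  have e2 : ∀ x : E3, W x * ∫ α in Ioc 0 (2 * π), ‖h (Rot α x)‖ ^ 2 = ∫ α in Ioc 0 (2 * π), W x * ‖h (Rot α x)‖ ^ 2 := fun x => (integral_const_mul _ _).symm
  simp only [e2]
  rw [hs]
  have e3 : volume.real (Ioc 0 (2 * π)) = 2 * π := by rw [Real.volume_real_Ioc_of_le hpi.le, sub_zero]
  rw [e3, smul_eq_mul]
  field_simp

lemma polar_nonneg {f : E3 → ℝ}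
    (h : ∀ σ : E3, ‖σ‖ = 1 → 0 ≤ ∫ r in (0:ℝ)..1, r ^ 2 * f (r • σ)) : 0 ≤ ∫ x in ball3, f x := by
  have hm : MeasurableSet ball3 := Metric.isOpen_ball.measurableSet
  rw [← integral_indicator hm]
  set g : E3 → ℝ := ball3.indicator f with hg
  have e1 : ∫ x, g x = ∫ x : ({(0)}ᶜ : Set E3), g x.1 ∂((volume : Measure E3).comap (↑)) := by
    rw [integral_subtype_comap (measurableSet_singleton _).compl g, restrict_compl_singleton]
  have e2 : ∫ x : ({(0)}ᶜ : Set E3), g x.1 ∂((volume : Measure E3).comap (↑)) =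
      ∫ q, g (q.2.1 • q.1.1) ∂((volume : Measure E3).toSphere.prod (.volumeIoiPow (Module.finrank ℝ E3 - 1))) := by
    have := (volume : Measure E3).measurePreserving_homeomorphUnitSphereProd.integral_comp
        (Homeomorph.measurableEmbedding _) (fun q => g (q.2.1 • q.1.1))
    rw [← this]
    congr 1
    ext x
    congr 1
    simp only [homeomorphUnitSphereProd_apply_snd_coe, homeomorphUnitSphereProd_apply_fst_coe]
    rw [smul_smul, mul_inv_cancel₀ (norm_ne_zero_iff.mpr x.2), one_smul]
  rw [e1, e2]
  by_cases hi : Integrable (fun q : Metric.sphere (0:E3) 1 × Ioi (0:ℝ) => g (q.2.1 • q.1.1)) ((volume : Measure E3).toSphere.prod (.volumeIoiPow (Module.finrank ℝ E3 - 1)))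
  · rw [integral_prod _ hi]
    apply integral_nonneg
    intro σ
    have hs : ‖σ.1‖ = 1 := mem_sphere_zero_iff_norm.mp σ.2
    have h1 := h σ.1 hs
    have e3 : ∫ r : Ioi (0:ℝ), g (r.1 • σ.1) ∂.volumeIoiPow (Module.finrank ℝ E3 - 1) = ∫ r in (0:ℝ)..1, r ^ 2 * f (r • σ.1) := by
      have hd : Module.finrank ℝ E3 - 1 = 2 := by simp [E3]
      rw [hd]
      simp only [Measure.volumeIoiPow, ENNReal.ofReal]
      rw [integral_withDensity_eq_integral_smul (measurable_subtype_coe.pow_const _).real_toNNReal,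
        integral_subtype_comap measurableSet_Ioi fun a : ℝ ↦ Real.toNNReal (a ^ 2) • g (a • σ.1)]
      rw [intervalIntegral.integral_of_le zero_le_one, integral_Ioc_eq_integral_Ioo]
      rw [← integral_indicator measurableSet_Ioi, ← integral_indicator measurableSet_Ioo]
      congr 1
      ext r
      by_cases h0 : 0 < r
      · by_cases h1 : r < 1
        · rw [indicator_of_mem (mem_Ioi.mpr h0), indicator_of_mem (mem_Ioo.mpr ⟨h0, h1⟩), NNReal.smul_def, Real.coe_toNNReal _ (by positivity), hg,
            indicator_of_mem]
          · rfl
          · rw [ball3, mem_ball_zero_iff, norm_smul, hs, mul_one, Real.norm_of_nonneg h0.le]; exact h1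
        · rw [indicator_of_mem (mem_Ioi.mpr h0), indicator_of_notMem (fun hh => h1 hh.2), hg, indicator_of_notMem, smul_zero]
          rw [ball3, mem_ball_zero_iff, norm_smul, hs, mul_one, Real.norm_of_nonneg h0.le]; exact h1
      · rw [indicator_of_notMem (s := Ioi (0:ℝ)) (fun hh => h0 hh), indicator_of_notMem (fun hh => h0 hh.1)]
    show 0 ≤ ∫ r : Ioi (0:ℝ), g (r.1 • σ.1) ∂.volumeIoiPow (Module.finrank ℝ E3 - 1)
    rw [e3]; exact h1
  · rw [integral_undef hi]

def n2 (x : E3) : ℝ := x 0 ^ 2 + x 1 ^ 2 + x 2 ^ 2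
lemma n2_eq (x : E3) : n2 x = ‖x‖ ^ 2 := (norm_sq3 x).symm

/-- truncated variable -/
def Pm (B m : ℝ) (x : E3) : ℝ := m * n2 x + B * rho2 x / 2 - √Theta0 * √B * n2 x
def Gm (B m : ℝ) (x : E3) : ℝ := Pm B m x / √(B + Pm B m x ^ 2)

lemma Gm_sq (B m : ℝ) (hB : 0 < B) (x : E3) : Gm B m x ^ 2 = Pm B m x ^ 2 / (B + Pm B m x ^ 2) := by
  rw [Gm, div_pow, Real.sq_sqrt (by positivity)]

lemma cube_deriv (s : ℝ) : HasDerivAt (fun s : ℝ => (max s 0) ^ 3) (3 * (max s 0) ^ 2) s := by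
  have h := ((hasDerivAt_pow 3 s).add (hasDerivAt_abs_rpow s (p := 3) (by norm_num))).div_const 2
  have e : (fun s : ℝ => (max s 0) ^ 3) = fun s : ℝ => (s ^ 3 + |s| ^ (3:ℝ)) / 2 := by
    ext s
    have : |s| ^ (3:ℝ) = |s| ^ 3 := by exact_mod_cast Real.rpow_natCast |s| 3
    rw [this]
    rcases le_total 0 s with h | h
    · rw [max_eq_left h, abs_of_nonneg h]; ring
    · rw [max_eq_right h, abs_of_nonpos h]; ring
  rw [e]
  refine h.congr_deriv ?_
  have : |s| ^ ((3:ℝ) - 2) = |s| := by norm_num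
  rw [this]
  rcases le_total 0 s with h | h
  · rw [max_eq_left h, abs_of_nonneg h]; push_cast; ring
  · rw [max_eq_right h, abs_of_nonpos h]; push_cast; ring

lemma K_bound {B b p κ k G2 ζ θ : ℝ} (hB : 0 < B) (hζ : ζ ^ 2 ≤ 1) (hθ : 0 ≤ θ) (hθ1 : θ ≤ 1)
    (hb : b = B * (1 - ζ ^ 2)) (hc : 1 / 2 ≤ 1 - ζ ^ 2) (hk : 0 ≤ k) (hkκ : 4 * k ≤ κ)
    (hG1 : G2 ≤ 1) (hG2 : G2 ≤ (p - θ * √B) ^ 2 / B) :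
    k * B * (G2 - 2 * ζ ^ 2) ≤ b * (κ * min ((p / √b - θ) ^ 2) 1) := by
  set c := √(1 - ζ ^ 2) with hcd
  have hc2 : c ^ 2 = 1 - ζ ^ 2 := Real.sq_sqrt (by linarith)
  have hc0 : 0 < c := Real.sqrt_pos.mpr (by linarith)
  have hc1 : c ≤ 1 := by
    rw [hcd]; exact Real.sqrt_le_one.mpr (by nlinarith)
  have hsb : √b = √B * c := by rw [hb, Real.sqrt_mul hB.le]
  have hsB : 0 < √B := Real.sqrt_pos.mpr hB
  have hBB : √B ^ 2 = B := Real.sq_sqrt hB.le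
  set q := p / √b - θ with hq
  have hη : (p - θ * √B) ^ 2 / B = (c * q - θ * (1 - c)) ^ 2 := by
    have : c * q - θ * (1 - c) = (p - θ * √B) / √B := by
      rw [hq, hsb]; field_simp; ring
    rw [this, div_pow, hBB]
  rw [hη] at hG2
  have h1 : G2 - 2 * ζ ^ 2 ≤ 2 * min (q ^ 2) 1 := by
    rcases le_total (q ^ 2) 1 with h | h
    · rw [min_eq_left h]
      have h3 : (c * q - θ * (1 - c)) ^ 2 ≤ 2 * (c * q) ^ 2 + 2 * (θ * (1 - c)) ^ 2 := by
        nlinarith [sq_nonneg (c * q + θ * (1 - c))]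
      have h4 : (c * q) ^ 2 ≤ q ^ 2 := by
        rw [mul_pow]; nlinarith [sq_nonneg q]
      have h5 : θ * (1 - c) ≤ 1 - c := by nlinarith
      have h6 : (θ * (1 - c)) ^ 2 ≤ (1 - c) ^ 2 := by
        have : 0 ≤ θ * (1 - c) := mul_nonneg hθ (by linarith)
        nlinarith
      have h7 : (1 - c) ^ 2 ≤ ζ ^ 2 := by nlinarith
      linarith
    · rw [min_eq_right h]
      nlinarith [sq_nonneg ζ]
  have hm : 0 ≤ min (q ^ 2) 1 := le_min (sq_nonneg _) zero_le_one
  have hb2 : B / 2 ≤ b := by rw [hb]; nlinarith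
  calc k * B * (G2 - 2 * ζ ^ 2) ≤ k * B * (2 * min (q ^ 2) 1) := mul_le_mul_of_nonneg_left h1 (by positivity)
    _ = (B / 2) * (4 * k * min (q ^ 2) 1) := by ring
    _ ≤ b * (4 * k * min (q ^ 2) 1) := mul_le_mul_of_nonneg_right hb2 (by positivity)
    _ ≤ b * (κ * min (q ^ 2) 1) := mul_le_mul_of_nonneg_left (mul_le_mul_of_nonneg_right hkκ hm) (by linarith)

lemma young_sq {x y β : ℝ} (hβ : 0 < β) : (x + y) ^ 2 ≤ (1 + β) * x ^ 2 + (1 + β⁻¹) * y ^ 2 := by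
  have h : 0 ≤ β⁻¹ * (β * x - y) ^ 2 := by positivity
  have e : β⁻¹ * (β * x - y) ^ 2 = β * x ^ 2 - 2 * x * y + β⁻¹ * y ^ 2 := by field_simp; ring
  nlinarith

/-- ray density -/
def Fray (B k m : ℝ) (u : E3 → ℂ) (x : E3) : ℝ :=
  (1 + (√B)⁻¹) * (‖fderiv ℝ u x x‖ ^ 2 + (m + B / 2 * rho2 x) ^ 2 * ‖u x‖ ^ 2)
  + (18 * √B + B ^ 2 * √B * (1 - n2 x) ^ 4) * ‖u x‖ ^ 2
  - (Theta0 * B * n2 x * rho2 x + k * B * (n2 x ^ 2 * Gm B m x ^ 2 - 2 * x 2 ^ 2 * n2 x)) * ‖u x‖ ^ 2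

set_option maxHeartbeats 800000 in
lemma ray_pt {B β b m ζ r t G2 k Θ K X W v vp s : ℝ} (hs1 : 1 ≤ s) (hsB : s ^ 2 = B) (hβ : β = s⁻¹)
    (hr0 : 0 ≤ r) (hr1 : r ≤ 1) (ht : t = 1 - r) (hb : b = B * (1 - ζ ^ 2)) (hζ : ζ ^ 2 ≤ 1)
    (hK : Θ * b + k * B * (G2 - 2 * ζ ^ 2) ≤ K) (hW : 0 ≤ W)
    (hv : v ^ 2 = r ^ 6 * W ^ 2) (hX : 0 ≤ X)
    (hvp : vp ≤ r ^ 2 * (X + 3 * W)) (hvp0 : 0 ≤ vp) :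
    vp ^ 2 + (m + b / 2 - b * t) ^ 2 * v ^ 2 - K * v ^ 2 ≤
     r ^ 2 * ((1 + β) * (X ^ 2 + (m + B / 2 * (r ^ 2 * (1 - ζ ^ 2))) ^ 2 * W ^ 2)
      + (18 * s + B ^ 2 * s * (1 - r ^ 2) ^ 4) * W ^ 2
      - (Θ * B * r ^ 2 * (r ^ 2 * (1 - ζ ^ 2)) + k * B * ((r ^ 2) ^ 2 * G2 - 2 * (r * ζ) ^ 2 * r ^ 2)) * W ^ 2) := by
  have hs0 : 0 < s := by linarith
  have hβ0 : 0 < β := by rw [hβ]; positivity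
  have hβi : β⁻¹ = s := by rw [hβ, inv_inv]
  have hr2 : r ^ 2 ≤ 1 := by nlinarith only [hr0, hr1]
  have hB0 : 0 ≤ B := by rw [← hsB]; positivity
  have h1 : vp ^ 2 ≤ (r ^ 2 * (X + 3 * W)) ^ 2 := pow_le_pow_left₀ hvp0 hvp 2
  have h2 : (X + 3 * W) ^ 2 ≤ (1 + β) * X ^ 2 + (1 + s) * (3 * W) ^ 2 := by
    have := young_sq (x := X) (y := 3 * W) hβ0
    rwa [hβi] at this
  have h3 : (1 + s) * (3 * W) ^ 2 ≤ 18 * s * W ^ 2 := by nlinarith only [sq_nonneg W, hs1]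
  have h4 : (r ^ 2 * (X + 3 * W)) ^ 2 ≤ r ^ 2 * ((1 + β) * X ^ 2 + 18 * s * W ^ 2) := by
    calc (r ^ 2 * (X + 3 * W)) ^ 2 = r ^ 2 * (r ^ 2 * (X + 3 * W) ^ 2) := by ring
      _ ≤ r ^ 2 * (1 * (X + 3 * W) ^ 2) := by gcongr
      _ ≤ r ^ 2 * ((1 + β) * X ^ 2 + 18 * s * W ^ 2) := by
        apply mul_le_mul_of_nonneg_left _ (sq_nonneg r); linarith
  have h5 : m + b / 2 - b * t = (m + B / 2 * (r ^ 2 * (1 - ζ ^ 2))) + (-(b * t ^ 2 / 2)) := by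
    rw [hb, ht]; ring
  have h6 : (m + b / 2 - b * t) ^ 2 ≤ (1 + β) * (m + B / 2 * (r ^ 2 * (1 - ζ ^ 2))) ^ 2 + (1 + s) * (-(b * t ^ 2 / 2)) ^ 2 := by
    rw [h5]
    have := young_sq (x := m + B / 2 * (r ^ 2 * (1 - ζ ^ 2))) (y := -(b * t ^ 2 / 2)) hβ0
    rwa [hβi] at this
  have ht0 : 0 ≤ t := by linarith
  have ht1 : t ≤ 1 - r ^ 2 := by rw [ht]; nlinarith only [hr0, hr1]
  have hb1 : b ≤ B := by rw [hb]; nlinarith only [sq_nonneg ζ, hB0]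
  have hb0 : 0 ≤ b := by rw [hb]; exact mul_nonneg hB0 (by linarith)
  have h7 : (1 + s) * (-(b * t ^ 2 / 2)) ^ 2 ≤ B ^ 2 * s * (1 - r ^ 2) ^ 4 := by
    have e1 : t ^ 4 ≤ (1 - r ^ 2) ^ 4 := pow_le_pow_left₀ ht0 ht1 4
    have e2 : b ^ 2 ≤ B ^ 2 := pow_le_pow_left₀ hb0 hb1 2
    have e3 : b ^ 2 * t ^ 4 ≤ B ^ 2 * (1 - r ^ 2) ^ 4 := mul_le_mul e2 e1 (by positivity) (by positivity)
    have e4 : (1 + s) * (-(b * t ^ 2 / 2)) ^ 2 = (1 + s) / 4 * (b ^ 2 * t ^ 4) := by ring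
    rw [e4]
    calc _ ≤ s * (b ^ 2 * t ^ 4) := by
          apply mul_le_mul_of_nonneg_right _ (by positivity); linarith
      _ ≤ s * (B ^ 2 * (1 - r ^ 2) ^ 4) := mul_le_mul_of_nonneg_left e3 hs0.le
      _ = _ := by ring
  have h8 : (m + b / 2 - b * t) ^ 2 * v ^ 2 ≤ r ^ 2 * ((1 + β) * ((m + B / 2 * (r ^ 2 * (1 - ζ ^ 2))) ^ 2 * W ^ 2) + B ^ 2 * s * (1 - r ^ 2) ^ 4 * W ^ 2) := by
    rw [hv]
    have e1 : r ^ 6 ≤ r ^ 2 := by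
      have : r ^ 6 = r ^ 2 * (r ^ 2 * r ^ 2) := by ring
      rw [this]
      have : r ^ 2 * r ^ 2 ≤ 1 := by nlinarith only [sq_nonneg r, hr2]
      nlinarith only [sq_nonneg r, this]
    calc (m + b / 2 - b * t) ^ 2 * (r ^ 6 * W ^ 2) ≤ ((1 + β) * (m + B / 2 * (r ^ 2 * (1 - ζ ^ 2))) ^ 2 + B ^ 2 * s * (1 - r ^ 2) ^ 4) * (r ^ 2 * W ^ 2) := by
          apply mul_le_mul (by linarith) (mul_le_mul_of_nonneg_right e1 (sq_nonneg W)) (by positivity) (by positivity)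
      _ = _ := by ring
  have h9 : (Θ * b + k * B * (G2 - 2 * ζ ^ 2)) * v ^ 2 ≤ K * v ^ 2 := mul_le_mul_of_nonneg_right hK (sq_nonneg v)
  have h10 : (Θ * b + k * B * (G2 - 2 * ζ ^ 2)) * v ^ 2 = r ^ 2 * ((Θ * B * r ^ 2 * (r ^ 2 * (1 - ζ ^ 2)) + k * B * ((r ^ 2) ^ 2 * G2 - 2 * (r * ζ) ^ 2 * r ^ 2)) * W ^ 2) := by
    rw [hv, hb]; ring
  linarith

lemma ray {B k m : ℝ} {u : E3 → ℂ} (hB : 2 ≤ B) (hu : ContDiff ℝ 1 u) (hk : 0 ≤ k) (hk2 : 4 * k ≤ (1 - Theta0) / 17)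
    {σ : E3} (hσ : ‖σ‖ = 1) : 0 ≤ ∫ r in (0:ℝ)..1, r ^ 2 * Fray B k m u (r • σ) := by
  have hB0 : 0 < B := by linarith
  have hT0 := Theta0_nonneg
  have hT1 := Theta0_lt_one
  set ζ := σ 2 with hζd
  have hn : σ 0 ^ 2 + σ 1 ^ 2 + ζ ^ 2 = 1 := by rw [← norm_sq3, hσ, one_pow]
  have hζ : ζ ^ 2 ≤ 1 := by nlinarith only [hn, sq_nonneg (σ 0), sq_nonneg (σ 1)]
  set b := B * (1 - ζ ^ 2) with hb
  have hb0 : 0 ≤ b := mul_nonneg hB0.le (by linarith)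
  set w : ℝ → ℂ := fun r => u (r • σ) with hw
  set g : ℝ → ℝ := fun s => (max s 0) ^ 3 with hg
  set v : ℝ → ℂ := fun t => ((g (1 - t) : ℝ) : ℂ) * w (1 - t) with hv
  have hgc : ContDiff ℝ 1 g := by
    rw [contDiff_one_iff_deriv]
    refine ⟨fun s => (cube_deriv s).differentiableAt, ?_⟩
    have : deriv g = fun s => 3 * (max s 0) ^ 2 := funext fun s => (cube_deriv s).deriv
    rw [this]; fun_prop
  have hwc : ContDiff ℝ 1 w := hu.comp (by fun_prop)
  have hvc : ContDiff ℝ 1 v := by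
    refine ContDiff.mul ?_ (hwc.comp (by fun_prop))
    exact Complex.ofRealCLM.contDiff.comp (hgc.comp (by fun_prop))
  have hv0 : ∀ t, 1 ≤ t → v t = 0 := by
    intro t ht
    simp [hv, hg, max_eq_right (by linarith : 1 - t ≤ 0)]
  have hdv : ∀ t, deriv v t = -(((3 * (max (1 - t) 0) ^ 2 : ℝ) : ℂ) * w (1 - t) + ((g (1 - t) : ℝ) : ℂ) * fderiv ℝ u ((1 - t) • σ) σ) := by
    intro t
    have h1 : HasDerivAt (fun t : ℝ => 1 - t) (-1) t := (hasDerivAt_id t).const_sub 1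
    have h2 := ((cube_deriv (1 - t)).comp t h1).ofReal_comp
    have h3 : HasDerivAt (fun t : ℝ => (1 - t) • σ) ((-1 : ℝ) • σ) t := h1.smul_const σ
    have h4 := (hu.differentiable one_ne_zero ((1 - t) • σ)).hasFDerivAt.comp_hasDerivAt t h3
    have h5 := h2.mul h4
    have : deriv v t = _ := h5.deriv
    rw [this]
    simp only [map_smul, hw, hg, Function.comp]
    push_cast
    simp only [neg_smul, one_smul]
    ring
  have key : ∃ K : ℝ, (∀ G2 : ℝ, G2 ≤ 1 → G2 ≤ ((m + b / 2) - √Theta0 * √B) ^ 2 / B → Theta0 * b + k * B * (G2 - 2 * ζ ^ 2) ≤ K) ∧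
      K * (∫ t in (0:ℝ)..1, ‖v t‖ ^ 2) ≤ ∫ t in (0:ℝ)..1, (‖deriv v t‖ ^ 2 + ((m + b / 2) - b * t) ^ 2 * ‖v t‖ ^ 2) := by
    by_cases hc : 1 / 2 ≤ 1 - ζ ^ 2
    · refine ⟨_, ?_, scaled_gap (b := b) (by rw [hb]; nlinarith) (m + b / 2) v hvc hv0⟩
      intro G2 h1 h2
      have hth1 : √Theta0 ≤ 1 := Real.sqrt_le_one.mpr hT1.le
      have := K_bound hB0 hζ (Real.sqrt_nonneg Theta0) hth1 hb hc hk hk2 h1 h2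
      linarith
    · refine ⟨_, ?_, scaled_theta hb0 (m + b / 2) v hvc hv0⟩
      intro G2 h1 _
      have : k * B * (G2 - 2 * ζ ^ 2) ≤ 0 := mul_nonpos_of_nonneg_of_nonpos (by positivity) (by linarith)
      linarith
  obtain ⟨K, hK, hI⟩ := key
  have cv : Continuous v := hvc.continuous
  have cdv : Continuous (deriv v) := hvc.continuous_deriv le_rfl
  have hGc : Continuous (Gm B m) := by
    unfold Gm Pm n2 rho2
    apply Continuous.div (by fun_prop) (by fun_prop)
    intro x; positivity
  have hF : Continuous (Fray B k m u) := by
    have := hu.continuous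
    have := hu.continuous_fderiv one_ne_zero
    unfold Fray n2 rho2
    fun_prop
  have hsub : ∫ t in (0:ℝ)..1, (1 - t) ^ 2 * Fray B k m u ((1 - t) • σ) = ∫ r in (0:ℝ)..1, r ^ 2 * Fray B k m u (r • σ) := by
    have := intervalIntegral.integral_comp_sub_left (a := 0) (b := 1) (fun r : ℝ => r ^ 2 * Fray B k m u (r • σ)) 1
    simpa using this
  rw [← hsub]
  have c1 : Continuous (fun t => ‖deriv v t‖ ^ 2 + ((m + b / 2) - b * t) ^ 2 * ‖v t‖ ^ 2) := by fun_prop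
  have c2 : Continuous (fun t => K * ‖v t‖ ^ 2) := by fun_prop
  rw [← intervalIntegral.integral_const_mul, ← sub_nonneg, ← intervalIntegral.integral_sub (c1.intervalIntegrable _ _) (c2.intervalIntegrable _ _)] at hI
  refine hI.trans ?_
  apply intervalIntegral.integral_mono_on zero_le_one ((c1.sub c2).intervalIntegrable _ _)
    (Continuous.intervalIntegrable (by fun_prop) _ _)
  intro t ht
  have hr0 : 0 ≤ 1 - t := by linarith [ht.2]
  have hr1 : 1 - t ≤ 1 := by linarith [ht.1]
  set r := 1 - t with hr
  have hs1 : 1 ≤ √B := Real.one_le_sqrt.mpr (by linarith)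
  have hsB : √B ^ 2 = B := Real.sq_sqrt hB0.le
  have en : n2 (r • σ) = r ^ 2 := by
    rw [n2_eq, norm_smul, hσ, mul_one, Real.norm_of_nonneg hr0]
  have er : rho2 (r • σ) = r ^ 2 * (1 - ζ ^ 2) := by
    have : (1 - ζ ^ 2) = σ 0 ^ 2 + σ 1 ^ 2 := by linarith
    rw [this]; simp [rho2]; ring
  have eP : Pm B m (r • σ) = r ^ 2 * ((m + b / 2) - √Theta0 * √B) := by
    rw [Pm, en, er, hb]; ring
  have hG1 : Gm B m (r • σ) ^ 2 ≤ 1 := by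
    rw [Gm_sq _ _ hB0, div_le_one (by positivity)]; linarith
  have hr2 : r ^ 2 ≤ 1 := by nlinarith only [hr0, hr1]
  have hG2 : Gm B m (r • σ) ^ 2 ≤ ((m + b / 2) - √Theta0 * √B) ^ 2 / B := by
    rw [Gm_sq _ _ hB0, eP]
    set Z := (m + b / 2) - √Theta0 * √B
    have : (r ^ 2 * Z) ^ 2 ≤ Z ^ 2 := by
      rw [mul_pow]
      have : (r ^ 2) ^ 2 ≤ 1 := by nlinarith only [hr2, sq_nonneg r]
      nlinarith only [this, sq_nonneg Z]
    apply div_le_div₀ (sq_nonneg _) this hB0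
    nlinarith only [sq_nonneg (r ^ 2 * Z)]
  have hX : fderiv ℝ u (r • σ) (r • σ) = r * fderiv ℝ u (r • σ) σ := by
    rw [map_smul]; exact Complex.real_smul
  have hmr : max r 0 = r := max_eq_left hr0
  have := ray_pt (m := m) (t := t) (r := r) (W := ‖u (r • σ)‖) (X := ‖fderiv ℝ u (r • σ) (r • σ)‖)
    (v := ‖v t‖) (vp := ‖deriv v t‖) hs1 hsB rfl hr0 hr1 (by rw [hr]; ring) hb hζ (hK _ hG1 hG2) (norm_nonneg _)
    (by
      simp only [hv, ← hr, hg, hmr, hw]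
      rw [norm_mul, mul_pow, Complex.norm_real, Real.norm_of_nonneg (by positivity)]; ring)
    (norm_nonneg _)
    (by
      have e : deriv v t = -(((r ^ 2 : ℝ) : ℂ) * (fderiv ℝ u (r • σ) (r • σ) + 3 * u (r • σ))) := by
        rw [hdv, hX]
        simp only [← hr, hg, hmr, hw]
        push_cast
        ring
      rw [e, norm_neg, norm_mul, Complex.norm_real, Real.norm_of_nonneg (by positivity)]
      apply mul_le_mul_of_nonneg_left _ (by positivity)
      refine (norm_add_le _ _).trans ?_
      rw [norm_mul]; simp)
    (norm_nonneg _)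
  refine this.trans (le_of_eq ?_)
  rw [Fray, en, er]
  simp only [PiLp.smul_apply, smul_eq_mul]
  ring

lemma ray_ball {B k m : ℝ} {u : E3 → ℂ} (hB : 2 ≤ B) (hu : ContDiff ℝ 1 u) (hk : 0 ≤ k) (hk2 : 4 * k ≤ (1 - Theta0) / 17) :
    0 ≤ ∫ x in ball3, Fray B k m u x :=
  polar_nonneg fun σ hσ => ray hB hu hk hk2 hσ

lemma gam_deriv {D : ℝ} (hD : 0 < D) (p : ℝ) :
    HasDerivAt (fun p : ℝ => p / √(D + p ^ 2)) (D / √(D + p ^ 2) ^ 3) p := by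
  have hpos : 0 < D + p ^ 2 := by positivity
  have hs : 0 < √(D + p ^ 2) := Real.sqrt_pos.mpr hpos
  have h1 : HasDerivAt (fun p : ℝ => D + p ^ 2) (2 * p) p :=
    ((hasDerivAt_pow 2 p).const_add D).congr_deriv (by norm_num)
  have h2 := (hasDerivAt_id p).div (h1.sqrt hpos.ne') hs.ne'
  refine h2.congr_deriv ?_
  have e : √(D + p ^ 2) ^ 2 = D + p ^ 2 := Real.sq_sqrt hpos.le
  simp only [id]
  generalize √(D + p ^ 2) = s at hs e
  field_simp
  linear_combination e

lemma gam_contDiff {D : ℝ} (hD : 0 < D) : ContDiff ℝ 1 (fun p : ℝ => p / √(D + p ^ 2)) := by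
  apply ContDiff.div contDiff_id
  · apply ContDiff.sqrt (by fun_prop)
    intro p; positivity
  · intro p; positivity

def Sz (D : ℝ) (x : E3) : ℝ := x 2 / √(D + x 2 ^ 2)

lemma hasF_coord (i : Fin 3) (x : E3) : HasFDerivAt (fun x : E3 => x i) (EuclideanSpace.proj i : E3 →L[ℝ] ℝ) x :=
  (EuclideanSpace.proj i : E3 →L[ℝ] ℝ).hasFDerivAt

lemma n2_dT (x : E3) : fderiv ℝ n2 x (Tv x) = 0 := by
  have h := (((hasF_coord 0 x).pow 2).add ((hasF_coord 1 x).pow 2)).add ((hasF_coord 2 x).pow 2)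
  have h' : fderiv ℝ n2 x = _ := h.fderiv
  rw [h']
  simp
  ring

lemma rho2_dT (x : E3) : fderiv ℝ rho2 x (Tv x) = -2 * x 2 * rho2 x := by
  have h := (((hasF_coord 0 x).pow 2).add ((hasF_coord 1 x).pow 2))
  have h' : fderiv ℝ rho2 x = _ := h.fderiv
  rw [h']
  simp [rho2]
  ring

lemma n2_contDiff : ContDiff ℝ 1 n2 := by unfold n2; fun_prop
lemma rho2_contDiff : ContDiff ℝ 1 rho2 := by unfold rho2; fun_prop
lemma Pm_contDiff (B m : ℝ) : ContDiff ℝ 1 (Pm B m) := by unfold Pm n2 rho2; fun_prop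
lemma Gm_contDiff {B : ℝ} (hB : 0 < B) (m : ℝ) : ContDiff ℝ 1 (Gm B m) := (gam_contDiff hB).comp (Pm_contDiff B m)
lemma Sz_contDiff {D : ℝ} (hD : 0 < D) : ContDiff ℝ 1 (Sz D) := (gam_contDiff hD).comp (g := fun p : ℝ => p / √(D + p ^ 2)) (f := fun x : E3 => x 2) (by fun_prop)

lemma Pm_dT (B m : ℝ) (x : E3) : fderiv ℝ (Pm B m) x (Tv x) = - (B * x 2 * rho2 x) := by
  have h1 := (n2_contDiff.differentiable one_ne_zero x).hasFDerivAt
  have h2 := (rho2_contDiff.differentiable one_ne_zero x).hasFDerivAt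
  have h := ((h1.const_mul m).add ((h2.const_mul B).mul_const (2⁻¹))).sub (h1.const_mul (√Theta0 * √B))
  have e : Pm B m = ((fun y => m * n2 y) + fun y => B * rho2 y * 2⁻¹) - fun y => √Theta0 * √B * n2 y := by
    ext x; simp only [Pm, Pi.add_apply, Pi.sub_apply]; ring
  rw [e, h.fderiv]
  simp only [_root_.sub_apply, _root_.add_apply, _root_.smul_apply, n2_dT, rho2_dT, smul_eq_mul]
  ring

lemma Gm_dT {B : ℝ} (hB : 0 < B) (m : ℝ) (x : E3) :
    fderiv ℝ (Gm B m) x (Tv x) = - (B / √(B + Pm B m x ^ 2) ^ 3 * (B * x 2 * rho2 x)) := by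
  have h1 := ((Pm_contDiff B m).differentiable one_ne_zero x).hasFDerivAt
  have h := (gam_deriv hB (Pm B m x)).comp_hasFDerivAt x h1
  have h' : fderiv ℝ (Gm B m) x = _ := h.fderiv
  rw [h', _root_.smul_apply, Pm_dT, smul_eq_mul]; ring

lemma Sz_dT {D : ℝ} (hD : 0 < D) (x : E3) :
    fderiv ℝ (Sz D) x (Tv x) = D / √(D + x 2 ^ 2) ^ 3 * rho2 x := by
  have h := (gam_deriv hD (x 2)).comp_hasFDerivAt x (hasF_coord 2 x)
  have h' : fderiv ℝ (Sz D) x = _ := h.fderiv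
  rw [h', _root_.smul_apply, smul_eq_mul]
  simp [rho2]

lemma Tv_dot (x : E3) : ∑ j, x j * Tv x j = 0 := by
  simp [Fin.sum_univ_three]; ring

lemma div_Tv {Φ : E3 → ℝ} (hΦ : ContDiff ℝ 1 Φ) (x : E3) :
    ∑ j, fderiv ℝ (fun x => Φ x * Tv x j) x (eb j) = fderiv ℝ Φ x (Tv x) - 2 * x 2 * Φ x := by
  have hp := (hΦ.differentiable one_ne_zero x).hasFDerivAt
  have e0 := hp.mul (((hasF_coord 2 x).mul (hasF_coord 0 x)).neg)
  have e1 := hp.mul (((hasF_coord 2 x).mul (hasF_coord 1 x)).neg)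
  have e2 := hp.mul (((hasF_coord 0 x).pow 2).add ((hasF_coord 1 x).pow 2))
  have f0 : (fun x => Φ x * Tv x 0) = Φ * -((fun x : E3 => x 2) * fun x : E3 => x 0) := by ext x; simp
  have f1 : (fun x => Φ x * Tv x 1) = Φ * -((fun x : E3 => x 2) * fun x : E3 => x 1) := by ext x; simp
  have f2 : (fun x => Φ x * Tv x 2) = Φ * ((fun x : E3 => x 0 ^ 2) + fun x : E3 => x 1 ^ 2) := by ext x; simp
  rw [Fin.sum_univ_three, f0, f1, f2, e0.fderiv, e1.fderiv, e2.fderiv]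
  have hT : Tv x = (Tv x 0) • eb 0 + (Tv x 1) • eb 1 + (Tv x 2) • eb 2 := x_decomp (Tv x)
  rw [hT]
  simp [eb]
  ring

lemma unc_pt {a n z ρ q G S s k ε τ W N : ℝ} (ha : 1 ≤ a) (hn0 : 0 ≤ n) (hn1 : n ≤ 1) (hρ : ρ = n - z ^ 2) (hρ0 : 0 ≤ ρ)
    (hq0 : 0 ≤ q) (hq1 : q ≤ 1) (hG : G ^ 2 = 1 - q ^ 2) (hS1 : |z| - a⁻¹ ≤ z * S) (hS0 : 0 ≤ z * S) (hS2 : z * S ≤ |z|)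
    (hS : |S| ≤ 1) (hs0 : 0 ≤ s) (hs1 : s ≤ a) (hk : 0 ≤ k) (hkε : k ≤ 2 * ε) (hτ : 0 ≤ τ) (hW : 0 ≤ W) (hN : |N| ≤ 2 * W * τ) :
    k / 2 * (a ^ 4 * (|z| / 2 - (1 - n) - z ^ 2 / 2) - 4 * a ^ 3) * W ^ 2 ≤
     ε * τ ^ 2 + k * a ^ 4 * n ^ 2 * G ^ 2 * W ^ 2 - k / 2 * (a ^ 2 * (n * G * S * N + (n * G * (s * ρ) - 2 * z * (n * G * S)) * W ^ 2) - a ^ 4 * q ^ 3 * z * ρ * (n * S * W ^ 2)) := by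
  have ha0 : 0 < a := by linarith
  have hz1 : z ^ 2 ≤ 1 := by linarith
  have hza : |z| ≤ 1 := abs_le_one_iff_mul_self_le_one.mpr (by linarith [sq z])
  have hG1 : |G| ≤ 1 := abs_le_one_iff_mul_self_le_one.mpr (by nlinarith only [hG, sq_nonneg q])
  have hnρ : n * ρ ≤ 1 := by nlinarith only [hn0, hn1, hρ, hρ0, sq_nonneg z]
  -- first
  have A1 : n * ρ * (z * S) * (1 - q ^ 2 + q ^ 3) ≤ n ^ 2 * (1 - q ^ 2) + n * ρ * (z * S) * q ^ 3 := by
    have h1 : n * ρ * (z * S) ≤ n ^ 2 := by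
      have h2 : ρ * (z * S) ≤ n * 1 := mul_le_mul (by nlinarith only [hρ, sq_nonneg z]) (hS2.trans hza) hS0 hn0
      nlinarith only [h2, hn0]
    have h3 : 0 ≤ 1 - q ^ 2 := by rw [← hG]; positivity
    nlinarith only [mul_le_mul_of_nonneg_right h1 h3]
  have A2 : 1 / 2 ≤ 1 - q ^ 2 + q ^ 3 := by
    have : q * (1 - q) ≤ 1 / 4 := by nlinarith only [sq_nonneg (q - 1 / 2)]
    have h2 : q * (q * (1 - q)) ≤ 1 * (1 / 4) := mul_le_mul hq1 this (mul_nonneg hq0 (by linarith)) zero_le_one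
    nlinarith only [h2]
  have A3 : 0 ≤ n * ρ * (z * S) := by positivity
  have A4 : |z| - a⁻¹ - 2 * (1 - n) - z ^ 2 ≤ n * ρ * (z * S) := by
    have h1 : 2 * n - 1 - z ^ 2 ≤ n * ρ := by
      rw [hρ]; nlinarith only [sq_nonneg (n - 1), sq_nonneg z, hn0, hn1]
    have h2 : (2 * n - 1 - z ^ 2) * (z * S) ≤ n * ρ * (z * S) := mul_le_mul_of_nonneg_right h1 hS0
    have h3 : (2 * (1 - n) + z ^ 2) * (z * S) ≤ (2 * (1 - n) + z ^ 2) * 1 := mul_le_mul_of_nonneg_left (hS2.trans hza) (by nlinarith only [sq_nonneg z, hn1])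
    nlinarith only [h1, h2, h3, hS1]
  have A5 : 1 / 2 * (|z| - a⁻¹ - 2 * (1 - n) - z ^ 2) ≤ n ^ 2 * (1 - q ^ 2) + n * ρ * (z * S) * q ^ 3 := by
    nlinarith only [A1, A4, mul_le_mul_of_nonneg_left A2 A3]
  have A6 : n * G * (s * ρ) ≤ a := by
    have h1 : G ≤ 1 := (le_abs_self G).trans hG1
    have h2 : n * ρ * s ≤ 1 * a := mul_le_mul hnρ hs1 hs0 zero_le_one
    have h3 : G * (n * ρ * s) ≤ 1 * (n * ρ * s) := mul_le_mul_of_nonneg_right h1 (by positivity)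
    nlinarith only [h2, h3]
  have A7 : - 2 ≤ 2 * z * (n * G * S) := by
    have h1 : n * (z * S) ≤ 1 * 1 := mul_le_mul hn1 (hS2.trans hza) hS0 zero_le_one
    have h2 : -1 ≤ G := (abs_le.mp hG1).1
    have h3 : -1 * (n * (z * S)) ≤ G * (n * (z * S)) := mul_le_mul_of_nonneg_right h2 (by positivity)
    nlinarith only [h1, h3]
  have A8 : a ^ 4 * (|z| / 2 - (1 - n) - z ^ 2 / 2) - 4 * a ^ 3 ≤ a ^ 4 * n ^ 2 * G ^ 2 - (a ^ 2 * (n * G * (s * ρ) - 2 * z * (n * G * S)) - a ^ 4 * q ^ 3 * z * ρ * (n * S)) := by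
    have h1 := mul_le_mul_of_nonneg_left A5 (by positivity : 0 ≤ a ^ 4)
    have h2 : a ^ 4 * a⁻¹ = a ^ 3 := by field_simp
    have h3 := mul_le_mul_of_nonneg_left A6 (by positivity : 0 ≤ a ^ 2)
    have h4 := mul_le_mul_of_nonneg_left A7 (by positivity : 0 ≤ a ^ 2)
    have h5 : a ^ 2 ≤ a ^ 3 := pow_le_pow_right₀ ha (by norm_num)
    have h6 : 0 < a ^ 3 := by positivity
    rw [hG]
    nlinarith only [h1, h2, h3, h4, h5, h6]
  have B1 : 0 ≤ ε * τ ^ 2 + k / 2 * a ^ 4 * n ^ 2 * G ^ 2 * W ^ 2 - k / 2 * (a ^ 2 * (n * G * S * N)) := by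
    have h1 : n * G * S * N ≤ n * |G| * (2 * W * τ) := by
      calc n * G * S * N ≤ |n * G * S * N| := le_abs_self _
        _ = n * |G| * (|S| * |N|) := by rw [abs_mul, abs_mul, abs_mul, abs_of_nonneg hn0]; ring
        _ ≤ n * |G| * (1 * (2 * W * τ)) := by gcongr
        _ = _ := by ring
    have h2 : k / 2 * (a ^ 2 * (n * G * S * N)) ≤ k / 2 * (a ^ 2 * (n * |G| * (2 * W * τ))) := by gcongr
    have h3 : k / 2 * τ ^ 2 ≤ ε * τ ^ 2 := mul_le_mul_of_nonneg_right (by linarith) (sq_nonneg τ)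
    have h4 : 0 ≤ k / 2 * (τ - a ^ 2 * n * |G| * W) ^ 2 := by positivity
    have h5 : |G| ^ 2 = G ^ 2 := sq_abs G
    have h6 : k / 2 * (τ - a ^ 2 * n * |G| * W) ^ 2 = k / 2 * τ ^ 2 + k / 2 * a ^ 4 * n ^ 2 * |G| ^ 2 * W ^ 2 - k / 2 * (a ^ 2 * (n * |G| * (2 * W * τ))) := by ring
    rw [h5] at h6
    linarith
  have A9 := mul_le_mul_of_nonneg_left (mul_le_mul_of_nonneg_right A8 (sq_nonneg W)) (by linarith : 0 ≤ k / 2)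
  linarith

lemma unc {a k ε : ℝ} (m : ℝ) (ha : 1 ≤ a) (hk : 0 ≤ k) (hkε : k ≤ 2 * ε) {u : E3 → ℂ} (hu : ContDiff ℝ 1 u) :
    ∫ x in ball3, k / 2 * (a ^ 4 * (|x 2| / 2 - (1 - n2 x) - x 2 ^ 2 / 2) - 4 * a ^ 3) * ‖u x‖ ^ 2 ≤
    ∫ x in ball3, (ε * ‖fderiv ℝ u x (Tv x)‖ ^ 2 + k * a ^ 4 * n2 x ^ 2 * Gm (a ^ 4) m x ^ 2 * ‖u x‖ ^ 2) := by
  have ha0 : 0 < a := by linarith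
  have hB : 0 < a ^ 4 := by positivity
  set D : ℝ := (a⁻¹) ^ 2 with hDd
  have hD : 0 < D := by positivity
  have hGc := Gm_contDiff hB m
  have hSc := Sz_contDiff hD
  have hnu : ContDiff ℝ 1 (fun x => ‖u x‖ ^ 2) := hu.norm_sq ℝ
  set Φ : E3 → ℝ := fun x => n2 x * (Gm (a ^ 4) m x * (Sz D x * ‖u x‖ ^ 2)) with hΦd
  have hΦ : ContDiff ℝ 1 Φ := n2_contDiff.mul (hGc.mul (hSc.mul hnu))
  have hTc : ∀ j, ContDiff ℝ 1 (fun x => Tv x j) := by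
    intro j; fin_cases j
    · show ContDiff ℝ 1 (fun x => Tv x 0)
      simp only [Tv0]; fun_prop
    · show ContDiff ℝ 1 (fun x => Tv x 1)
      simp only [Tv1]; fun_prop
    · show ContDiff ℝ 1 (fun x => Tv x 2)
      simp only [Tv2]; fun_prop
  have hdiv := div_ball3 (fun j x => Φ x * Tv x j) (fun j => hΦ.mul (hTc j)) (by
    intro x _
    have := Tv_dot x
    calc ∑ j, x j * (Φ x * Tv x j) = Φ x * ∑ j, x j * Tv x j := by
          rw [Finset.mul_sum]; exact Finset.sum_congr rfl fun j _ => by ring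
      _ = 0 := by rw [this, mul_zero])
  simp only [div_Tv hΦ] at hdiv
  have hTvc : Continuous Tv := by unfold Tv; fun_prop
  have huc := hu.continuous
  have huc' := hu.continuous_fderiv one_ne_zero
  have hnc := n2_contDiff.continuous
  have hGc' := hGc.continuous
  have hΦc := hΦ.continuous
  have hΦc' := hΦ.continuous_fderiv one_ne_zero
  have i1 : IntegrableOn (fun x => ε * ‖fderiv ℝ u x (Tv x)‖ ^ 2 + k * a ^ 4 * n2 x ^ 2 * Gm (a ^ 4) m x ^ 2 * ‖u x‖ ^ 2) ball3 :=
    cont_int_ball (by fun_prop)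
  have i2 : IntegrableOn (fun x => k / 2 * a ^ 2 * (fderiv ℝ Φ x (Tv x) - 2 * x 2 * Φ x)) ball3 :=
    cont_int_ball (by fun_prop)
  have e : ∫ x in ball3, (ε * ‖fderiv ℝ u x (Tv x)‖ ^ 2 + k * a ^ 4 * n2 x ^ 2 * Gm (a ^ 4) m x ^ 2 * ‖u x‖ ^ 2)
    = ∫ x in ball3, ((ε * ‖fderiv ℝ u x (Tv x)‖ ^ 2 + k * a ^ 4 * n2 x ^ 2 * Gm (a ^ 4) m x ^ 2 * ‖u x‖ ^ 2) - k / 2 * a ^ 2 * (fderiv ℝ Φ x (Tv x) - 2 * x 2 * Φ x)) := by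
    rw [integral_sub i1 i2, integral_const_mul, hdiv]; ring
  rw [e]
  apply setIntegral_mono_on (cont_int_ball (by fun_prop)) (i1.sub i2) Metric.isOpen_ball.measurableSet
  intro x hx
  have hn1 : n2 x ≤ 1 := by
    have h1 : ‖x‖ < 1 := mem_ball_zero_iff.mp hx
    rw [n2_eq]; nlinarith only [norm_nonneg x, h1]
  have hn0 : 0 ≤ n2 x := by unfold n2; positivity
  set P := Pm (a ^ 4) m x with hP
  set R := √(a ^ 4 + P ^ 2) with hR
  have hR2 : R ^ 2 = a ^ 4 + P ^ 2 := Real.sq_sqrt (by positivity)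
  have hR0 : 0 < R := Real.sqrt_pos.mpr (by positivity)
  have hRa : a ^ 2 ≤ R := by
    apply Real.le_sqrt_of_sq_le; nlinarith only [sq_nonneg P]
  set Q := √(D + x 2 ^ 2) with hQ
  have hQ2 : Q ^ 2 = D + x 2 ^ 2 := Real.sq_sqrt (by positivity)
  have hQ0 : 0 < Q := Real.sqrt_pos.mpr (by positivity)
  have hai : 0 < a⁻¹ := by positivity
  have hQa : a⁻¹ ≤ Q := by
    apply Real.le_sqrt_of_sq_le; nlinarith only [sq_nonneg (x 2), hDd]
  have hQz : |x 2| ≤ Q := by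
    apply Real.le_sqrt_of_sq_le; rw [sq_abs]; linarith
  have hQle : Q ≤ |x 2| + a⁻¹ := by
    rw [hQ, Real.sqrt_le_iff]
    refine ⟨by positivity, ?_⟩
    have := sq_abs (x 2)
    nlinarith only [this, hDd, mul_nonneg (abs_nonneg (x 2)) hai.le]
  have hS : Sz D x = x 2 / Q := rfl
  have hzS : x 2 * Sz D x = |x 2| ^ 2 / Q := by rw [hS, sq_abs]; ring
  have hN : fderiv ℝ (fun x => ‖u x‖ ^ 2) x (Tv x) = 2 * inner ℝ (u x) (fderiv ℝ u x (Tv x)) := by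
    have h1 := (hu.differentiable one_ne_zero x).hasFDerivAt.norm_sq
    rw [h1.fderiv]
    simp
    ring
  have dΦ : fderiv ℝ Φ x (Tv x) = n2 x * (Gm (a ^ 4) m x * (Sz D x * (2 * inner ℝ (u x) (fderiv ℝ u x (Tv x))) + D / Q ^ 3 * rho2 x * ‖u x‖ ^ 2)
      - (a ^ 4 / R ^ 3 * (a ^ 4 * x 2 * rho2 x)) * (Sz D x * ‖u x‖ ^ 2)) := by
    have h1 := (n2_contDiff.differentiable one_ne_zero x).hasFDerivAt
    have h2 := (hGc.differentiable one_ne_zero x).hasFDerivAt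
    have h3 := (hSc.differentiable one_ne_zero x).hasFDerivAt
    have h4 := (hnu.differentiable one_ne_zero x).hasFDerivAt
    have h5 := h1.mul (h2.mul (h3.mul h4))
    have h6 : Φ = n2 * (Gm (a ^ 4) m * (Sz D * fun x => ‖u x‖ ^ 2)) := by ext x; simp [hΦd]
    rw [h6, h5.fderiv]
    simp only [_root_.add_apply, _root_.smul_apply, smul_eq_mul, n2_dT, Gm_dT hB, Sz_dT hD, hN, Pi.mul_apply]
    ring
  have := unc_pt (a := a) (n := n2 x) (z := x 2) (ρ := rho2 x) (q := a ^ 2 / R) (G := Gm (a ^ 4) m x) (S := Sz D x) (s := D / Q ^ 3)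
    (k := k) (ε := ε) (τ := ‖fderiv ℝ u x (Tv x)‖) (W := ‖u x‖) (N := 2 * inner ℝ (u x) (fderiv ℝ u x (Tv x)))
    ha hn0 hn1 (by unfold n2 rho2; ring) (by unfold rho2; positivity) (by positivity) ((div_le_one hR0).mpr hRa)
    (by
      rw [Gm_sq _ _ hB, ← hP, ← hR2, div_pow]
      have : P ^ 2 = R ^ 2 - a ^ 4 := by linarith
      rw [this]; field_simp)
    (by
      rw [hzS, le_div_iff₀ hQ0]
      rcases le_total 0 (|x 2| - a⁻¹) with h | h
      · calc (|x 2| - a⁻¹) * Q ≤ (|x 2| - a⁻¹) * (|x 2| + a⁻¹) := mul_le_mul_of_nonneg_left hQle h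
          _ ≤ _ := by nlinarith only [sq_nonneg (a⁻¹)]
      · nlinarith only [h, hQ0, sq_nonneg |x 2|])
    (by rw [hzS]; positivity)
    (by
      rw [hzS, div_le_iff₀ hQ0, sq]
      exact mul_le_mul_of_nonneg_left hQz (abs_nonneg _))
    (by rw [hS, abs_div, abs_of_pos hQ0, div_le_one hQ0]; exact hQz)
    (by positivity)
    (by
      rw [div_le_iff₀ (by positivity)]
      have h1 : (a⁻¹) ^ 3 ≤ Q ^ 3 := pow_le_pow_left₀ hai.le hQa 3
      calc D = a * (a⁻¹) ^ 3 := by rw [hDd]; field_simp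
        _ ≤ a * Q ^ 3 := mul_le_mul_of_nonneg_left h1 ha0.le)
    hk hkε (norm_nonneg _) (norm_nonneg _)
    (by
      rw [abs_mul, abs_two, mul_assoc]
      exact mul_le_mul_of_nonneg_left (abs_real_inner_le_norm _ _) (by norm_num))
  refine this.trans (le_of_eq ?_)
  have hΦx : Φ x = n2 x * (Gm (a ^ 4) m x * (Sz D x * ‖u x‖ ^ 2)) := rfl
  simp only [Pi.sub_apply]
  rw [dΦ, hΦx, div_pow]
  generalize D / Q ^ 3 = w1
  generalize inner ℝ (u x) (fderiv ℝ u x (Tv x)) = w2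
  ring

def Wt (a k : ℝ) (x : E3) : ℝ := Theta0 * a ^ 4 * n2 x * rho2 x - 2 * k * a ^ 4 * x 2 ^ 2 * n2 x
  + k / 2 * (a ^ 4 * (|x 2| / 2 - (1 - n2 x) - x 2 ^ 2 / 2) - 4 * a ^ 3)

lemma n2_Rot (α : ℝ) (x : E3) : n2 (Rot α x) = n2 x := by rw [n2_eq, n2_eq, norm_Rot]

lemma M1 {a k ε : ℝ} (ha : 2 ≤ a) (hk : 0 ≤ k) (hk2 : 4 * k ≤ (1 - Theta0) / 17) (hkε : k ≤ 2 * ε)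
    {u : E3 → ℂ} (hu : ContDiff ℝ 1 u) :
    ∫ x in ball3, Wt a k x * ‖u x‖ ^ 2 ≤ (∫ x in ball3, (1 + (a ^ 2)⁻¹) * ‖fderiv ℝ u x x‖ ^ 2)
      + (∫ x in ball3, (1 + (a ^ 2)⁻¹) * ‖magJ (a ^ 4) u x‖ ^ 2)
      + (∫ x in ball3, ε * ‖fderiv ℝ u x (Tv x)‖ ^ 2)
      + (∫ x in ball3, (18 * a ^ 2 + a ^ 10 * (1 - n2 x) ^ 4) * ‖u x‖ ^ 2) := by
  have hnc := n2_contDiff.continuous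
  have hrc := rho2_contDiff.continuous
  have hTvc : Continuous Tv := by unfold Tv; fun_prop
  have huc := hu.continuous
  have huc' := hu.continuous_fderiv one_ne_zero
  have hWc : Continuous (Wt a k) := by unfold Wt; fun_prop
  have hs0 := parseval_ball huc hWc (fun α x => by simp only [Wt, n2_Rot, rho2_Rot, Rot2])
  have hs1 := parseval_ball (h := fun x => fderiv ℝ u x x) (by fun_prop)
    (continuous_const (y := (1 + (a ^ 2)⁻¹))) (fun _ _ => rfl)
  have hs2 := parseval_ball (magJ_cont (a ^ 4) hu)
    (continuous_const (y := (1 + (a ^ 2)⁻¹))) (fun _ _ => rfl)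
  have hs3 := parseval_ball (h := fun x => fderiv ℝ u x (Tv x)) (by fun_prop)
    (continuous_const (y := ε)) (fun _ _ => rfl)
  have hs4 := parseval_ball huc (W := fun x => (18 * a ^ 2 + a ^ 10 * (1 - n2 x) ^ 4)) (by fun_prop)
    (fun α x => by simp only [n2_Rot])
  refine hasSum_le (fun m => ?_) hs0 (((hs1.add hs2).add hs3).add hs4)
  have hv := fp_contDiff m hu
  have hvc := hv.continuous
  have hvc' := hv.continuous_fderiv one_ne_zero
  have hGc := (Gm_contDiff (B := a ^ 4) (by positivity) m).continuous
  have h1 := ray_ball (B := a ^ 4) (m := m) (by nlinarith [pow_le_pow_left₀ (by norm_num) ha 4]) hv hk hk2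
  have h2 := unc (a := a) (k := k) (ε := ε) m (by linarith) hk hkε hv
  have hsq : √(a ^ 4) = a ^ 2 := by
    rw [show a ^ 4 = (a ^ 2) ^ 2 by ring, Real.sqrt_sq (by positivity)]
  simp only [← fp_dX m hu, ← fp_dT m hu, fp_magJ (a ^ 4) m hu, norm_mul, Complex.norm_real, mul_pow, Real.norm_eq_abs, sq_abs]
  unfold Fray at h1
  rw [hsq] at h1
  have i1 : IntegrableOn (fun x => (1 + (a ^ 2)⁻¹) * ‖fderiv ℝ (fp m u) x x‖ ^ 2) ball3 := cont_int_ball (by fun_prop)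
  have i2 : IntegrableOn (fun x => (1 + (a ^ 2)⁻¹) * ((m + a ^ 4 / 2 * rho2 x) ^ 2 * ‖fp m u x‖ ^ 2)) ball3 := cont_int_ball (by fun_prop)
  have i3 : IntegrableOn (fun x => ε * ‖fderiv ℝ (fp m u) x (Tv x)‖ ^ 2) ball3 := cont_int_ball (by fun_prop)
  have i4 : IntegrableOn (fun x => (18 * a ^ 2 + a ^ 10 * (1 - n2 x) ^ 4) * ‖fp m u x‖ ^ 2) ball3 := cont_int_ball (by fun_prop)
  have i12 := i1.add i2
  have i123 := i12.add i3
  rw [← integral_add' i1 i2, ← integral_add' i12 i3, ← integral_add' i123 i4]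
  have j0 : IntegrableOn (fun x => Wt a k x * ‖fp m u x‖ ^ 2) ball3 := cont_int_ball (by fun_prop)
  have j1 := cont_int_ball (f := fun x => (1 + (a ^ 2)⁻¹) * (‖fderiv ℝ (fp m u) x x‖ ^ 2 + (m + a ^ 4 / 2 * rho2 x) ^ 2 * ‖fp m u x‖ ^ 2)
     + (18 * a ^ 2 + (a ^ 4) ^ 2 * a ^ 2 * (1 - n2 x) ^ 4) * ‖fp m u x‖ ^ 2 -
     (Theta0 * a ^ 4 * n2 x * rho2 x + k * a ^ 4 * (n2 x ^ 2 * Gm (a ^ 4) m x ^ 2 - 2 * x 2 ^ 2 * n2 x)) * ‖fp m u x‖ ^ 2) (by fun_prop)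
  have j2 := cont_int_ball (f := fun x => (ε * ‖fderiv ℝ (fp m u) x (Tv x)‖ ^ 2 + k * a ^ 4 * n2 x ^ 2 * Gm (a ^ 4) m x ^ 2 * ‖fp m u x‖ ^ 2)) (by fun_prop)
  have j3 := cont_int_ball (f := fun x => k / 2 * (a ^ 4 * (|x 2| / 2 - (1 - n2 x) - x 2 ^ 2 / 2) - 4 * a ^ 3) * ‖fp m u x‖ ^ 2) (by fun_prop)
  rw [← sub_nonneg, ← integral_sub' ((i123.add i4)) j0]
  have h3 := sub_nonneg.mpr h2
  rw [← integral_sub' j2 j3] at h3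
  have h4 := add_nonneg h1 h3
  rw [← integral_add' j1 (j2.sub j3)] at h4
  refine h4.trans (le_of_eq (integral_congr_ae (Eventually.of_forall fun x => ?_)))
  simp only [Pi.sub_apply, Pi.add_apply, Wt]
  ring

def kap : ℝ := (1 - Theta0) / 68

lemma kap_pos : 0 < kap := by have := Theta0_lt_one; unfold kap; linarith

lemma MAIN {a : ℝ} (ha : 2 ≤ a) {u : E3 → ℂ} (hu : ContDiff ℝ 2 u) :
    ∫ x in ball3, (Theta0 * a ^ 4 + kap / 4 * a ^ 4 * |x 2| - 3 * a ^ 4 * (1 - n2 x) - 21 * a ^ 3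
       - a ^ 10 * (1 - n2 x) ^ 4) * ‖u x‖ ^ 2
    ≤ (1 + 2 * (a ^ 2)⁻¹) * ∫ x in ball3, magEnergyDensity (a ^ 4) u x := by
  have hT0 := Theta0_nonneg
  have hT1 := Theta0_lt_one
  have hκ := kap_pos
  have hκ1 : 68 * kap = 1 - Theta0 := by unfold kap; ring
  set ε : ℝ := 34 * kap with hε
  have ha0 : 0 < a := by linarith
  have hu1 : ContDiff ℝ 1 u := hu.of_le (by norm_num)
  have m1 := M1 (a := a) (k := kap) (ε := ε) ha hκ.le (by linarith) (by linarith) hu1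
  have m2 := curl_ineq (a ^ 4) hu (δ := a ^ 2) (by positivity)
  have hnc := n2_contDiff.continuous
  have hrc := rho2_contDiff.continuous
  have hTvc : Continuous Tv := by unfold Tv; fun_prop
  have huc := hu1.continuous
  have huc' := hu1.continuous_fderiv one_ne_zero
  have hJ := magJ_cont (a ^ 4) hu1
  have hE := mag_continuous (a ^ 4) hu1
  have c1 := crs_cont (a ^ 4) hu 0 1
  have c1' := crs_cont (a ^ 4) hu 1 2
  have c1'' := crs_cont (a ^ 4) hu 2 0
  have hx : Continuous (xab (a ^ 4) u) := by unfold xab; fun_prop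
  have hWc : Continuous (Wt a kap) := by unfold Wt; fun_prop
  have i0 := cont_int_ball (f := fun x => Wt a kap x * ‖u x‖ ^ 2) (by fun_prop)
  have i1 := cont_int_ball (f := fun x => (1 + (a ^ 2)⁻¹) * ‖fderiv ℝ u x x‖ ^ 2) (by fun_prop)
  have i2 := cont_int_ball (f := fun x => (1 + (a ^ 2)⁻¹) * ‖magJ (a ^ 4) u x‖ ^ 2) (by fun_prop)
  have i3 := cont_int_ball (f := fun x => ε * ‖fderiv ℝ u x (Tv x)‖ ^ 2) (by fun_prop)
  have i4 := cont_int_ball (f := fun x => (18 * a ^ 2 + a ^ 10 * (1 - n2 x) ^ 4) * ‖u x‖ ^ 2) (by fun_prop)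
  have i5 := cont_int_ball (f := fun x => (1 - ε) * (2 * |x 2| * |xab (a ^ 4) u x|)) (by fun_prop)
  have i6 := cont_int_ball (f := fun x => (1 - ε) * a ^ 2 * ‖u x‖ ^ 2) (by fun_prop)
  have i7 := cont_int_ball (f := fun x => (1 - ε) * (a ^ 2)⁻¹ * magEnergyDensity (a ^ 4) u x) (by fun_prop)
  have i8 := cont_int_ball (f := fun x => (1 - ε) * a ^ 4 * (x 2 ^ 2 * ‖u x‖ ^ 2)) (by fun_prop)
  have m3 := mul_le_mul_of_nonneg_left m2 (by linarith : 0 ≤ 1 - ε)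
  rw [mul_add, mul_add, ← mul_assoc, ← mul_assoc, ← mul_assoc, ← integral_const_mul, ← integral_const_mul, ← integral_const_mul, ← integral_const_mul] at m3
  have m4 := add_le_add m1 m3
  rw [← integral_add' i0 i8, ← integral_add' i1 i2, ← integral_add' (i1.add i2) i3, ← integral_add' ((i1.add i2).add i3) i4,
    ← integral_add' i5 i6, ← integral_add' (i5.add i6) i7, ← integral_add' (((i1.add i2).add i3).add i4) ((i5.add i6).add i7)] at m4
  have m5 := sub_nonneg.mpr m4
  rw [← integral_sub' ((((i1.add i2).add i3).add i4).add ((i5.add i6).add i7)) (i0.add i8)] at m5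
  rw [← integral_const_mul]
  have j1 := cont_int_ball (f := fun x => (1 + 2 * (a ^ 2)⁻¹) * magEnergyDensity (a ^ 4) u x) (by fun_prop)
  have j2 := cont_int_ball (f := fun x => (Theta0 * a ^ 4 + kap / 4 * a ^ 4 * |x 2| - 3 * a ^ 4 * (1 - n2 x) - 21 * a ^ 3
       - a ^ 10 * (1 - n2 x) ^ 4) * ‖u x‖ ^ 2) (by fun_prop)
  rw [← sub_nonneg, ← integral_sub' j1 j2]
  refine m5.trans (setIntegral_mono_on (((((i1.add i2).add i3).add i4).add ((i5.add i6).add i7)).sub (i0.add i8)) (j1.sub j2) Metric.isOpen_ball.measurableSet ?_)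
  intro x hx
  have hx1 : ‖x‖ < 1 := mem_ball_zero_iff.mp hx
  have hn1 : n2 x ≤ 1 := by
    rw [n2_eq]; nlinarith only [norm_nonneg x, hx1]
  have hn0 : 0 ≤ n2 x := by unfold n2; positivity
  have A1 := alg1 (B := a ^ 4) (u := u) hx1.le
  have A2 := alg2 (B := a ^ 4) (u := u) hx1.le
  simp only [Pi.sub_apply, Pi.add_apply]
  generalize magEnergyDensity (a ^ 4) u x = V at *
  generalize |xab (a ^ 4) u x| = X at *
  have hX := sq_nonneg ‖fderiv ℝ u x x‖
  have hY := sq_nonneg ‖magJ (a ^ 4) u x‖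
  have hZ := sq_nonneg ‖fderiv ℝ u x (Tv x)‖
  generalize ‖fderiv ℝ u x x‖ ^ 2 = X1 at *
  generalize ‖magJ (a ^ 4) u x‖ ^ 2 = X2 at *
  generalize ‖fderiv ℝ u x (Tv x)‖ ^ 2 = X3 at *
  have hb : 0 < (a ^ 2)⁻¹ := by positivity
  have A3 := mul_le_mul_of_nonneg_left A1 (by linarith : 0 ≤ 1 - ε)
  have A4 := mul_le_mul_of_nonneg_left A2 (by linarith : 0 ≤ ε)
  have A5 : (a ^ 2)⁻¹ * (X1 + X2) ≤ (a ^ 2)⁻¹ * V := mul_le_mul_of_nonneg_left (by linarith) hb.le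
  have A6 : (1 - ε) * (a ^ 2)⁻¹ * V ≤ (a ^ 2)⁻¹ * V := by
    have : 0 ≤ ε * ((a ^ 2)⁻¹ * V) := mul_nonneg (by linarith) (mul_nonneg hb.le (by linarith))
    linarith
  have hρ : rho2 x = n2 x - x 2 ^ 2 := by unfold n2 rho2; ring
  have W1 : Theta0 * a ^ 4 + kap / 4 * a ^ 4 * |x 2| - 3 * a ^ 4 * (1 - n2 x) - 21 * a ^ 3 ≤ Wt a kap x + (1 - ε) * a ^ 4 * x 2 ^ 2 - 18 * a ^ 2 - (1 - ε) * a ^ 2 := by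
    unfold Wt
    have h1 : 2 * n2 x - 1 - x 2 ^ 2 ≤ n2 x * rho2 x := by
      rw [hρ]; nlinarith only [sq_nonneg (n2 x - 1), sq_nonneg (x 2), hn0, hn1, mul_nonneg (sub_nonneg.mpr hn1) (sq_nonneg (x 2))]
    have h2 := mul_le_mul_of_nonneg_left h1 (by positivity : 0 ≤ Theta0 * a ^ 4)
    have h3 : kap * a ^ 4 * (x 2 ^ 2 * n2 x) ≤ kap * a ^ 4 * (x 2 ^ 2 * 1) := by gcongr
    have h4 : a ^ 2 ≤ a ^ 3 := pow_le_pow_right₀ (by linarith) (by norm_num)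
    have h5 : 0 ≤ a ^ 4 * x 2 ^ 2 := by positivity
    have h6 : 0 ≤ a ^ 4 * (1 - n2 x) := mul_nonneg (by positivity) (by linarith)
    have h7 : 0 ≤ (1 - ε - Theta0 - 2 * kap - kap / 4) * (a ^ 4 * x 2 ^ 2) := mul_nonneg (by linarith) h5
    have h8 : 0 ≤ (3 - 2 * Theta0 - kap / 2) * (a ^ 4 * (1 - n2 x)) := mul_nonneg (by linarith) h6
    have h9 : 0 ≤ (2 - 2 * kap) * a ^ 3 := mul_nonneg (by linarith) (by positivity)
    have h10 : 0 ≤ ε * a ^ 2 := mul_nonneg (by linarith) (by positivity)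
    have e1 : Theta0 * a ^ 4 * n2 x * rho2 x = Theta0 * a ^ 4 * (n2 x * rho2 x) := by ring
    have e2 : 2 * kap * a ^ 4 * x 2 ^ 2 * n2 x = 2 * (kap * a ^ 4 * (x 2 ^ 2 * n2 x)) := by ring
    rw [e1, e2]
    linarith
  have W2 := mul_le_mul_of_nonneg_right W1 (sq_nonneg ‖u x‖)
  linarith

def Ph (j k : ℕ) (x : E3) : ℝ := (1 - n2 x) ^ j * x 2 ^ k

lemma n2_cd2 : ContDiff ℝ 2 n2 := by unfold n2; fun_prop

lemma Ph_contDiff (j k : ℕ) : ContDiff ℝ 2 (Ph j k) := by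
  have := n2_cd2
  unfold Ph; fun_prop

lemma pd_n2 (i : Fin 3) (x : E3) : pd i n2 x = 2 * x i := by
  have h : n2 = fun x : E3 => (x 0 * x 0 + x 1 * x 1) + x 2 * x 2 := by ext x; unfold n2; ring
  rw [h, pd_add _ (by fun_prop) (by fun_prop), pd_add _ (by fun_prop) (by fun_prop), pd_mul _ (by fun_prop) (by fun_prop),
    pd_mul _ (by fun_prop) (by fun_prop), pd_mul _ (by fun_prop) (by fun_prop), pd_coord, pd_coord, pd_coord]
  fin_cases i <;> simp <;> ring

lemma pd_Ph (j k : ℕ) (i : Fin 3) (x : E3) : pd i (Ph j k) x =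
    -(2 * j * (1 - n2 x) ^ (j - 1) * x 2 ^ k) * x i + k * (1 - n2 x) ^ j * x 2 ^ (k - 1) * (if 2 = i then 1 else 0) := by
  have hn : DifferentiableAt ℝ n2 x := n2_cd2.differentiable (by norm_num) x
  unfold Ph
  rw [pd_mul _ (by fun_prop) (by fun_prop),
    pd_comp (h := fun s => (1 - s) ^ j) (h' := -(j * (1 - n2 x) ^ (j - 1))) i hn
      (by
        have := ((hasDerivAt_id (n2 x)).const_sub 1).fun_pow j
        refine this.congr_deriv (by simp)),
    pd_comp (h := fun s => s ^ k) (f := fun x : E3 => x 2) i (by fun_prop) (hasDerivAt_pow k _), pd_n2, pd_coord]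
  ring

def MM (j k : ℕ) (Ψ : E3 → ℂ) : ℝ := ∫ x in ball3, Ph j k x ^ 2 * ‖Ψ x‖ ^ 2

lemma MM_nonneg (j k : ℕ) (Ψ : E3 → ℂ) : 0 ≤ MM j k Ψ := integral_nonneg fun x => by positivity

lemma grad_le (j k : ℕ) {x : E3} (hx : x ∈ ball3) :
    ∑ i, pd i (Ph j k) x ^ 2 ≤ 8 * j ^ 2 * Ph (j - 1) k x ^ 2 + 2 * k ^ 2 * Ph j (k - 1) x ^ 2 := by
  have hx1 : ‖x‖ < 1 := mem_ball_zero_iff.mp hx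
  have hn1 : n2 x ≤ 1 := by
    rw [n2_eq]; nlinarith only [norm_nonneg x, hx1]
  simp only [pd_Ph, Fin.sum_univ_three, Ph]
  have e : n2 x = x 0 ^ 2 + x 1 ^ 2 + x 2 ^ 2 := rfl
  set p : ℝ := j * (1 - n2 x) ^ (j - 1) * x 2 ^ k with hp
  set q : ℝ := k * (1 - n2 x) ^ j * x 2 ^ (k - 1) with hq
  have e1 : 8 * (j:ℝ) ^ 2 * ((1 - n2 x) ^ (j - 1) * x 2 ^ k) ^ 2 = 8 * p ^ 2 := by rw [hp]; ring
  have e2 : 2 * (k:ℝ) ^ 2 * ((1 - n2 x) ^ j * x 2 ^ (k - 1)) ^ 2 = 2 * q ^ 2 := by rw [hq]; ring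
  have e3 : 2 * (j:ℝ) * (1 - n2 x) ^ (j - 1) * x 2 ^ k = 2 * p := by rw [hp]; ring
  rw [e1, e2, e3]
  have h0 : (2:Fin 3) ≠ 0 := by decide
  have h1 : (2:Fin 3) ≠ 1 := by decide
  simp only [h0, h1, if_false, if_true, mul_zero, add_zero, mul_one]
  have h3 : (- (2 * p) * x 2 + q) ^ 2 ≤ 2 * (2 * p * x 2) ^ 2 + 2 * q ^ 2 := by nlinarith only [sq_nonneg (2 * p * x 2 + q)]
  have h4 : p ^ 2 * n2 x ≤ p ^ 2 * 1 := mul_le_mul_of_nonneg_left hn1 (sq_nonneg p)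
  rw [e] at h4
  nlinarith only [h3, h4, sq_nonneg (p * x 0), sq_nonneg (p * x 1)]

lemma grad_int (j k : ℕ) {Ψ : E3 → ℂ} (hΨ : Continuous Ψ) :
    ∫ x in ball3, (∑ i, pd i (Ph j k) x ^ 2) * ‖Ψ x‖ ^ 2 ≤ 8 * j ^ 2 * MM (j - 1) k Ψ + 2 * k ^ 2 * MM j (k - 1) Ψ := by
  have c1 := (Ph_contDiff j k).continuous
  have c2 := (Ph_contDiff (j - 1) k).continuous
  have c3 := (Ph_contDiff j (k - 1)).continuous
  have c4 := fun i => (pd_contDiff i (Ph_contDiff j k)).continuous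
  unfold MM
  have i1 := cont_int_ball (f := fun x => 8 * j ^ 2 * (Ph (j - 1) k x ^ 2 * ‖Ψ x‖ ^ 2)) (by fun_prop)
  have i2 := cont_int_ball (f := fun x => 2 * k ^ 2 * (Ph j (k - 1) x ^ 2 * ‖Ψ x‖ ^ 2)) (by fun_prop)
  rw [← integral_const_mul, ← integral_const_mul, ← integral_add i1 i2]
  refine setIntegral_mono_on (cont_int_ball (by fun_prop)) (i1.add i2) Metric.isOpen_ball.measurableSet fun x hx => ?_
  have := mul_le_mul_of_nonneg_right (grad_le j k hx) (sq_nonneg ‖Ψ x‖)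
  linarith

/-- energy of the weighted eigenfunction -/
lemma AG {B lam L : ℝ} {Ψ : E3 → ℂ} (hΨ : IsNeumannEigenfunction B lam Ψ) (hL : lam ≤ L) (j k : ℕ) :
    ∫ x in ball3, magEnergyDensity B (fun x => (Ph j k x : ℂ) * Ψ x) x ≤
      L * MM j k Ψ + (8 * j ^ 2 * MM (j - 1) k Ψ + 2 * k ^ 2 * MM j (k - 1) Ψ) := by
  have hc := hΨ.1.continuous
  have c1 := (Ph_contDiff j k).continuous
  have c4 := fun i => (pd_contDiff i (Ph_contDiff j k)).continuous
  rw [Agmon hΨ ((Ph_contDiff j k).of_le (by norm_num))]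
  have i1 := cont_int_ball (f := fun x => lam * (Ph j k x ^ 2 * ‖Ψ x‖ ^ 2)) (by fun_prop)
  have i2 := cont_int_ball (f := fun x => (∑ i, pd i (Ph j k) x ^ 2) * ‖Ψ x‖ ^ 2) (by fun_prop)
  have e : ∫ x in ball3, (lam * Ph j k x ^ 2 + ∑ i, pd i (Ph j k) x ^ 2) * ‖Ψ x‖ ^ 2 =
      lam * MM j k Ψ + ∫ x in ball3, (∑ i, pd i (Ph j k) x ^ 2) * ‖Ψ x‖ ^ 2 := by
    unfold MM
    rw [← integral_const_mul, ← integral_add i1 i2]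
    congr 1; ext x; ring
  rw [e]
  have := mul_le_mul_of_nonneg_right hL (MM_nonneg j k Ψ)
  linarith [grad_int j k hc]

lemma norm_Ph (j k : ℕ) (Ψ : E3 → ℂ) (x : E3) : ‖(Ph j k x : ℂ) * Ψ x‖ ^ 2 = Ph j k x ^ 2 * ‖Ψ x‖ ^ 2 := by
  rw [norm_mul, mul_pow, Complex.norm_real, Real.norm_eq_abs, sq_abs]

lemma PhΨ_cd (j k : ℕ) {Ψ : E3 → ℂ} (h : ContDiff ℝ 2 Ψ) : ContDiff ℝ 2 (fun x => (Ph j k x : ℂ) * Ψ x) :=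
  (Complex.ofRealCLM.contDiff.comp (Ph_contDiff j k)).mul h

lemma NORM {B lam L : ℝ} {Ψ : E3 → ℂ} (hΨ : IsNeumannEigenfunction B lam Ψ) (hL : lam ≤ L) (j k : ℕ) :
    (B - L) * MM (j + 1) k Ψ ≤ 8 * (j + 1) ^ 2 * MM j k Ψ + 2 * k ^ 2 * MM (j + 1) (k - 1) Ψ := by
  have h1 := bulk B (PhΨ_cd (j + 1) k hΨ.1) (by
    intro x hx
    have : n2 x = 1 := by rw [n2_eq, mem_sphere_zero_iff_norm.mp hx]; norm_num
    simp [Ph, this])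
  simp only [norm_Ph] at h1
  have h2 := AG hΨ hL (j + 1) k
  push_cast at h2
  unfold MM at *
  linarith

/-- weighted energy -/
lemma ENER {B lam L : ℝ} {Ψ : E3 → ℂ} (hΨ : IsNeumannEigenfunction B lam Ψ) (hL : lam ≤ L) (j k : ℕ) :
    ∫ x in ball3, Ph j k x ^ 2 * magEnergyDensity B Ψ x ≤
      2 * L * MM j k Ψ + 4 * (8 * j ^ 2 * MM (j - 1) k Ψ + 2 * k ^ 2 * MM j (k - 1) Ψ) := by
  have hu1 : ContDiff ℝ 1 Ψ := hΨ.1.of_le (by norm_num)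
  have hc := hΨ.1.continuous
  have c1 := (Ph_contDiff j k).continuous
  have c4 := fun i => (pd_contDiff i (Ph_contDiff j k)).continuous
  have c5 := mag_continuous B ((PhΨ_cd j k hΨ.1).of_le (by norm_num) : ContDiff ℝ 1 _)
  have c6 := mag_continuous B hu1
  have i1 := cont_int_ball (f := fun x => 2 * magEnergyDensity B (fun x => (Ph j k x : ℂ) * Ψ x) x) (by fun_prop)
  have i2 := cont_int_ball (f := fun x => 2 * ((∑ i, pd i (Ph j k) x ^ 2) * ‖Ψ x‖ ^ 2)) (by fun_prop)
  have h1 : ∫ x in ball3, Ph j k x ^ 2 * magEnergyDensity B Ψ x ≤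
     2 * (∫ x in ball3, magEnergyDensity B (fun x => (Ph j k x : ℂ) * Ψ x) x) +
     2 * ∫ x in ball3, (∑ i, pd i (Ph j k) x ^ 2) * ‖Ψ x‖ ^ 2 := by
    rw [← integral_const_mul, ← integral_const_mul, ← integral_add i1 i2]
    refine setIntegral_mono_on (cont_int_ball (by fun_prop)) (i1.add i2) Metric.isOpen_ball.measurableSet fun x hx => ?_
    simp only [magEnergyDensity]
    rw [Finset.sum_mul, Finset.mul_sum, Finset.mul_sum, Finset.mul_sum, ← Finset.sum_add_distrib]
    refine Finset.sum_le_sum fun i _ => ?_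
    rw [magD_smul B x (hu1.differentiable one_ne_zero x) ((Ph_contDiff j k).differentiable (by norm_num) x)]
    have e1 : Ph j k x ^ 2 * ‖magD B Ψ i x‖ ^ 2 = ‖(Ph j k x : ℂ) * magD B Ψ i x‖ ^ 2 := by
      rw [norm_mul, mul_pow, Complex.norm_real, Real.norm_eq_abs, sq_abs]
    have e2 : pd i (Ph j k) x ^ 2 * ‖Ψ x‖ ^ 2 = ‖Complex.I * (pd i (Ph j k) x : ℂ) * Ψ x‖ ^ 2 := by
      rw [norm_mul, norm_mul, Complex.norm_I, one_mul, mul_pow, Complex.norm_real, Real.norm_eq_abs, sq_abs]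
    rw [e1, e2]
    generalize (Ph j k x : ℂ) * magD B Ψ i x = p
    generalize Complex.I * (pd i (Ph j k) x : ℂ) * Ψ x = q
    have h := norm_add_le (p - q) q
    rw [sub_add_cancel] at h
    nlinarith only [h, norm_nonneg p, norm_nonneg q, norm_nonneg (p - q), sq_nonneg (‖p - q‖ - ‖q‖)]
  linarith [AG hΨ hL j k, grad_int j k hc]

def Hyp (ω a lam : ℝ) (Ψ : E3 → ℂ) : Prop :=
  IsNeumannEigenfunction (a ^ 4) lam Ψ ∧ lam ≤ Theta0 * a ^ 4 + ω * a ^ 3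

def Bd (ω : ℝ) (j k : ℕ) : Prop := ∃ C, 0 ≤ C ∧ ∃ A : ℝ, ∀ a, A ≤ a → ∀ lam Ψ, Hyp ω a lam Ψ →
  a ^ (4 * j + 2 * k) * MM j k Ψ ≤ C * MM 0 0 Ψ

lemma mixed {ω : ℝ} (k : ℕ) (hP : ∀ i < k, ∀ j, Bd ω j i) (j : ℕ) :
    ∃ C, 0 ≤ C ∧ ∃ A : ℝ, ∀ a, A ≤ a → ∀ lam Ψ, Hyp ω a lam Ψ →
      a ^ (4 * j + 2 * k) * MM j k Ψ ≤ C * (a ^ (2 * k) * MM 0 k Ψ + MM 0 0 Ψ) := by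
  have hκ := kap_pos
  induction j with
  | zero =>
    refine ⟨1, zero_le_one, 0, fun a ha lam Ψ h => ?_⟩
    have := MM_nonneg 0 0 Ψ
    simp only [mul_zero, zero_add, one_mul]
    linarith
  | succ j ih =>
    obtain ⟨C, hC, A, hA⟩ := ih
    have h2 : ∃ C', 0 ≤ C' ∧ ∃ A : ℝ, ∀ a, A ≤ a → ∀ lam Ψ, Hyp ω a lam Ψ →
      a ^ (4 * j + 2 * k) * (2 * (k:ℝ) ^ 2 * MM (j + 1) (k - 1) Ψ) ≤ C' * MM 0 0 Ψ := by
      rcases Nat.eq_zero_or_pos k with hk | hk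
      · subst hk
        refine ⟨0, le_rfl, 0, fun a ha lam Ψ h => ?_⟩
        simp
      · obtain ⟨i, rfl⟩ : ∃ i, k = i + 1 := ⟨k - 1, by omega⟩
        obtain ⟨C', hC', A', hA'⟩ := hP i (by omega) (j + 1)
        refine ⟨2 * ((i + 1 : ℕ):ℝ) ^ 2 * C', by positivity, max A' 1, fun a ha lam Ψ h => ?_⟩
        have h1 : 1 ≤ a := (le_max_right _ _).trans ha
        have h3 := hA' a ((le_max_left _ _).trans ha) lam Ψ h
        have h4 : a ^ (4 * j + 2 * (i + 1)) ≤ a ^ (4 * (j + 1) + 2 * i) := pow_le_pow_right₀ h1 (by omega)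
        have h5 := mul_le_mul_of_nonneg_right h4 (MM_nonneg (j + 1) i Ψ)
        have h6 := mul_le_mul_of_nonneg_left (h5.trans h3) (by positivity : 0 ≤ 2 * ((i + 1 : ℕ):ℝ) ^ 2)
        rw [Nat.add_sub_cancel]
        linarith
    obtain ⟨C', hC', A', hA'⟩ := h2
    refine ⟨(8 * (j + 1) ^ 2 * C + C') / (34 * kap), by positivity, max (max A A') (max 1 (ω / (34 * kap))), fun a ha lam Ψ h => ?_⟩
    have ha1 : 1 ≤ a := (le_max_left _ _).trans ((le_max_right _ _).trans ha)
    have ha2 : ω / (34 * kap) ≤ a := (le_max_right _ _).trans ((le_max_right _ _).trans ha)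
    have hx := hA a ((le_max_left _ _).trans ((le_max_left _ _).trans ha)) lam Ψ h
    have hx' := hA' a ((le_max_right _ _).trans ((le_max_left _ _).trans ha)) lam Ψ h
    have hn := NORM h.1 h.2 j k
    rw [div_le_iff₀ (by positivity)] at ha2
    have e68 : 68 * kap = 1 - Theta0 := by unfold kap; ring
    have g1 : 34 * kap * a ^ 4 ≤ a ^ 4 - (Theta0 * a ^ 4 + ω * a ^ 3) := by
      have : ω * a ^ 3 ≤ a * (34 * kap) * a ^ 3 := mul_le_mul_of_nonneg_right ha2 (by positivity)
      have e : a ^ 4 - Theta0 * a ^ 4 = 68 * kap * a ^ 4 := by rw [e68]; ring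
      nlinarith only [this, e]
    have g2 := (mul_le_mul_of_nonneg_right g1 (MM_nonneg (j + 1) k Ψ)).trans hn
    have g3 := mul_le_mul_of_nonneg_left g2 (by positivity : 0 ≤ a ^ (4 * j + 2 * k))
    have g4 := mul_le_mul_of_nonneg_left hx (by positivity : 0 ≤ 8 * ((j:ℝ) + 1) ^ 2)
    have e : a ^ (4 * (j + 1) + 2 * k) = a ^ (4 * j + 2 * k) * a ^ 4 := by rw [← pow_add]; congr 1; ring
    rw [e, div_mul_eq_mul_div, le_div_iff₀ (by positivity)]
    have g5 : 0 ≤ C' * (a ^ (2 * k) * MM 0 k Ψ) := mul_nonneg hC' (mul_nonneg (by positivity) (MM_nonneg _ _ _))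
    nlinarith only [g3, g4, g5, hx']

def OO (k : ℕ) (Ψ : E3 → ℂ) : ℝ := ∫ x in ball3, |x 2| * (Ph 0 k x ^ 2 * ‖Ψ x‖ ^ 2)

lemma tang {ω a lam : ℝ} {Ψ : E3 → ℂ} (hω : 0 < ω) (ha : 2 ≤ a) (h : Hyp ω a lam Ψ) (k : ℕ) :
    kap / 4 * a ^ 4 * OO k Ψ ≤ (26 + 3 * ω) * a ^ 3 * MM 0 k Ψ + 3 * a ^ 6 * MM 1 k Ψ + a ^ 10 * MM 2 k Ψ
      + 6 * k ^ 2 * MM 0 (k - 1) Ψ := by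
  have m := MAIN ha (PhΨ_cd 0 k h.1.1)
  simp only [norm_Ph] at m
  have g := AG h.1 h.2 0 k
  have hnc := n2_contDiff.continuous
  have hc := h.1.1.continuous
  have c0 := (Ph_contDiff 0 k).continuous
  have c1 := (Ph_contDiff 1 k).continuous
  have c2 := (Ph_contDiff 2 k).continuous
  have hT0 := Theta0_nonneg
  have hT1 := Theta0_lt_one
  have ha0 : 0 < a := by linarith
  have i1 := cont_int_ball (f := fun x => kap / 4 * a ^ 4 * (|x 2| * (Ph 0 k x ^ 2 * ‖Ψ x‖ ^ 2))) (by fun_prop)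
  have i2 := cont_int_ball (f := fun x => (Theta0 * a ^ 4 - 3 * a ^ 2 - 21 * a ^ 3) * (Ph 0 k x ^ 2 * ‖Ψ x‖ ^ 2)) (by fun_prop)
  have i3 := cont_int_ball (f := fun x => -(3 * a ^ 6) * (Ph 1 k x ^ 2 * ‖Ψ x‖ ^ 2)) (by fun_prop)
  have i4 := cont_int_ball (f := fun x => -(a ^ 10) * (Ph 2 k x ^ 2 * ‖Ψ x‖ ^ 2)) (by fun_prop)
  have m2 : kap / 4 * a ^ 4 * OO k Ψ + (Theta0 * a ^ 4 - 3 * a ^ 2 - 21 * a ^ 3) * MM 0 k Ψ + (-(3 * a ^ 6)) * MM 1 k Ψ + (-(a ^ 10)) * MM 2 k Ψ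
     ≤ (1 + 2 * (a ^ 2)⁻¹) * ∫ x in ball3, magEnergyDensity (a ^ 4) (fun x => (Ph 0 k x : ℂ) * Ψ x) x := by
    refine le_trans ?_ m
    unfold OO MM
    rw [← integral_const_mul, ← integral_const_mul, ← integral_const_mul, ← integral_const_mul, ← integral_add' i1 i2, ← integral_add' (i1.add i2) i3,
      ← integral_add' ((i1.add i2).add i3) i4]
    refine setIntegral_mono_on (((i1.add i2).add i3).add i4) (cont_int_ball (by fun_prop)) Metric.isOpen_ball.measurableSet fun x hx => ?_
    simp only [Pi.add_apply]
    have e1 : Ph 1 k x = (1 - n2 x) * Ph 0 k x := by unfold Ph; ring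
    have e2 : Ph 2 k x = (1 - n2 x) ^ 2 * Ph 0 k x := by unfold Ph; ring
    rw [e1, e2]
    have h1 : a ^ 4 * (1 - n2 x) ≤ a ^ 2 + a ^ 6 * (1 - n2 x) ^ 2 := by
      nlinarith only [sq_nonneg (a - a ^ 3 * (1 - n2 x)), sq_nonneg (a ), sq_nonneg (a ^ 3 * (1 - n2 x))]
    have h2 := mul_le_mul_of_nonneg_right h1 (by positivity : 0 ≤ Ph 0 k x ^ 2 * ‖Ψ x‖ ^ 2)
    nlinarith only [h2]
  have b0 : (a ^ 2)⁻¹ ≤ 1 := inv_le_one_of_one_le₀ (by nlinarith)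
  have bpos : 0 < (a ^ 2)⁻¹ := by positivity
  have m3 := m2.trans (mul_le_mul_of_nonneg_left g (by positivity))
  have hM0 := MM_nonneg 0 k Ψ
  have hM1 := MM_nonneg 0 (k - 1) Ψ
  have L1 : (1 + 2 * (a ^ 2)⁻¹) * (Theta0 * a ^ 4 + ω * a ^ 3) ≤ Theta0 * a ^ 4 + 2 * a ^ 2 + 3 * ω * a ^ 3 := by
    have e1 : (a ^ 2)⁻¹ * a ^ 4 = a ^ 2 := by field_simp
    have e2 : (a ^ 2)⁻¹ * (ω * a ^ 3) ≤ 1 * (ω * a ^ 3) := mul_le_mul_of_nonneg_right b0 (by positivity)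
    have e3 : Theta0 * ((a ^ 2)⁻¹ * a ^ 4) ≤ 1 * a ^ 2 := by rw [e1]; exact mul_le_mul_of_nonneg_right hT1.le (by positivity)
    nlinarith only [e2, e3]
  have L2 := mul_le_mul_of_nonneg_right L1 hM0
  have L3 : (1 + 2 * (a ^ 2)⁻¹) * (2 * (k:ℝ) ^ 2 * MM 0 (k - 1) Ψ) ≤ 3 * (2 * (k:ℝ) ^ 2 * MM 0 (k - 1) Ψ) :=
    mul_le_mul_of_nonneg_right (by linarith) (by positivity)
  have L4 : a ^ 2 * MM 0 k Ψ ≤ a ^ 3 * MM 0 k Ψ := mul_le_mul_of_nonneg_right (pow_le_pow_right₀ (by linarith) (by norm_num)) hM0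
  simp only [Nat.cast_zero] at m3
  nlinarith only [m3, L2, L3, L4]

lemma interp {t : ℝ} (ht : 0 < t) (k : ℕ) {Ψ : E3 → ℂ} (hc : Continuous Ψ) :
    MM 0 (k + 1) Ψ ≤ t * OO (k + 1) Ψ + (t⁻¹) ^ 2 * MM 0 k Ψ := by
  have c0 := (Ph_contDiff 0 k).continuous
  have c1 := (Ph_contDiff 0 (k + 1)).continuous
  have i1 := cont_int_ball (f := fun x => t * (|x 2| * (Ph 0 (k + 1) x ^ 2 * ‖Ψ x‖ ^ 2))) (by fun_prop)
  have i2 := cont_int_ball (f := fun x => (t⁻¹) ^ 2 * (Ph 0 k x ^ 2 * ‖Ψ x‖ ^ 2)) (by fun_prop)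
  unfold MM OO
  rw [← integral_const_mul, ← integral_const_mul, ← integral_add' i1 i2]
  refine setIntegral_mono_on (cont_int_ball (by fun_prop)) (i1.add i2) Metric.isOpen_ball.measurableSet fun x hx => ?_
  simp only [Pi.add_apply]
  have e : Ph 0 (k + 1) x = x 2 * Ph 0 k x := by unfold Ph; ring
  rw [e]
  have h1 : |x 2| ^ 2 ≤ t * |x 2| ^ 3 + (t⁻¹) ^ 2 := by
    have hz := abs_nonneg (x 2)
    rcases le_total 1 (t * |x 2|) with h | h
    · nlinarith only [mul_le_mul_of_nonneg_right h (sq_nonneg |x 2|), sq_nonneg (t⁻¹)]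
    · have h3 : |x 2| ≤ t⁻¹ := by rw [← one_div, le_div_iff₀ ht]; linarith
      have : |x 2| ^ 2 ≤ (t⁻¹) ^ 2 := pow_le_pow_left₀ hz h3 2
      have : 0 ≤ t * |x 2| ^ 3 := by positivity
      linarith
  have h2 := mul_le_mul_of_nonneg_right h1 (by positivity : 0 ≤ Ph 0 k x ^ 2 * ‖Ψ x‖ ^ 2)
  have e2 : |x 2| ^ 3 = |x 2| * x 2 ^ 2 := by rw [← sq_abs (x 2)]; ring
  rw [e2, sq_abs] at h2
  nlinarith only [h2]

lemma tang_step {ω : ℝ} (hω : 0 < ω) (i : ℕ) (hP : ∀ i' < i + 1, ∀ j, Bd ω j i') : Bd ω 0 (i + 1) := by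
  have hκ := kap_pos
  obtain ⟨C1, hC1, A1, h1⟩ := mixed (i + 1) hP 1
  obtain ⟨C2, hC2, A2, h2⟩ := mixed (i + 1) hP 2
  obtain ⟨C0, hC0, A0, h0⟩ := hP i (by omega) 0
  set K : ℝ := 26 + 3 * ω + 3 * C1 + C2 + 6 * ((i + 1 : ℕ):ℝ) ^ 2 * C0 with hK
  have hK0 : 0 < K := by positivity
  set K' : ℝ := 4 * K / kap with hK'
  have hK'0 : 0 < K' := by positivity
  refine ⟨1 + 8 * K' ^ 2 * C0, by positivity, max (max A1 A2) (max A0 2), fun a ha lam Ψ h => ?_⟩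
  have ha2 : 2 ≤ a := (le_max_right _ _).trans ((le_max_right _ _).trans ha)
  have g0 := h0 a ((le_max_left _ _).trans ((le_max_right _ _).trans ha)) lam Ψ h
  have g1 := h1 a ((le_max_left _ _).trans ((le_max_left _ _).trans ha)) lam Ψ h
  have g2 := h2 a ((le_max_right _ _).trans ((le_max_left _ _).trans ha)) lam Ψ h
  have ha0 : 0 < a := by linarith
  have ht := tang hω ha2 h (i + 1)
  have hi := interp (t := (2 * K')⁻¹ * a) (by positivity) i h.1.1.continuous
  have hN := MM_nonneg 0 0 Ψ
  have hY0 := MM_nonneg 0 (i + 1) Ψ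
  have hZ0 := MM_nonneg 0 i Ψ
  rw [Nat.add_sub_cancel] at ht
  have e0 : a ^ (4 * 0 + 2 * (i + 1)) = a ^ (2 * i) * a ^ 2 := by rw [← pow_add]; congr 1 <;> ring
  have e0' : a ^ (2 * (i + 1)) = a ^ (2 * i) * a ^ 2 := by rw [← pow_add]; congr 1 <;> ring
  have e1 : a ^ (4 * 1 + 2 * (i + 1)) = a ^ (2 * i) * a ^ 6 := by rw [← pow_add]; congr 1 <;> ring
  have e2 : a ^ (4 * 2 + 2 * (i + 1)) = a ^ (2 * i) * a ^ 10 := by rw [← pow_add]; congr 1 <;> ring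
  have e3 : a ^ (4 * 0 + 2 * i) = a ^ (2 * i) := by congr 1 <;> ring
  rw [e0]
  rw [e1, e0'] at g1
  rw [e2, e0'] at g2
  rw [e3] at g0
  have hb : 0 < a ^ (2 * i) := by positivity
  generalize a ^ (2 * i) = b at *
  set N := MM 0 0 Ψ
  set Y := b * a ^ 2 * MM 0 (i + 1) Ψ with hY
  have hYn : 0 ≤ Y := by positivity
  have t1 := mul_le_mul_of_nonneg_left ht hb.le
  have hKc : (0:ℝ) ≤ 6 * ((i + 1 : ℕ):ℝ) ^ 2 := by positivity
  have t2 := mul_le_mul_of_nonneg_left g0 hKc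
  -- everything bounded by K a (Y + N)
  have t3 : b * (kap / 4 * a ^ 4 * OO (i + 1) Ψ) ≤ K * a * (Y + N) := by
    have s1 : b * ((26 + 3 * ω) * a ^ 3 * MM 0 (i + 1) Ψ) = (26 + 3 * ω) * a * Y := by rw [hY]; ring
    have s2 : C1 * (Y + N) ≤ a * (C1 * (Y + N)) := le_mul_of_one_le_left (by positivity) (by linarith)
    have s3 : C2 * (Y + N) ≤ a * (C2 * (Y + N)) := le_mul_of_one_le_left (by positivity) (by linarith)
    have s4 : 6 * ((i + 1 : ℕ):ℝ) ^ 2 * (C0 * N) ≤ a * (6 * ((i + 1 : ℕ):ℝ) ^ 2 * (C0 * N)) := le_mul_of_one_le_left (by positivity) (by linarith)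
    have s5 : 0 ≤ 6 * ((i + 1 : ℕ):ℝ) ^ 2 * C0 * a * Y := by positivity
    have s6 : 0 ≤ (26 + 3 * ω) * a * N := by positivity
    rw [hK]
    nlinarith only [t1, s1, g1, g2, t2, s2, s3, s4, s5, s6]
  have t4 : b * a ^ 3 * OO (i + 1) Ψ ≤ K' * (Y + N) := by
    rw [hK', div_mul_eq_mul_div, le_div_iff₀ hκ]
    have : a * (b * a ^ 3 * OO (i + 1) Ψ * kap) ≤ a * (4 * K * (Y + N)) := by nlinarith only [t3]
    exact le_of_mul_le_mul_left this ha0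
  have t5 := mul_le_mul_of_nonneg_left hi (by positivity : 0 ≤ b * a ^ 2)
  have r1 : b * a ^ 2 * ((2 * K')⁻¹ * a * OO (i + 1) Ψ) ≤ (Y + N) / 2 := by
    have := mul_le_mul_of_nonneg_left t4 (by positivity : 0 ≤ (2 * K')⁻¹)
    have e : (2 * K')⁻¹ * (K' * (Y + N)) = (Y + N) / 2 := by field_simp
    rw [e] at this
    nlinarith only [this]
  have r2 : b * a ^ 2 * ((((2 * K')⁻¹ * a)⁻¹) ^ 2 * MM 0 i Ψ) ≤ 4 * K' ^ 2 * (C0 * N) := by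
    have e : b * a ^ 2 * ((((2 * K')⁻¹ * a)⁻¹) ^ 2 * MM 0 i Ψ) = 4 * K' ^ 2 * (b * MM 0 i Ψ) := by
      field_simp; ring
    rw [e]
    exact mul_le_mul_of_nonneg_left g0 (by positivity)
  rw [mul_add] at t5
  nlinarith only [t5, r1, r2, hY]

lemma TB {ω : ℝ} (hω : 0 < ω) (k : ℕ) : ∀ j, Bd ω j k := by
  induction k using Nat.strong_induction_on with
  | _ k hP =>
    have h0 : Bd ω 0 k := by
      rcases Nat.eq_zero_or_pos k with hk | hk
      · subst hk
        exact ⟨1, zero_le_one, 0, fun a ha lam Ψ h => by simp⟩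
      · obtain ⟨i, rfl⟩ : ∃ i, k = i + 1 := ⟨k - 1, by omega⟩
        exact tang_step hω i hP
    intro j
    obtain ⟨C, hC, A, hA⟩ := mixed k hP j
    obtain ⟨C', hC', A', hA'⟩ := h0
    refine ⟨C * (C' + 1), by positivity, max A A', fun a ha lam Ψ h => ?_⟩
    have h1 := hA a ((le_max_left _ _).trans ha) lam Ψ h
    have h2 := hA' a ((le_max_right _ _).trans ha) lam Ψ h
    rw [mul_zero, zero_add] at h2
    have h3 := mul_le_mul_of_nonneg_left h2 hC
    linarith

def FF (a : ℝ) (Ψ : E3 → ℂ) (x : E3) : ℝ := ‖Ψ x‖ ^ 2 + (a ^ 4)⁻¹ * magEnergyDensity (a ^ 4) Ψ x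

lemma FF_nonneg (a : ℝ) (Ψ : E3 → ℂ) (x : E3) : 0 ≤ FF a Ψ x := by
  unfold FF magEnergyDensity; positivity

lemma FF_cont (a : ℝ) {Ψ : E3 → ℂ} (h : ContDiff ℝ 2 Ψ) : Continuous (FF a Ψ) := by
  have := mag_continuous (a ^ 4) (h.of_le (by norm_num) : ContDiff ℝ 1 Ψ)
  have := h.continuous
  unfold FF; fun_prop

lemma EM {ω : ℝ} (hω : 0 < ω) (j k : ℕ) : ∃ C, 0 ≤ C ∧ ∃ A : ℝ, ∀ a, A ≤ a → ∀ lam Ψ, Hyp ω a lam Ψ →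
    a ^ (4 * j + 2 * k) * (∫ x in ball3, Ph j k x ^ 2 * FF a Ψ x) ≤ C * MM 0 0 Ψ := by
  obtain ⟨C, hC, A, hA⟩ := TB hω k j
  have hj : ∃ C, 0 ≤ C ∧ ∃ A : ℝ, ∀ a, A ≤ a → ∀ lam Ψ, Hyp ω a lam Ψ →
    a ^ (4 * j + 2 * k) * ((a ^ 4)⁻¹ * ((j:ℝ) ^ 2 * MM (j - 1) k Ψ)) ≤ C * MM 0 0 Ψ := by
    rcases Nat.eq_zero_or_pos j with hj | hj
    · subst hj
      exact ⟨0, le_rfl, 0, fun a ha lam Ψ h => by simp⟩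
    · obtain ⟨i, rfl⟩ : ∃ i, j = i + 1 := ⟨j - 1, by omega⟩
      obtain ⟨C, hC, A, hA⟩ := TB hω k i
      refine ⟨((i + 1 : ℕ):ℝ) ^ 2 * C, by positivity, max A 1, fun a ha lam Ψ h => ?_⟩
      have h1 : 1 ≤ a := (le_max_right _ _).trans ha
      have h2 := mul_le_mul_of_nonneg_left (hA a ((le_max_left _ _).trans ha) lam Ψ h) (by positivity : 0 ≤ ((i + 1 : ℕ):ℝ) ^ 2)
      have e : a ^ (4 * (i + 1) + 2 * k) = a ^ (4 * i + 2 * k) * a ^ 4 := by rw [← pow_add]; congr 1 <;> ring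
      have e2 : a ^ 4 * (a ^ 4)⁻¹ = 1 := mul_inv_cancel₀ (by positivity)
      rw [e, mul_assoc, ← mul_assoc (a ^ 4), e2, Nat.add_sub_cancel]
      linarith
  have hk : ∃ C, 0 ≤ C ∧ ∃ A : ℝ, ∀ a, A ≤ a → ∀ lam Ψ, Hyp ω a lam Ψ →
    a ^ (4 * j + 2 * k) * ((a ^ 4)⁻¹ * ((k:ℝ) ^ 2 * MM j (k - 1) Ψ)) ≤ C * MM 0 0 Ψ := by
    rcases Nat.eq_zero_or_pos k with hk | hk
    · subst hk
      exact ⟨0, le_rfl, 0, fun a ha lam Ψ h => by simp⟩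
    · obtain ⟨i, rfl⟩ : ∃ i, k = i + 1 := ⟨k - 1, by omega⟩
      obtain ⟨C, hC, A, hA⟩ := TB hω i j
      refine ⟨((i + 1 : ℕ):ℝ) ^ 2 * C, by positivity, max A 1, fun a ha lam Ψ h => ?_⟩
      have h1 : 1 ≤ a := (le_max_right _ _).trans ha
      have h2 := mul_le_mul_of_nonneg_left (hA a ((le_max_left _ _).trans ha) lam Ψ h) (by positivity : 0 ≤ ((i + 1 : ℕ):ℝ) ^ 2)
      have e : a ^ (4 * j + 2 * (i + 1)) = a ^ (4 * j + 2 * i) * a ^ 2 := by rw [← pow_add]; congr 1 <;> ring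
      have e2 : a ^ 2 * (a ^ 4)⁻¹ ≤ 1 := by
        rw [← div_eq_mul_inv, div_le_one (by positivity)]
        exact pow_le_pow_right₀ h1 (by norm_num)
      rw [e, mul_assoc, ← mul_assoc (a ^ 2), Nat.add_sub_cancel]
      have hM := MM_nonneg j i Ψ
      have h3 : a ^ 2 * (a ^ 4)⁻¹ * (((i + 1 : ℕ):ℝ) ^ 2 * MM j i Ψ) ≤ 1 * (((i + 1 : ℕ):ℝ) ^ 2 * MM j i Ψ) :=
        mul_le_mul_of_nonneg_right e2 (by positivity)
      have h4 := mul_le_mul_of_nonneg_left h3 (by positivity : 0 ≤ a ^ (4 * j + 2 * i))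
      linarith
  obtain ⟨C1, hC1, A1, hA1⟩ := hj
  obtain ⟨C2, hC2, A2, hA2⟩ := hk
  refine ⟨(3 + 2 * ω) * C + 32 * C1 + 8 * C2, by positivity, max (max A A1) (max A2 1), fun a ha lam Ψ h => ?_⟩
  have ha1 : 1 ≤ a := (le_max_right _ _).trans ((le_max_right _ _).trans ha)
  have g0 := hA a ((le_max_left _ _).trans ((le_max_left _ _).trans ha)) lam Ψ h
  have g1 := hA1 a ((le_max_right _ _).trans ((le_max_left _ _).trans ha)) lam Ψ h
  have g2 := hA2 a ((le_max_left _ _).trans ((le_max_right _ _).trans ha)) lam Ψ h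
  have hE := ENER h.1 h.2 j k
  have hT1 := Theta0_lt_one
  have hL : Theta0 * a ^ 4 + ω * a ^ 3 ≤ (1 + ω) * a ^ 4 := by
    have h1 : a ^ 3 ≤ a ^ 4 := pow_le_pow_right₀ ha1 (by norm_num)
    have h2 := mul_le_mul_of_nonneg_left h1 hω.le
    have h3 : Theta0 * a ^ 4 ≤ 1 * a ^ 4 := mul_le_mul_of_nonneg_right hT1.le (by positivity)
    linarith
  have hM := MM_nonneg j k Ψ
  have hL2 := mul_le_mul_of_nonneg_right hL hM
  have c1 := (Ph_contDiff j k).continuous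
  have hc := h.1.1.continuous
  have c6 := mag_continuous (a ^ 4) (h.1.1.of_le (by norm_num) : ContDiff ℝ 1 Ψ)
  have i1 := cont_int_ball (f := fun x => Ph j k x ^ 2 * ‖Ψ x‖ ^ 2) (by fun_prop)
  have i2 := cont_int_ball (f := fun x => (a ^ 4)⁻¹ * (Ph j k x ^ 2 * magEnergyDensity (a ^ 4) Ψ x)) (by fun_prop)
  have e : ∫ x in ball3, Ph j k x ^ 2 * FF a Ψ x = MM j k Ψ + (a ^ 4)⁻¹ * ∫ x in ball3, Ph j k x ^ 2 * magEnergyDensity (a ^ 4) Ψ x := by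
    unfold MM FF
    rw [← integral_const_mul, ← integral_add i1 i2]
    congr 1; ext x; ring
  rw [e]
  have e3 : (a ^ 4)⁻¹ * a ^ 4 = 1 := inv_mul_cancel₀ (by positivity)
  have h5 : (a ^ 4)⁻¹ * ∫ x in ball3, Ph j k x ^ 2 * magEnergyDensity (a ^ 4) Ψ x ≤
      2 * (1 + ω) * MM j k Ψ + 32 * ((a ^ 4)⁻¹ * ((j:ℝ) ^ 2 * MM (j - 1) k Ψ)) + 8 * ((a ^ 4)⁻¹ * ((k:ℝ) ^ 2 * MM j (k - 1) Ψ)) := by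
    have h6 : ∫ x in ball3, Ph j k x ^ 2 * magEnergyDensity (a ^ 4) Ψ x ≤ a ^ 4 * (2 * (1 + ω) * MM j k Ψ) + 32 * ((j:ℝ) ^ 2 * MM (j - 1) k Ψ) + 8 * ((k:ℝ) ^ 2 * MM j (k - 1) Ψ) := by
      linarith
    have h7 := mul_le_mul_of_nonneg_left h6 (by positivity : 0 ≤ (a ^ 4)⁻¹)
    rw [mul_add, mul_add, ← mul_assoc (a ^ 4)⁻¹ (a ^ 4), e3] at h7
    linarith
  have h8 := mul_le_mul_of_nonneg_left h5 (by positivity : 0 ≤ a ^ (4 * j + 2 * k))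
  have h9 := mul_le_mul_of_nonneg_left g0 (by positivity : 0 ≤ 3 + 2 * ω)
  generalize a ^ (4 * j + 2 * k) = b at *
  nlinarith only [h8, h9, g1, g2]

lemma distEq_le {x : E3} (hx : x ∈ ball3) : distEq x ≤ π * |x 2| ∨ distEq x ≤ π * distBd x := by
  have hx1 : ‖x‖ < 1 := mem_ball_zero_iff.mp hx
  have hπ := Real.pi_pos
  unfold distEq distBd
  rcases le_total ‖x‖ (1 / 2) with h | h
  · right
    have := Real.arcsin_le_pi_div_two (|x 2| / ‖x‖)
    nlinarith
  · left
    have h0 : 0 < ‖x‖ := by linarith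
    have hz : |x 2| ≤ ‖x‖ := by simpa using PiLp.norm_apply_le x 2
    set w := |x 2| / ‖x‖ with hw
    have hw0 : 0 ≤ w := by positivity
    have hw1 : w ≤ 1 := (div_le_one h0).mpr hz
    have hwz : w ≤ 2 * |x 2| := by
      rw [hw, div_le_iff₀ h0]; nlinarith [abs_nonneg (x 2)]
    have h3 : 2 / π * Real.arcsin w ≤ Real.sin (Real.arcsin w) :=
      Real.mul_le_sin (Real.arcsin_nonneg.mpr hw0) (Real.arcsin_le_pi_div_two w)
    rw [Real.sin_arcsin (by linarith) hw1, div_mul_eq_mul_div, div_le_iff₀ hπ] at h3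
    nlinarith

lemma final (ω : ℝ) (hω : 0 < ω) (n : ℕ) : ∃ C A : ℝ, 0 < C ∧ ∀ a, A ≤ a → ∀ lam Ψ, Hyp ω a lam Ψ →
    (∫ x in ball3, distBd x ^ n * FF a Ψ x) ≤ C * (a ^ (2 * n))⁻¹ * MM 0 0 Ψ ∧
    (∫ x in ball3, distEq x ^ n * FF a Ψ x) ≤ C * (a ^ n)⁻¹ * MM 0 0 Ψ := by
  obtain ⟨C0, hC0, A0, h0⟩ := EM hω 0 0
  obtain ⟨C1, hC1, A1, h1⟩ := EM hω n 0
  obtain ⟨C2, hC2, A2, h2⟩ := EM hω 0 n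
  have hπ := Real.pi_pos
  refine ⟨(1 + π ^ n) * (2 * C0 + C1 + C2 + 1), max (max A0 A1) (max A2 1), by positivity, fun a ha lam Ψ h => ?_⟩
  have ha1 : 1 ≤ a := (le_max_right _ _).trans ((le_max_right _ _).trans ha)
  have g0 := h0 a ((le_max_left _ _).trans ((le_max_left _ _).trans ha)) lam Ψ h
  have g1 := h1 a ((le_max_right _ _).trans ((le_max_left _ _).trans ha)) lam Ψ h
  have g2 := h2 a ((le_max_left _ _).trans ((le_max_right _ _).trans ha)) lam Ψ h
  have hN := MM_nonneg 0 0 Ψ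
  set N := MM 0 0 Ψ
  have hFc := FF_cont a h.1.1
  have hF0 := FF_nonneg a Ψ
  have c0 := (Ph_contDiff 0 0).continuous
  have c1 := (Ph_contDiff n 0).continuous
  have c2 := (Ph_contDiff 0 n).continuous
  have i0 := cont_int_ball (f := fun x => a ^ (4 * 0 + 2 * 0) * (Ph 0 0 x ^ 2 * FF a Ψ x)) (by fun_prop)
  have i1 := cont_int_ball (f := fun x => a ^ (4 * n + 2 * 0) * (Ph n 0 x ^ 2 * FF a Ψ x)) (by fun_prop)
  have i2 := cont_int_ball (f := fun x => a ^ (4 * 0 + 2 * n) * (Ph 0 n x ^ 2 * FF a Ψ x)) (by fun_prop)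
  rw [← integral_const_mul] at g0 g1 g2
  have hbd : ∀ x ∈ ball3, 0 ≤ distBd x ∧ distBd x ≤ 1 - n2 x := by
    intro x hx
    have hx1 : ‖x‖ < 1 := mem_ball_zero_iff.mp hx
    unfold distBd
    rw [n2_eq]
    constructor
    · linarith
    · nlinarith [norm_nonneg x]
  have p1 : ∀ x ∈ ball3, a ^ (2 * n) * distBd x ^ n ≤ 1 + a ^ (4 * n) * Ph n 0 x ^ 2 := by
    intro x hx
    obtain ⟨k1, k2⟩ := hbd x hx
    have k3 : distBd x ^ n ≤ (1 - n2 x) ^ n := pow_le_pow_left₀ k1 k2 n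
    have e1 : a ^ (4 * n) = (a ^ (2 * n)) ^ 2 := by rw [← pow_mul]; congr 1; ring
    have e2 : Ph n 0 x = (1 - n2 x) ^ n := by unfold Ph; ring
    rw [e1, e2, ← mul_pow]
    have k4 := mul_le_mul_of_nonneg_left k3 (by positivity : 0 ≤ a ^ (2 * n))
    nlinarith only [k4, sq_nonneg (a ^ (2 * n) * (1 - n2 x) ^ n - 1), sq_nonneg (a ^ (2 * n) * (1 - n2 x) ^ n)]
  have p2 : ∀ x ∈ ball3, a ^ n * |x 2| ^ n ≤ 1 + a ^ (2 * n) * Ph 0 n x ^ 2 := by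
    intro x hx
    have e1 : a ^ (2 * n) = (a ^ n) ^ 2 := by rw [← pow_mul]; congr 1; ring
    have e2 : Ph 0 n x ^ 2 = (|x 2| ^ n) ^ 2 := by
      unfold Ph
      rw [pow_zero, one_mul, ← abs_pow, sq_abs]
    rw [e1, e2]
    nlinarith only [sq_nonneg (a ^ n * |x 2| ^ n - 1), sq_nonneg (a ^ n * |x 2| ^ n)]
  have p3 : ∀ x ∈ ball3, distEq x ^ n ≤ π ^ n * (|x 2| ^ n + distBd x ^ n) := by
    intro x hx
    have k1 := (hbd x hx).1
    have k0 : 0 ≤ distEq x := Real.arcsin_nonneg.mpr (by positivity)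
    have k4 : 0 ≤ π ^ n * distBd x ^ n := by positivity
    have k5 : 0 ≤ π ^ n * |x 2| ^ n := by positivity
    rcases distEq_le hx with k | k
    · have := pow_le_pow_left₀ k0 k n
      rw [mul_pow] at this
      linarith
    · have := pow_le_pow_left₀ k0 k n
      rw [mul_pow] at this
      linarith
  have hPh0 : ∀ x, Ph 0 0 x = 1 := fun x => by simp [Ph]
  have hπ1 : 0 < π ^ n := by positivity
  constructor
  · have key : a ^ (2 * n) * (∫ x in ball3, distBd x ^ n * FF a Ψ x) ≤ C0 * N + C1 * N := by
      refine le_trans ?_ (add_le_add g0 g1)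
      rw [← integral_const_mul, ← integral_add' i0 i1]
      refine integral_mono_of_nonneg ?_ (i0.add i1) ?_
      · refine (ae_restrict_iff' Metric.isOpen_ball.measurableSet).mpr (Eventually.of_forall fun x hx => ?_)
        have := (hbd x hx).1
        have := hF0 x
        simp only [Pi.zero_apply]
        positivity
      · refine (ae_restrict_iff' Metric.isOpen_ball.measurableSet).mpr (Eventually.of_forall fun x hx => ?_)
        have := mul_le_mul_of_nonneg_right (p1 x hx) (hF0 x)
        simp only [Pi.add_apply, hPh0, mul_zero, add_zero, pow_zero, one_pow, one_mul]
        linarith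
    have hb : 0 < a ^ (2 * n) := by positivity
    have : (∫ x in ball3, distBd x ^ n * FF a Ψ x) ≤ (a ^ (2 * n))⁻¹ * (C0 * N + C1 * N) := by
      rw [inv_mul_eq_div, le_div_iff₀ hb]; linarith
    refine this.trans ?_
    rw [mul_comm _ (a ^ (2 * n))⁻¹, mul_assoc]
    refine mul_le_mul_of_nonneg_left ?_ (by positivity)
    have q1 : 0 ≤ C0 * N := by positivity
    have q2 : 0 ≤ C2 * N := by positivity
    have q3 : 0 ≤ π ^ n * (2 * C0 + C1 + C2 + 1) * N := by positivity
    nlinarith only [q1, q2, q3, hN]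
  · have key : a ^ n * (∫ x in ball3, distEq x ^ n * FF a Ψ x) ≤ π ^ n * (2 * (C0 * N) + C1 * N + C2 * N) := by
      have : ∫ x in ball3, π ^ n * (2 * (a ^ (4 * 0 + 2 * 0) * (Ph 0 0 x ^ 2 * FF a Ψ x)) + a ^ (4 * n + 2 * 0) * (Ph n 0 x ^ 2 * FF a Ψ x)
          + a ^ (4 * 0 + 2 * n) * (Ph 0 n x ^ 2 * FF a Ψ x)) ≤ π ^ n * (2 * (C0 * N) + C1 * N + C2 * N) := by
        have i0' := i0.const_mul 2
        rw [integral_const_mul, (integral_add (i0'.add i1) i2 : ∫ x in ball3, (2 * (a ^ (4 * 0 + 2 * 0) * (Ph 0 0 x ^ 2 * FF a Ψ x)) + a ^ (4 * n + 2 * 0) * (Ph n 0 x ^ 2 * FF a Ψ x)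
          + a ^ (4 * 0 + 2 * n) * (Ph 0 n x ^ 2 * FF a Ψ x)) = _), integral_add i0' i1, integral_const_mul]
        refine mul_le_mul_of_nonneg_left ?_ hπ1.le
        linarith
      refine le_trans ?_ this
      rw [← integral_const_mul]
      refine integral_mono_of_nonneg ?_ ((((i0.const_mul 2).add i1).add i2).const_mul _) ?_
      · refine (ae_restrict_iff' Metric.isOpen_ball.measurableSet).mpr (Eventually.of_forall fun x hx => ?_)
        have k0 : 0 ≤ distEq x := Real.arcsin_nonneg.mpr (by positivity)
        have := hF0 x
        simp only [Pi.zero_apply]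
        positivity
      · refine (ae_restrict_iff' Metric.isOpen_ball.measurableSet).mpr (Eventually.of_forall fun x hx => ?_)
        have k1 := mul_le_mul_of_nonneg_left (p3 x hx) (by positivity : 0 ≤ a ^ n)
        have k2 : a ^ n * distBd x ^ n ≤ a ^ (2 * n) * distBd x ^ n :=
          mul_le_mul_of_nonneg_right (pow_le_pow_right₀ ha1 (by omega)) (pow_nonneg (hbd x hx).1 n)
        have k3 : a ^ n * |x 2| ^ n + a ^ n * distBd x ^ n ≤ 2 + a ^ (4 * n) * Ph n 0 x ^ 2 + a ^ (2 * n) * Ph 0 n x ^ 2 := by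
          linarith [p1 x hx, p2 x hx]
        have k4 := mul_le_mul_of_nonneg_left k3 hπ1.le
        have k5 : a ^ n * distEq x ^ n ≤ π ^ n * (2 + a ^ (4 * n) * Ph n 0 x ^ 2 + a ^ (2 * n) * Ph 0 n x ^ 2) := by linarith
        have := mul_le_mul_of_nonneg_right k5 (hF0 x)
        simp only [hPh0, mul_zero, add_zero, zero_add, pow_zero, one_pow, one_mul]
        linarith
    have hb : 0 < a ^ n := by positivity
    have : (∫ x in ball3, distEq x ^ n * FF a Ψ x) ≤ (a ^ n)⁻¹ * (π ^ n * (2 * (C0 * N) + C1 * N + C2 * N)) := by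
      rw [inv_mul_eq_div, le_div_iff₀ hb]; linarith
    refine this.trans ?_
    rw [mul_comm _ (a ^ n)⁻¹, mul_assoc]
    refine mul_le_mul_of_nonneg_left ?_ (by positivity)
    have q3 : 0 ≤ (2 * C0 + C1 + C2 + 1) * N := by positivity
    have q4 : 0 ≤ π ^ n * N := by positivity
    nlinarith only [q3, q4]

theorem statement2 (ω : ℝ) (hω : 0 < ω) (n : ℕ) :
    ∃ C B₀ : ℝ, 0 < C ∧ 0 < B₀ ∧
      ∀ B : ℝ, B₀ ≤ B → ∀ (lam : ℝ) (Ψ : E3 → ℂ),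
        IsNeumannEigenfunction B lam Ψ →
        lam ≤ Theta0 * B + ω * B ^ ((2:ℝ)/3) →
        (∫ x in ball3, distBd x ^ n * (‖Ψ x‖ ^ 2 + B⁻¹ * magEnergyDensity B Ψ x))
            ≤ C * B ^ (-(n:ℝ)/2) * ∫ x in ball3, ‖Ψ x‖ ^ 2 ∧
        (∫ x in ball3, distEq x ^ n * (‖Ψ x‖ ^ 2 + B⁻¹ * magEnergyDensity B Ψ x))
            ≤ C * B ^ (-(n:ℝ)/4) * ∫ x in ball3, ‖Ψ x‖ ^ 2 := by
  obtain ⟨C, A, hC, h⟩ := final ω hω n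
  have hA : 1 ≤ max A 1 := le_max_right _ _
  refine ⟨C, (max A 1) ^ 4, hC, by positivity, fun B hB lam Ψ hΨ hlam => ?_⟩
  have hB1 : 1 ≤ B := (one_le_pow₀ hA).trans hB
  have hB0 : 0 < B := by linarith
  set a : ℝ := B ^ ((1:ℝ) / 4) with ha
  have ha4 : a ^ 4 = B := by
    rw [ha, ← Real.rpow_natCast, ← Real.rpow_mul hB0.le]; norm_num
  have ha0 : 0 ≤ a := by positivity
  have haA : A ≤ a := by
    refine (le_max_left A 1).trans ?_
    refine le_of_pow_le_pow_left₀ (n := 4) (by norm_num) ha0 ?_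
    rw [ha4]; exact hB
  have ha3 : B ^ ((2:ℝ) / 3) ≤ a ^ 3 := by
    rw [ha, ← Real.rpow_natCast, ← Real.rpow_mul hB0.le]
    exact Real.rpow_le_rpow_of_exponent_le hB1 (by norm_num)
  have hH : Hyp ω a lam Ψ := by
    refine ⟨by rw [ha4]; exact hΨ, ?_⟩
    rw [ha4]
    have := mul_le_mul_of_nonneg_left ha3 hω.le
    linarith
  have e1 : B ^ (-(n:ℝ) / 2) = (a ^ (2 * n))⁻¹ := by
    rw [ha, ← Real.rpow_natCast, ← Real.rpow_mul hB0.le, ← Real.rpow_neg hB0.le]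
    congr 1; push_cast; ring
  have e2 : B ^ (-(n:ℝ) / 4) = (a ^ n)⁻¹ := by
    rw [ha, ← Real.rpow_natCast, ← Real.rpow_mul hB0.le, ← Real.rpow_neg hB0.le]
    congr 1; ring
  have e3 : MM 0 0 Ψ = ∫ x in ball3, ‖Ψ x‖ ^ 2 := by simp [MM, Ph]
  have := h a haA lam Ψ hH
  unfold FF at this
  rw [ha4, e3] at this
  rw [e1, e2]
  exact this
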